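/- Let j be a positive real number. Then the following are equivalent: (a) rank_ℤ E^{(D)}(ℚ) < 2j for every nonzero integer D (i.e., for every nonzero integer D there is no ℤ-linearly independent family of ⌈2j⌉ points in the abelian group E^{(D)}(ℚ)); (b) S_E(j,k) converges for some real k ≥ 1; (c) S_E(j,k) converges for every real k ≥ 1; (d) R_E(j,k) converges for some real k ≥ 1; (e) R_E(j,k) converges for every real k ≥ 1; (f) Q_E(j,k) converges for some real k ≥ 1; (g) Q_E(j,k) converges for every real k ≥ 1. -/

import Mathlib

noncomputable section

/-- `F(u,v) = v·(u³ + au²v + buv² + cv³) = v⁴ f(u/v)`. -/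
def Fbin (a b c u v : ℤ) : ℤ := v * (u^3 + a*u^2*v + b*u*v^2 + c*v^3)

/-- `Ψ = {(u,v) ∈ ℤ² : gcd(u,v) = 1 and F(u,v) ≠ 0}`. -/
def Psi (a b c : ℤ) : Set (ℤ × ℤ) := {p | Int.gcd p.1 p.2 = 1 ∧ Fbin a b c p.1 p.2 ≠ 0}

/-- `h(u/v) = max(1, log|u|, log|v|)` for coprime `u, v`. -/
def ht (u v : ℤ) : ℝ := max 1 (max (Real.log |(u : ℝ)|) (Real.log |(v : ℝ)|))

/-- the polynomial `f(x) = x³ + ax² + bx + c` has three distinct complex roots. -/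
def DistinctRoots (a b c : ℤ) : Prop :=
  ∃ r₁ r₂ r₃ : ℂ, r₁ ≠ r₂ ∧ r₁ ≠ r₃ ∧ r₂ ≠ r₃ ∧
    ∀ z : ℂ, z^3 + a*z^2 + b*z + c = (z - r₁) * (z - r₂) * (z - r₃)

/-- `sq` is a squarefree-part function: for nonzero `n`, `sq n` is squarefree and
`n = sq n · m²` for some rational `m`. -/
def IsSqfreePart (sq : ℤ → ℤ) : Prop :=
  ∀ n : ℤ, n ≠ 0 → Squarefree (sq n) ∧ ∃ m : ℚ, (n : ℚ) = sq n * m^2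

/-- the general term `|s(F(u,v))|^{-k} · h(u/v)^{-j}` of `S_E(j,k)`. -/
def STerm (a b c : ℤ) (sq : ℤ → ℤ) (j k : ℝ) (p : ℤ × ℤ) : ℝ :=
  |(sq (Fbin a b c p.1 p.2) : ℝ)| ^ (-k) * ht p.1 p.2 ^ (-j)

/-- index set of `S_E(j,k,X)`: `(u,v) ∈ Ψ` with `u/v ∈ X`. -/
def SIdx (a b c : ℤ) (X : Set ℝ) : Set (ℤ × ℤ) :=
  {p | p ∈ Psi a b c ∧ ((p.1 : ℝ) / (p.2 : ℝ)) ∈ X}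

/-- `S_E(j,k,X)` converges. -/
def SConv (a b c : ℤ) (sq : ℤ → ℤ) (j k : ℝ) (X : Set ℝ) : Prop :=
  Summable fun p : SIdx a b c X => STerm a b c sq j k p.1

/-- index set of `R_E(j,k,X)`: `t ≥ 1`, `(u,v) ∈ Ψ`, `u/v ∈ X`, `t² ∣ F(u,v)`. -/
def RIdx (a b c : ℤ) (X : Set ℝ) : Set (ℕ × ℤ × ℤ) :=
  {q | 1 ≤ q.1 ∧ q.2 ∈ Psi a b c ∧ ((q.2.1 : ℝ) / (q.2.2 : ℝ)) ∈ X ∧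
    (q.1 : ℤ)^2 ∣ Fbin a b c q.2.1 q.2.2}

/-- the general term `t^{2k} · |F(u,v)|^{-k} · h(u/v)^{-j}` of `R_E(j,k)`. -/
def RTerm (a b c : ℤ) (j k : ℝ) (q : ℕ × ℤ × ℤ) : ℝ :=
  (q.1 : ℝ) ^ (2*k) * |(Fbin a b c q.2.1 q.2.2 : ℝ)| ^ (-k) * ht q.2.1 q.2.2 ^ (-j)

/-- `R_E(j,k,X)` converges. -/
def RConv (a b c : ℤ) (j k : ℝ) (X : Set ℝ) : Prop :=
  Summable fun q : RIdx a b c X => RTerm a b c j k q.1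

/-- `Ω_d = {α ∈ ℤ/d²ℤ : f(α) ≡ 0 (mod d²)}`. -/
def OmegaSet (a b c : ℤ) (d : ℕ) : Set (ZMod (d^2)) :=
  {α | α^3 + (a : ZMod (d^2))*α^2 + (b : ZMod (d^2))*α + (c : ZMod (d^2)) = 0}

/-- the lattice `L_{α,d,d'} = {(u,v) : u ≡ αv (mod d²), v ≡ 0 (mod d'²)}`. -/
def latL (d d' : ℕ) (α : ZMod (d^2)) : Set (ℤ × ℤ) :=
  {p | ((p.1 : ZMod (d^2)) = α * (p.2 : ZMod (d^2))) ∧ ((d' : ℤ))^2 ∣ p.2}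

/-- `ω` is a choice, for coprime `d, d' ≥ 1` and `α ∈ Ω_d`, of a shortest nonzero
vector `ω_{α,d,d'}` of the lattice `L_{α,d,d'}` for the Euclidean norm. -/
def IsShortestChoice (a b c : ℤ) (ω : (d d' : ℕ) → ZMod (d^2) → ℤ × ℤ) : Prop :=
  ∀ d d' : ℕ, 0 < d → 0 < d' → Nat.Coprime d d' → ∀ α ∈ OmegaSet a b c d,
    ω d d' α ∈ latL d d' α ∧ ω d d' α ≠ 0 ∧
    ∀ p ∈ latL d d' α, p ≠ 0 →
      (ω d d' α).1^2 + (ω d d' α).2^2 ≤ p.1^2 + p.2^2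

/-- index set of `Q_E(j,k)`: coprime `d, d' ≥ 1`, `α ∈ Ω_d`, `ω_{α,d,d'} ∈ Ψ`. -/
def QIdx (a b c : ℤ) (ω : (d d' : ℕ) → ZMod (d^2) → ℤ × ℤ) :
    Set (Σ d : ℕ, ℕ × ZMod (d^2)) :=
  {x | 0 < x.1 ∧ 0 < x.2.1 ∧ Nat.Coprime x.1 x.2.1 ∧ x.2.2 ∈ OmegaSet a b c x.1 ∧
    ω x.1 x.2.1 x.2.2 ∈ Psi a b c}

/-- the general term `(dd')^{2k} · max(1, log(dd'))^{-j} · ‖ω_{α,d,d'}‖^{-4k}` of `Q_E(j,k)`. -/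
def QTerm (j k : ℝ) (ω : (d d' : ℕ) → ZMod (d^2) → ℤ × ℤ)
    (x : Σ d : ℕ, ℕ × ZMod (d^2)) : ℝ :=
  ((x.1 : ℝ) * (x.2.1 : ℝ)) ^ (2*k) * max 1 (Real.log ((x.1 : ℝ) * (x.2.1 : ℝ))) ^ (-j) *
    Real.sqrt (((ω x.1 x.2.1 x.2.2).1 : ℝ)^2 + ((ω x.1 x.2.1 x.2.2).2 : ℝ)^2) ^ (-(4*k))

/-- `Q_E(j,k)` converges. -/
def QConv (a b c : ℤ) (j k : ℝ) (ω : (d d' : ℕ) → ZMod (d^2) → ℤ × ℤ) : Prop :=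
  Summable fun x : QIdx a b c ω => QTerm j k ω x.1

/-- the quadratic twist `E^{(D)} : Dy² = f(x)`, in Weierstrass form
`y² = x³ + aDx² + bD²x + cD³` (isomorphic via `(x,y) ↦ (Dx, D²y)`). -/
def twist (a b c D : ℤ) : WeierstrassCurve.Affine ℚ :=
  { a₁ := 0, a₂ := a*D, a₃ := 0, a₄ := b*D^2, a₆ := c*D^3 }

/-- `rank_ℤ E^{(D)}(ℚ) < 2j` for every nonzero integer `D`: there is no
ℤ-linearly independent family of `⌈2j⌉` rational points on `E^{(D)}`. -/
def RankBound (a b c : ℤ) (j : ℝ) : Prop :=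
  ∀ D : ℤ, D ≠ 0 →
    ¬ ∃ P : Fin ⌈2*j⌉₊ → (twist a b c D).Point, LinearIndependent ℤ P

/-- `X ⊆ ℝ` is broad: open, and meets both `(e_max, ∞)` and `(-∞, e_min)`. -/
def Broad (a b c : ℤ) (X : Set ℝ) : Prop :=
  IsOpen X ∧ (∃ x ∈ X, ∀ r : ℝ, r^3 + a*r^2 + b*r + c = 0 → r < x) ∧
    (∃ x ∈ X, ∀ r : ℝ, r^3 + a*r^2 + b*r + c = 0 → x < r)

/-- the set of triples `(α, d, d')` with `d, d'` coprime positive integers,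
`dd' = t`, and `α ∈ Ω_d`. -/
def TripSet (a b c : ℤ) (t : ℕ) : Set (Σ d : ℕ, ℕ × ZMod (d^2)) :=
  {x | 0 < x.1 ∧ 0 < x.2.1 ∧ Nat.Coprime x.1 x.2.1 ∧ x.1 * x.2.1 = t ∧
    x.2.2 ∈ OmegaSet a b c x.1}

end

/-!
The implications `S_E ⟹ R_E ⟹ Q_E` are termwise: if `F(u, v) = s m²` with `s` squarefree, then
`t² ∣ F(u, v)` means `t ∣ m`, and a shortest vector `(u, v)` of `L_{α,d,d'}` satisfies
`(dd')² ∣ F(u, v)`.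

Suppose that some twist has `r = ⌈2j⌉` independent points. Since the height of `x`-coordinates is
quadratic up to a bounded error, their combinations yield `≫ N ^ r` points with coprime coordinates
`x = u / v` of height `≪ N ^ 2`. When `F(u, v)` is not small compared with the fourth power of
`max |u| |v|`, the vector `(u, v)` is, up to sign and finitely many exceptions, the shortest one of
its lattice, so these points contribute `≫ N ^ (r - 2j)` to `Q_E`, for every `N`.

Conversely, a pair `(u, v)` with `s(F(u, v)) = D` is the `x`-coordinate of a point of `E^{(D)}(ℚ)`.
Nonzero canonical heights on `E^{(D)}` are `≫ log |D|`, uniformly in `D`, so a bound `r < 2j` for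
the rank leaves `≪ X ^ (r / 2)` points of height at most `X log |D|`, and `S_E` is dominated by
`∑ |D|⁻¹ (log |D|) ^ (-j)`. This converges for `j > 1`; for `j ≤ 1` the rank bound never holds,
because some twist has rank at least two. Such a twist is found by specializing a pair of points
over `ℚ(t)` of the twist of `E` by a rational function: the degrees of the coordinates determine
the growth of the heights, which rules out a linear relation.
-/

/-! ### Squarefree parts and `S_E ⟹ R_E` -/

section SquarefreePart

theorem dvd_of_sq_dvd_squarefree_mul_sq {R : Type*} [CommMonoidWithZero R] [GCDMonoid R]
    {s t m : R} (hs : Squarefree s) (h : t ^ 2 ∣ s * m ^ 2) : t ∣ m := by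
  obtain ⟨t', m', ht, hm, hunit⟩ := extract_gcd t m
  rcases eq_or_ne (gcd t m) 0 with hg | hg
  · rw [hm, hg, zero_mul]
    exact dvd_zero t
  have hcop : IsRelPrime t' m' := (gcd_isUnit_iff_isRelPrime).1 hunit
  have hdvd : t' ^ 2 ∣ s * m' ^ 2 := by
    refine (mul_dvd_mul_iff_left (pow_ne_zero 2 hg)).1 ?_
    rwa [← mul_pow, ← ht, mul_left_comm, ← mul_pow, ← hm]
  have ht' : t' ^ 2 ∣ s := (hcop.pow (m := 2) (n := 2)).dvd_of_dvd_mul_right hdvd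
  calc t = gcd t m * t' := ht
    _ ∣ gcd t m * m' := mul_dvd_mul_left _ (hs t' (by rwa [← sq])).dvd
    _ = m := hm.symm

theorem intCast_eq_mul_ratCast_sq_iff {n s : ℤ} {m : ℚ} :
    (n : ℚ) = s * m ^ 2 ↔ n * (m.den : ℤ) ^ 2 = s * m.num ^ 2 := by
  have hden : (m.den : ℚ) ≠ 0 := mod_cast m.den_ne_zero
  conv_lhs => rw [← m.num_div_den]
  rw [div_pow, mul_div_assoc', eq_div_iff (pow_ne_zero 2 hden)]
  exact_mod_cast Iff.rfl

theorem exists_eq_mul_natCast_sq_of_squarefree {n s : ℤ} (hs : Squarefree s) (hn : n ≠ 0) {q : ℚ}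
    (hq : (n : ℚ) = s * q ^ 2) : ∃ m : ℕ, 0 < m ∧ n = s * (m : ℤ) ^ 2 := by
  rw [intCast_eq_mul_ratCast_sq_iff] at hq
  have hdvd : (q.den : ℤ) ∣ q.num :=
    dvd_of_sq_dvd_squarefree_mul_sq hs ⟨n, by rw [← hq]; ring⟩
  have hden : q.den = 1 := q.reduced.symm.eq_one_of_dvd (Int.natCast_dvd.1 hdvd)
  rw [hden, Nat.cast_one, one_pow, mul_one] at hq
  refine ⟨q.num.natAbs, Int.natAbs_pos.2 fun h0 => hn ?_, by rwa [Int.natAbs_sq]⟩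
  rw [hq, h0]
  ring

theorem IsSqfreePart.exists_eq_mul_sq {sq : ℤ → ℤ} (hsq : IsSqfreePart sq) {n : ℤ} (hn : n ≠ 0) :
    ∃ m : ℕ, 0 < m ∧ n = sq n * (m : ℤ) ^ 2 :=
  have ⟨hs, _, hq⟩ := hsq n hn
  exists_eq_mul_natCast_sq_of_squarefree hs hn hq

theorem one_le_ht (u v : ℤ) : 1 ≤ ht u v := le_max_left _ _

theorem ht_rpow_nonneg (u v : ℤ) (x : ℝ) : 0 ≤ ht u v ^ x :=
  Real.rpow_nonneg (zero_le_one.trans (one_le_ht u v)) x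

variable {a b c : ℤ} {sq : ℤ → ℤ} {j k : ℝ}

theorem RTerm_eq_of_Fbin_eq {u v s : ℤ} {t e : ℕ} (ht0 : 0 < t)
    (hF : Fbin a b c u v = s * ((t * e : ℕ) : ℤ) ^ 2) :
    RTerm a b c j k (t, u, v) = (e : ℝ) ^ (-(2 * k)) * (|(s : ℝ)| ^ (-k) * ht u v ^ (-j)) := by
  have ht0 : (0 : ℝ) < t := mod_cast ht0
  have habs : |(Fbin a b c u v : ℝ)| = |(s : ℝ)| * ((t * e) ^ 2 : ℝ) := by
    rw [hF]
    push_cast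
    rw [abs_mul, abs_of_nonneg (by positivity : (0 : ℝ) ≤ (t * e) ^ 2)]
  have hsq : ((t * e : ℝ) ^ 2) ^ (-k) = (t : ℝ) ^ (-(2 * k)) * (e : ℝ) ^ (-(2 * k)) := by
    rw [← Real.rpow_natCast, ← Real.rpow_mul (by positivity), Nat.cast_ofNat, mul_neg,
      Real.mul_rpow ht0.le (Nat.cast_nonneg e)]
  have hcancel : (t : ℝ) ^ (2 * k) * (t : ℝ) ^ (-(2 * k)) = 1 := by
    rw [← Real.rpow_add ht0, add_neg_cancel, Real.rpow_zero]
  rw [RTerm, habs, Real.mul_rpow (abs_nonneg _) (by positivity), hsq]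
  linear_combination ((e : ℝ) ^ (-(2 * k)) * |(s : ℝ)| ^ (-k) * ht u v ^ (-j)) * hcancel

/-- Writing `F(u,v) = s m²`, the condition `t² ∣ F(u,v)` means `t ∣ m`; so the `R`-term of
`(t, u, v)` is `(m/t)^{-2k}` times the `S`-term of `(u, v)`. -/
theorem SConv.rConv {X : Set ℝ} (hsq : IsSqfreePart sq) (hk : 1 / 2 < k)
    (h : SConv a b c sq j k X) : RConv a b c j k X := by
  choose! M hM0 hM using fun (n : ℤ) (hn : n ≠ 0) => hsq.exists_eq_mul_sq hn
  have hM' (q : RIdx a b c X) : ∃ e : ℕ, 0 < e ∧ M (Fbin a b c q.1.2.1 q.1.2.2) = q.1.1 * e := by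
    have hF : Fbin a b c q.1.2.1 q.1.2.2 ≠ 0 := q.2.2.1.2
    have hdvd : q.1.1 ∣ M (Fbin a b c q.1.2.1 q.1.2.2) := Int.natCast_dvd_natCast.1 <|
      dvd_of_sq_dvd_squarefree_mul_sq (hsq _ hF).1 (by rw [← hM _ hF]; exact q.2.2.2.2)
    obtain ⟨e, he⟩ := hdvd
    exact ⟨e, Nat.pos_of_mul_pos_left (he ▸ hM0 _ hF), he⟩
  choose e he0 he using hM'
  let φ : RIdx a b c X → ℕ × SIdx a b c X := fun q => (e q, ⟨q.1.2, q.2.2.1, q.2.2.2.1⟩)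
  have hφ : Function.Injective φ := by
    intro q q' hqq
    have he_eq : e q = e q' := congrArg Prod.fst hqq
    have huv : q.1.2 = q'.1.2 := congrArg (fun x => x.2.1) hqq
    have hmul : q.1.1 * e q = q'.1.1 * e q := by
      rw [← he q, huv, he q', he_eq]
    exact Subtype.ext (Prod.ext (Nat.eq_of_mul_eq_mul_right (he0 q) hmul) huv)
  have hsum : Summable fun e : ℕ => (e : ℝ) ^ (-(2 * k)) := by
    rw [Real.summable_nat_rpow]
    linarith
  have hprod := hsum.mul_of_nonneg h (fun e => by positivity)
    (fun p => mul_nonneg (by positivity) (ht_rpow_nonneg _ _ _))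
  refine (hprod.comp_injective hφ).congr fun q => ?_
  have hF : Fbin a b c q.1.2.1 q.1.2.2 ≠ 0 := q.2.2.1.2
  exact (RTerm_eq_of_Fbin_eq q.2.1 (by rw [← he q]; exact hM _ hF)).symm

end SquarefreePart

/-! ### The lattices `L_{α,d,d'}` and `R_E ⟹ Q_E` -/

section Lattice

variable {a b c : ℤ} {d d' : ℕ} {α : ZMod (d ^ 2)} {u v : ℤ}

theorem isCoprime_of_mem_latL (h : (u, v) ∈ latL d d' α) (huv : Int.gcd u v = 1) :
    IsCoprime (d : ℤ) v := by
  obtain ⟨A, rfl⟩ := ZMod.intCast_surjective α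
  obtain ⟨x, y, hxy⟩ := Int.isCoprime_iff_gcd_eq_one.2 huv
  have hdvd : ((d ^ 2 : ℕ) : ℤ) ∣ u - A * v := by
    rw [← ZMod.intCast_zmod_eq_zero_iff_dvd]
    push_cast
    exact sub_eq_zero.2 h.1
  obtain ⟨k, hk⟩ := hdvd
  push_cast at hk
  exact ⟨x * d * k, y + x * A, by linear_combination hxy - x * hk⟩

theorem sq_dvd_Fbin_of_mem_latL (h : (u, v) ∈ latL d d' α) (hα : α ∈ OmegaSet a b c d) :
    ((d * d' : ℕ) : ℤ) ^ 2 ∣ Fbin a b c u v := by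
  have hu : (u : ZMod (d ^ 2)) = α * v := h.1
  have hα : α ^ 3 + (a : ZMod (d ^ 2)) * α ^ 2 + (b : ZMod (d ^ 2)) * α + c = 0 := hα
  have hdvd : ((d ^ 2 : ℕ) : ℤ) ∣ u ^ 3 + a * u ^ 2 * v + b * u * v ^ 2 + c * v ^ 3 := by
    rw [← ZMod.intCast_zmod_eq_zero_iff_dvd]
    push_cast
    rw [hu]
    linear_combination (v : ZMod (d ^ 2)) ^ 3 * hα
  rw [Fbin, mul_comm d d', Nat.cast_mul, mul_pow]
  exact mul_dvd_mul h.2 (by exact_mod_cast hdvd)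

theorem gcd_mul_natAbs_of_mem_latL (h : (u, v) ∈ latL d d' α) (huv : Int.gcd u v = 1) :
    Nat.gcd (d * d') v.natAbs = d' := by
  have hcop : Nat.Coprime d v.natAbs := by
    simpa [Int.isCoprime_iff_gcd_eq_one, Int.gcd] using isCoprime_of_mem_latL h huv
  rw [hcop.gcd_mul_left_cancel]
  exact Nat.gcd_eq_left (Int.natCast_dvd.1 ((dvd_pow_self _ two_ne_zero).trans h.2))

theorem eq_of_mem_latL {β : ZMod (d ^ 2)} {e e' : ℕ} (h : (u, v) ∈ latL d e α)
    (h' : (u, v) ∈ latL d e' β) (huv : Int.gcd u v = 1) : α = β := by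
  obtain ⟨x, y, hxy⟩ := (isCoprime_of_mem_latL h huv).pow_left (m := 2)
  have hd : (d : ZMod (d ^ 2)) ^ 2 = 0 := mod_cast ZMod.natCast_self (d ^ 2)
  have hyv : (y : ZMod (d ^ 2)) * v = 1 := by
    have := congrArg (Int.cast : ℤ → ZMod (d ^ 2)) hxy
    push_cast at this
    linear_combination this - (x : ZMod (d ^ 2)) * hd
  have hαβ : α * v = β * v := h.1.symm.trans h'.1
  linear_combination (y : ZMod (d ^ 2)) * hαβ + (β - α) * hyv

theorem sigma_eq_of_mem_latL {e e' : ℕ} {β : ZMod (e ^ 2)} (h : (u, v) ∈ latL d d' α)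
    (h' : (u, v) ∈ latL e e' β) (huv : Int.gcd u v = 1) (ht : d * d' = e * e') (hd' : 0 < d') :
    (⟨d, d', α⟩ : Σ d : ℕ, ℕ × ZMod (d ^ 2)) = ⟨e, e', β⟩ := by
  obtain rfl : d' = e' := by
    rw [← gcd_mul_natAbs_of_mem_latL h huv, ht, gcd_mul_natAbs_of_mem_latL h' huv]
  obtain rfl : d = e := Nat.eq_of_mul_eq_mul_right hd' ht
  rw [eq_of_mem_latL h h' huv]

/-- Pigeonhole: `L_{α,d,d'}` has index at most `(dd')²`, and the box `[0, dd']²` has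
`(dd' + 1)²` points. -/
theorem exists_ne_zero_mem_latL_sq_add_sq_le (hd : 0 < d) (hd' : 0 < d') (α : ZMod (d ^ 2)) :
    ∃ p ∈ latL d d' α, p ≠ 0 ∧ p.1 ^ 2 + p.2 ^ 2 ≤ 2 * ((d * d' : ℕ) : ℤ) ^ 2 := by
  have : NeZero (d ^ 2) := ⟨by positivity⟩
  have : NeZero (d' ^ 2) := ⟨by positivity⟩
  set t := d * d' with ht
  let f : ℕ × ℕ → ZMod (d ^ 2) × ZMod (d' ^ 2) := fun p => (p.1 - α * p.2, p.2)
  have hcard : (Finset.univ : Finset (ZMod (d ^ 2) × ZMod (d' ^ 2))).card <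
      (Finset.range (t + 1) ×ˢ Finset.range (t + 1)).card := by
    rw [Finset.card_univ, Fintype.card_prod, ZMod.card, ZMod.card, Finset.card_product,
      Finset.card_range]
    nlinarith
  obtain ⟨p, hp, q, hq, hne, hpq⟩ := Finset.exists_ne_map_eq_of_card_lt_of_maps_to hcard
    (f := f) (fun _ _ => Finset.mem_univ _)
  simp only [f, Prod.mk.injEq] at hpq
  simp only [Finset.mem_product, Finset.mem_range] at hp hq
  refine ⟨((p.1 : ℤ) - q.1, (p.2 : ℤ) - q.2), ⟨?_, ?_⟩, fun h0 => hne ?_, ?_⟩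
  · push_cast
    linear_combination hpq.1
  · have := (ZMod.intCast_zmod_eq_zero_iff_dvd ((p.2 : ℤ) - q.2) (d' ^ 2)).1 (by
      push_cast
      rw [hpq.2, sub_self])
    exact_mod_cast this
  · simp only [Prod.mk_eq_zero] at h0
    apply Prod.ext <;> lia
  · have h1 : ((p.1 : ℤ) - q.1) ^ 2 ≤ (t : ℤ) ^ 2 := by apply sq_le_sq' <;> lia
    have h2 : ((p.2 : ℤ) - q.2) ^ 2 ≤ (t : ℤ) ^ 2 := by apply sq_le_sq' <;> lia
    dsimp only
    linarith

theorem IsShortestChoice.sq_add_sq_le {ω : (d d' : ℕ) → ZMod (d ^ 2) → ℤ × ℤ}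
    (hω : IsShortestChoice a b c ω) (hd : 0 < d) (hd' : 0 < d') (hdd : Nat.Coprime d d')
    (hα : α ∈ OmegaSet a b c d) :
    (ω d d' α).1 ^ 2 + (ω d d' α).2 ^ 2 ≤ 2 * ((d * d' : ℕ) : ℤ) ^ 2 := by
  obtain ⟨p, hp, hp0, hle⟩ := exists_ne_zero_mem_latL_sq_add_sq_le hd hd' α
  exact ((hω d d' hd hd' hdd α hα).2.2 p hp hp0).trans hle

end Lattice

section Estimates

theorem exists_abs_Fbin_le_mul_pow (a b c : ℤ) : ∃ C : ℝ, 1 ≤ C ∧ ∀ u v : ℤ, ∀ r : ℝ,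
    |(u : ℝ)| ≤ r → |(v : ℝ)| ≤ r → |(Fbin a b c u v : ℝ)| ≤ C * r ^ 4 := by
  refine ⟨1 + |(a : ℝ)| + |(b : ℝ)| + |(c : ℝ)|, ?_, fun u v r hu hv => ?_⟩
  · linarith [abs_nonneg (a : ℝ), abs_nonneg (b : ℝ), abs_nonneg (c : ℝ)]
  have hr : 0 ≤ r := (abs_nonneg _).trans hu
  calc |(Fbin a b c u v : ℝ)|
      = |(v : ℝ)| * |(u : ℝ) ^ 3 + a * u ^ 2 * v + b * u * v ^ 2 + c * v ^ 3| := by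
        rw [← abs_mul, Fbin]
        push_cast
        rfl
    _ ≤ |(v : ℝ)| * (|(u : ℝ) ^ 3| + |a * (u : ℝ) ^ 2 * v| + |b * (u : ℝ) * v ^ 2| +
          |c * (v : ℝ) ^ 3|) := by
        gcongr
        refine (abs_add_le _ _).trans (add_le_add_left ?_ _)
        exact abs_add_three _ _ _
    _ = |(v : ℝ)| * (|(u : ℝ)| ^ 3 + |(a : ℝ)| * |(u : ℝ)| ^ 2 * |(v : ℝ)| +
          |(b : ℝ)| * |(u : ℝ)| * |(v : ℝ)| ^ 2 + |(c : ℝ)| * |(v : ℝ)| ^ 3) := by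
        simp only [abs_mul, abs_pow]
    _ ≤ r * (r ^ 3 + |(a : ℝ)| * r ^ 2 * r + |(b : ℝ)| * r * r ^ 2 + |(c : ℝ)| * r ^ 3) := by
        gcongr
    _ = (1 + |(a : ℝ)| + |(b : ℝ)| + |(c : ℝ)|) * r ^ 4 := by ring

theorem ht_le_two_mul_max_one_log {u v : ℤ} {t : ℝ} (hu : |(u : ℝ)| ≤ 2 * t)
    (hv : |(v : ℝ)| ≤ 2 * t) : ht u v ≤ 2 * max 1 (Real.log t) := by
  have hone : 1 ≤ max 1 (Real.log t) := le_max_left _ _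
  have hlog (w : ℤ) (hw : |(w : ℝ)| ≤ 2 * t) : Real.log |(w : ℝ)| ≤ 2 * max 1 (Real.log t) := by
    rcases eq_or_ne w 0 with rfl | hw0
    · simp
    have hw_pos : 0 < |(w : ℝ)| := abs_pos.2 (mod_cast hw0)
    have ht0 : 0 < t := by linarith
    calc Real.log |(w : ℝ)| ≤ Real.log (2 * t) := Real.log_le_log hw_pos hw
      _ = Real.log 2 + Real.log t := Real.log_mul two_ne_zero ht0.ne'
      _ ≤ 2 * max 1 (Real.log t) := by
        linarith [Real.log_two_lt_d9, le_max_right 1 (Real.log t)]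
  exact max_le (by linarith) (max_le (hlog u hu) (hlog v hv))

theorem rpow_neg_le_of_le_mul {x y C k : ℝ} (hx : 0 < x) (hy : 0 ≤ y) (hC : 0 < C)
    (h : x ≤ C * y) (hk : 0 ≤ k) : y ^ (-k) ≤ C ^ k * x ^ (-k) := by
  calc y ^ (-k) = C ^ k * (C * y) ^ (-k) := by
        rw [Real.mul_rpow hC.le hy, ← mul_assoc, ← Real.rpow_add hC, add_neg_cancel,
          Real.rpow_zero, one_mul]
    _ ≤ C ^ k * x ^ (-k) := by
        gcongr ?_ * ?_
        exact Real.rpow_le_rpow_of_nonpos hx h (neg_nonpos.2 hk)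

variable {a b c : ℤ} {ω : (d d' : ℕ) → ZMod (d ^ 2) → ℤ × ℤ} {j k : ℝ}

theorem exists_QTerm_le_mul_RTerm (hω : IsShortestChoice a b c ω) (hj : 0 ≤ j) (hk : 0 ≤ k) :
    ∃ C : ℝ, ∀ x ∈ QIdx a b c ω,
      QTerm j k ω x ≤ C * RTerm a b c j k (x.1 * x.2.1, ω x.1 x.2.1 x.2.2) := by
  obtain ⟨C, hC1, hC⟩ := exists_abs_Fbin_le_mul_pow a b c
  refine ⟨C ^ k * 2 ^ j, ?_⟩
  rintro ⟨d, d', α⟩ ⟨hd, hd', hcop, hα, -, hF⟩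
  have hshort := hω.sq_add_sq_le hd hd' hcop hα
  simp only [QTerm, RTerm] at hF ⊢
  generalize ω d d' α = w at *
  obtain ⟨u, v⟩ := w
  rw [← Nat.cast_mul]
  generalize d * d' = t at *
  dsimp only at *
  set n : ℝ := √((u : ℝ) ^ 2 + (v : ℝ) ^ 2) with hn
  have hu : |(u : ℝ)| ≤ n := Real.abs_le_sqrt (by nlinarith [sq_nonneg (v : ℝ)])
  have hv : |(v : ℝ)| ≤ n := Real.abs_le_sqrt (by nlinarith [sq_nonneg (u : ℝ)])
  have hnt : n ≤ 2 * t := by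
    rw [hn, Real.sqrt_le_left (by positivity)]
    have : (u : ℝ) ^ 2 + (v : ℝ) ^ 2 ≤ 2 * (t : ℝ) ^ 2 := mod_cast hshort
    nlinarith
  have hF0 : 0 < |(Fbin a b c u v : ℝ)| := abs_pos.2 (mod_cast hF)
  have hnorm : n ^ (-(4 * k)) ≤ C ^ k * |(Fbin a b c u v : ℝ)| ^ (-k) := by
    have hpow : n ^ (-(4 * k)) = (n ^ 4) ^ (-k) := by
      rw [← Real.rpow_natCast, ← Real.rpow_mul (Real.sqrt_nonneg _), Nat.cast_ofNat, mul_neg]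
    rw [hpow]
    exact rpow_neg_le_of_le_mul hF0 (by positivity) (by linarith) (hC u v n hu hv) hk
  have hlog : max 1 (Real.log t) ^ (-j) ≤ 2 ^ j * ht u v ^ (-j) :=
    rpow_neg_le_of_le_mul (by linarith [one_le_ht u v]) (by positivity) two_pos
      (ht_le_two_mul_max_one_log (hu.trans hnt) (hv.trans hnt)) hj
  have hht := ht_rpow_nonneg u v (-j)
  calc (t : ℝ) ^ (2 * k) * max 1 (Real.log t) ^ (-j) * n ^ (-(4 * k))
      ≤ (t : ℝ) ^ (2 * k) * (2 ^ j * ht u v ^ (-j)) *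
          (C ^ k * |(Fbin a b c u v : ℝ)| ^ (-k)) := by gcongr
    _ = _ := by ring

theorem RConv.qConv (hω : IsShortestChoice a b c ω) (hj : 0 ≤ j) (hk : 0 ≤ k)
    (h : RConv a b c j k Set.univ) : QConv a b c j k ω := by
  have hmem (x : QIdx a b c ω) : ω x.1.1 x.1.2.1 x.1.2.2 ∈ latL x.1.1 x.1.2.1 x.1.2.2 :=
    (hω _ _ x.2.1 x.2.2.1 x.2.2.2.1 _ x.2.2.2.2.1).1
  let φ : QIdx a b c ω → RIdx a b c Set.univ := fun x =>
    ⟨(x.1.1 * x.1.2.1, ω x.1.1 x.1.2.1 x.1.2.2), Nat.mul_pos x.2.1 x.2.2.1, x.2.2.2.2.2, trivial,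
      sq_dvd_Fbin_of_mem_latL (hmem x) x.2.2.2.2.1⟩
  have hφ : Function.Injective φ := by
    intro x y hxy
    have ht : x.1.1 * x.1.2.1 = y.1.1 * y.1.2.1 := congrArg (fun q => q.1.1) hxy
    have hω_eq : ω x.1.1 x.1.2.1 x.1.2.2 = ω y.1.1 y.1.2.1 y.1.2.2 := congrArg (fun q => q.1.2) hxy
    exact Subtype.ext
      (sigma_eq_of_mem_latL (hmem x) (hω_eq ▸ hmem y) x.2.2.2.2.2.1 ht x.2.2.1)
  obtain ⟨C, hC⟩ := exists_QTerm_le_mul_RTerm hω hj hk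
  refine Summable.of_nonneg_of_le (fun x => ?_) (fun x => hC x.1 x.2)
    ((h.comp_injective hφ).mul_left C)
  rw [QTerm]
  positivity

end Estimates

/-! ### Heights of `x`-coordinates on the twists -/

section XCoordinate

open WeierstrassCurve Height

variable {a b c D : ℤ}

/-- Projective coordinates of the `x`-coordinate of a point of `Dy² = f(x)`. On the Weierstrass
model that `x`-coordinate is `X / D`, so the point `(X, Y)` is sent to `(X : D)`. -/
noncomputable def twistX (P : (twist a b c D).Point) : Fin 2 → ℚ :=
  ![P.xRep 0, D * P.xRep 1]

/-- The coefficients of the product of the two binary linear forms with coefficients `p`, `q`,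
that is, the map `ℙ¹ × ℙ¹ → Sym² ℙ¹ = ℙ²`. -/
def symProd (p q : Fin 2 → ℚ) : Fin 3 → ℚ :=
  ![p 0 * q 0, p 0 * q 1 + p 1 * q 0, p 1 * q 1]

/-- The map `ℙ² → ℙ²` induced on `x`-coordinates by `{P, Q} ↦ {P + Q, P - Q}` on `y² = f(x)`. -/
def addSubTriple (a b c : ℤ) (x : Fin 3 → ℚ) : Fin 3 → ℚ :=
  ![x 0 ^ 2 - 2 * b * x 0 * x 2 - 4 * c * x 1 * x 2 - (4 * a * c - b ^ 2) * x 2 ^ 2,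
    2 * x 1 * x 0 + 4 * a * x 0 * x 2 + 2 * b * x 1 * x 2 + 4 * c * x 2 ^ 2,
    x 1 ^ 2 - 4 * x 0 * x 2]

theorem eval_addSubMap_twist_one (x : Fin 3 → ℚ) :
    (fun i ↦ (addSubMap (twist a b c 1) i).eval x) = addSubTriple a b c x := by
  ext i
  fin_cases i <;> simp [addSubMap, addSubTriple, twist, WeierstrassCurve.b₂, WeierstrassCurve.b₄,
    WeierstrassCurve.b₆, WeierstrassCurve.b₈]

theorem symProd_comm (p q : Fin 2 → ℚ) : symProd p q = symProd q p :=
  Matrix.vec3_eq (mul_comm _ _) (by ring) (mul_comm _ _)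

theorem twistX_zero : twistX (0 : (twist a b c D).Point) = ![1, 0] := by
  simp [twistX]

theorem twistX_some {x y : ℚ} (h : (twist a b c D).Nonsingular x y) :
    twistX (.some x y h) = ![x, (D : ℚ)] := by
  simp [twistX]

theorem twistX_neg (P : (twist a b c D).Point) : twistX (-P) = twistX P := by
  simp [twistX]

theorem twistX_ne_zero (hD : D ≠ 0) (P : (twist a b c D).Point) : twistX P ≠ 0 := by
  cases P with
  | zero => simp [← Affine.Point.zero_def, twistX_zero]
  | some x y h => simp [twistX_some, hD]

theorem sq_eq_of_nonsingular_twist {x y : ℚ} (h : (twist a b c D).Nonsingular x y) :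
    y ^ 2 = x ^ 3 + a * D * x ^ 2 + b * D ^ 2 * x + c * D ^ 3 := by
  simpa [twist, Affine.equation_iff] using h.1

theorem negY_twist (x y : ℚ) : (twist a b c D).negY x y = -y := by
  simp [Affine.negY, twist]

theorem derivative_ne_zero_of_nonsingular_twist {x : ℚ} (h : (twist a b c D).Nonsingular x 0) :
    3 * x ^ 2 + 2 * (a * D) * x + b * D ^ 2 ≠ 0 := by
  rw [Affine.nonsingular_iff] at h
  simpa [twist, eq_comm] using h.2

theorem symProd_twistX_add_self_of_Y_eq_zero {x : ℚ} (h : (twist a b c D).Nonsingular x 0) :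
    ∃ κ : ℚ, κ ≠ 0 ∧ symProd (twistX (.some x 0 h + .some x 0 h))
        (twistX (0 : (twist a b c D).Point)) =
      κ • addSubTriple a b c (symProd (twistX (.some x 0 h)) (twistX (.some x 0 h))) := by
  have heq := sq_eq_of_nonsingular_twist h
  have hder := derivative_ne_zero_of_nonsingular_twist h
  refine ⟨((3 * x ^ 2 + 2 * (a * D) * x + b * D ^ 2) ^ 2)⁻¹, inv_ne_zero (pow_ne_zero _ hder), ?_⟩
  rw [Affine.Point.add_self_of_Y_eq (by rw [negY_twist, neg_zero]), twistX_zero, twistX_some,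
    symProd, symProd, addSubTriple, Matrix.smul_vec3]
  refine Matrix.vec3_eq ?_ ?_ ?_ <;> dsimp
  · rw [mul_one, eq_comm, inv_mul_eq_one₀ (pow_ne_zero _ hder)]
    linear_combination (-(8 * x + 4 * a * D)) * heq
  · linear_combination (4 * D * ((3 * x ^ 2 + 2 * (a * D) * x + b * D ^ 2) ^ 2)⁻¹) * heq
  · ring

theorem symProd_twistX_add_self_of_Y_ne_zero {x y : ℚ} (h : (twist a b c D).Nonsingular x y)
    (hy : y ≠ 0) :
    ∃ κ : ℚ, κ ≠ 0 ∧ symProd (twistX (.some x y h + .some x y h))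
        (twistX (0 : (twist a b c D).Point)) =
      κ • addSubTriple a b c (symProd (twistX (.some x y h)) (twistX (.some x y h))) := by
  have heq := sq_eq_of_nonsingular_twist h
  have hneg : y ≠ (twist a b c D).negY x y := by
    rwa [negY_twist, ne_eq, self_eq_neg]
  refine ⟨(4 * y ^ 2)⁻¹, by positivity, ?_⟩
  rw [Affine.Point.add_self_of_Y_ne hneg, twistX_zero, twistX_some, twistX_some,
    symProd, symProd, addSubTriple, Matrix.smul_vec3, Affine.slope_of_Y_ne rfl hneg, negY_twist,
    Affine.addX]
  refine Matrix.vec3_eq ?_ ?_ ?_ <;> dsimp [twist]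
  · field_simp
    linear_combination (-4 * (4 * a * D + 8 * x)) * heq
  · field_simp
    linear_combination 16 * D * heq
  · ring

theorem symProd_twistX_add_sub_of_X_ne {x y x' y' : ℚ} (h : (twist a b c D).Nonsingular x y)
    (h' : (twist a b c D).Nonsingular x' y') (hx : x ≠ x') :
    ∃ κ : ℚ, κ ≠ 0 ∧ symProd (twistX (.some x y h + .some x' y' h'))
        (twistX (.some x y h - .some x' y' h'))
      = κ • addSubTriple a b c (symProd (twistX (.some x y h)) (twistX (.some x' y' h'))) := by
  have heq := sq_eq_of_nonsingular_twist h
  have heq' := sq_eq_of_nonsingular_twist h'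
  have hsub : x - x' ≠ 0 := sub_ne_zero.2 hx
  refine ⟨((x - x') ^ 2)⁻¹, by positivity, ?_⟩
  rw [sub_eq_add_neg, Affine.Point.neg_some, Affine.Point.add_of_X_ne hx,
    Affine.Point.add_of_X_ne hx, twistX_some, twistX_some, twistX_some, twistX_some, symProd,
    symProd, addSubTriple, Matrix.smul_vec3, Affine.slope_of_X_ne hx, Affine.slope_of_X_ne hx,
    negY_twist, Affine.addX, Affine.addX]
  refine Matrix.vec3_eq ?_ ?_ ?_ <;> dsimp [twist]
  · field_simp
    linear_combination
      ((y ^ 2 - y' ^ 2) + ((x ^ 3 + a * D * x ^ 2 + b * D ^ 2 * x) -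
        (x' ^ 3 + a * D * x' ^ 2 + b * D ^ 2 * x')) - 2 * (x - x') ^ 2 * (a * D + x + x')) * heq +
      (-((y ^ 2 - y' ^ 2) + ((x ^ 3 + a * D * x ^ 2 + b * D ^ 2 * x) -
        (x' ^ 3 + a * D * x' ^ 2 + b * D ^ 2 * x'))) - 2 * (x - x') ^ 2 * (a * D + x + x')) * heq'
  · field_simp
    linear_combination 2 * D * heq + 2 * D * heq'
  · field_simp
    ring

theorem symProd_twistX_self (P : (twist a b c D).Point) :
    symProd (twistX P) (twistX P) =
      addSubTriple a b c (symProd (twistX P) (twistX (0 : (twist a b c D).Point))) := by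
  rw [twistX_zero, symProd, symProd, addSubTriple]
  refine Matrix.vec3_eq ?_ ?_ ?_ <;> dsimp <;> ring

theorem symProd_twistX_add_self (P : (twist a b c D).Point) :
    ∃ κ : ℚ, κ ≠ 0 ∧ symProd (twistX (P + P)) (twistX (0 : (twist a b c D).Point))
      = κ • addSubTriple a b c (symProd (twistX P) (twistX P)) := by
  cases P with
  | zero => exact ⟨1, one_ne_zero, by
      rw [← Affine.Point.zero_def, add_zero, one_smul, ← symProd_twistX_self]⟩
  | some x y h =>
    rcases eq_or_ne y 0 with rfl | hy
    · exact symProd_twistX_add_self_of_Y_eq_zero h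
    · exact symProd_twistX_add_self_of_Y_ne_zero h hy

theorem symProd_twistX_add_sub (P Q : (twist a b c D).Point) :
    ∃ κ : ℚ, κ ≠ 0 ∧ symProd (twistX (P + Q)) (twistX (P - Q))
      = κ • addSubTriple a b c (symProd (twistX P) (twistX Q)) := by
  match P, Q with
  | P, 0 => exact ⟨1, one_ne_zero, by rw [add_zero, sub_zero, one_smul, symProd_twistX_self]⟩
  | 0, Q => exact ⟨1, one_ne_zero, by
      rw [zero_add, zero_sub, twistX_neg, one_smul, symProd_twistX_self, symProd_comm]⟩
  | .some x y h, .some x' y' h' =>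
    rcases eq_or_ne x x' with rfl | hx
    · rcases Affine.Point.eq_or_eq_neg_of_xRep_eq_xRep
          (P := .some x y h) (Q := .some x y' h') (by simp) with hP | hP
      · rw [hP, sub_self]
        exact symProd_twistX_add_self _
      · rw [hP, neg_add_cancel, ← neg_add', twistX_neg, twistX_neg, symProd_comm]
        exact symProd_twistX_add_self _
    · exact symProd_twistX_add_sub_of_X_ne h h' hx

/-- The discriminant of `x³ + ax² + bx + c`. -/
def cubicDisc (a b c : ℤ) : ℤ :=
  a ^ 2 * b ^ 2 - 4 * b ^ 3 - 4 * a ^ 3 * c - 27 * c ^ 2 + 18 * a * b * c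

theorem DistinctRoots.cubicDisc_ne_zero (hf : DistinctRoots a b c) : cubicDisc a b c ≠ 0 := by
  obtain ⟨r, s, t, hrs, hrt, hst, h⟩ := hf
  have h0 := h 0
  have h1 := h 1
  have h2 := h (-1)
  have hc : (c : ℂ) = -(r * s * t) := by linear_combination h0
  have ha : (a : ℂ) = -(r + s + t) := by linear_combination (h1 + h2) / 2 - h0
  have hb : (b : ℂ) = r * s + s * t + r * t := by linear_combination (h1 - h2) / 2
  have hdisc : (cubicDisc a b c : ℂ) = ((r - s) * (r - t) * (s - t)) ^ 2 := by
    rw [cubicDisc]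
    push_cast
    rw [ha, hb, hc]
    ring
  have hne : (cubicDisc a b c : ℂ) ≠ 0 := by
    rw [hdisc]
    simp [sub_eq_zero, hrs, hrt, hst]
  exact_mod_cast hne

theorem DistinctRoots.isElliptic_twist_one (hf : DistinctRoots a b c) :
    (twist a b c 1).IsElliptic := by
  have hΔ : (twist a b c 1).Δ = 16 * (cubicDisc a b c : ℚ) := by
    simp only [twist, WeierstrassCurve.Δ, WeierstrassCurve.b₂, WeierstrassCurve.b₄,
      WeierstrassCurve.b₆, WeierstrassCurve.b₈, cubicDisc]
    push_cast
    ring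
  rw [isElliptic_iff, isUnit_iff_ne_zero, hΔ]
  exact mul_ne_zero (by norm_num) (mod_cast hf.cubicDisc_ne_zero)

/-- The logarithmic naive height of the `x`-coordinate on `Dy² = f(x)`. -/
noncomputable def xHeight (P : (twist a b c D).Point) : ℝ := logHeight (twistX P)

theorem xHeight_nonneg (P : (twist a b c D).Point) : 0 ≤ xHeight P := logHeight_nonneg _

theorem exists_abs_logHeight_symProd_sub_le : ∃ C : ℝ, ∀ p q : Fin 2 → ℚ, p ≠ 0 → q ≠ 0 →
    |logHeight (symProd p q) - (logHeight p + logHeight q)| ≤ C := by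
  obtain ⟨C, hC⟩ := Height.abs_logHeight_sym2_sub_le ℚ
  refine ⟨C, fun p q hp hq => ?_⟩
  have hp_eq : ![p 0, p 1] = p := by ext i; fin_cases i <;> rfl
  have hq_eq : ![q 0, q 1] = q := by ext i; fin_cases i <;> rfl
  have := hC (a := p 0) (b := p 1) (c := q 0) (d := q 1) (by rwa [hp_eq]) (by rwa [hq_eq])
  rwa [hp_eq, hq_eq] at this

/-- The constant does not depend on `D`, because `addSubTriple` does not. -/
theorem DistinctRoots.exists_abs_xHeight_parallelogram_le (hf : DistinctRoots a b c) :
    ∃ C : ℝ, ∀ D : ℤ, D ≠ 0 → ∀ P Q : (twist a b c D).Point,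
      |xHeight (P + Q) + xHeight (P - Q) - 2 * xHeight P - 2 * xHeight Q| ≤ C := by
  have := hf.isElliptic_twist_one
  obtain ⟨C₁, hC₁⟩ := abs_logHeight_addSubMap_sub_two_mul_logHeight_le (twist a b c 1)
  obtain ⟨C₂, hC₂⟩ := exists_abs_logHeight_symProd_sub_le
  refine ⟨C₁ + 3 * C₂, fun D hD P Q => ?_⟩
  obtain ⟨κ, hκ, h⟩ := symProd_twistX_add_sub P Q
  have hsum := hC₂ _ _ (twistX_ne_zero hD (P + Q)) (twistX_ne_zero hD (P - Q))
  have hpair := hC₂ _ _ (twistX_ne_zero hD P) (twistX_ne_zero hD Q)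
  have hmap := hC₁ (symProd (twistX P) (twistX Q))
  rw [eval_addSubMap_twist_one] at hmap
  rw [h, logHeight_smul_eq_logHeight _ hκ] at hsum
  simp only [xHeight]
  rw [abs_le] at *
  constructor <;> linarith

end XCoordinate

/-! ### Quadratic functions and canonical heights -/

/-- A nonnegative function on an abelian group that satisfies the parallelogram law; the canonical
height is one. -/
structure IsNonnegQuadratic {G : Type*} [AddCommGroup G] (q : G → ℝ) : Prop where
  nonneg (P : G) : 0 ≤ q P
  parallelogram (P Q : G) : q (P + Q) + q (P - Q) = 2 * q P + 2 * q Q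

/-- The sequence `h(2ⁿP) / 4ⁿ` whose limit is the canonical height attached to `h`. -/
noncomputable def tateSeq {G : Type*} [AddCommGroup G] (h : G → ℝ) (P : G) (n : ℕ) : ℝ :=
  h (2 ^ n • P) / 4 ^ n

section TateLimit

variable {G : Type*} [AddCommGroup G] {h : G → ℝ} {C : ℝ}

theorem abs_map_add_self_sub_four_mul_le
    (hC : ∀ P Q, |h (P + Q) + h (P - Q) - 2 * h P - 2 * h Q| ≤ C) (P : G) :
    |h (P + P) - 4 * h P| ≤ 3 / 2 * C := by
  have hzero := hC 0 0
  have hPP := hC P P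
  rw [add_zero, sub_zero] at hzero
  rw [sub_self] at hPP
  rw [abs_le] at *
  constructor <;> linarith

theorem dist_tateSeq_succ_le
    (hC : ∀ P Q, |h (P + Q) + h (P - Q) - 2 * h P - 2 * h Q| ≤ C) (P : G) (n : ℕ) :
    dist (tateSeq h P n) (tateSeq h P (n + 1)) ≤ 3 / 8 * C * (1 / 4) ^ n := by
  have hdouble := abs_map_add_self_sub_four_mul_le hC (2 ^ n • P)
  rw [← two_nsmul, smul_smul, ← pow_succ'] at hdouble
  have hdiff : tateSeq h P n - tateSeq h P (n + 1) =
      -((h (2 ^ (n + 1) • P) - 4 * h (2 ^ n • P)) / 4 ^ (n + 1)) := by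
    rw [tateSeq, tateSeq]
    field_simp
    ring
  calc dist (tateSeq h P n) (tateSeq h P (n + 1))
      = |h (2 ^ (n + 1) • P) - 4 * h (2 ^ n • P)| / 4 ^ (n + 1) := by
        rw [Real.dist_eq, hdiff, abs_neg, abs_div,
          abs_of_pos (a := (4 : ℝ) ^ (n + 1)) (by positivity)]
    _ ≤ 3 / 2 * C / 4 ^ (n + 1) := by gcongr
    _ = 3 / 8 * C * (1 / 4) ^ n := by
        rw [div_pow, one_pow]
        field_simp
        ring

theorem tendsto_tateSeq_parallelogram
    (hC : ∀ P Q, |h (P + Q) + h (P - Q) - 2 * h P - 2 * h Q| ≤ C) (P Q : G) :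
    Filter.Tendsto (fun n => tateSeq h (P + Q) n + tateSeq h (P - Q) n -
      (2 * tateSeq h P n + 2 * tateSeq h Q n)) Filter.atTop (nhds 0) := by
  have hgeom : Filter.Tendsto (fun n : ℕ => C * (1 / 4 : ℝ) ^ n) Filter.atTop (nhds 0) := by
    simpa using (tendsto_pow_atTop_nhds_zero_of_lt_one (r := (1 / 4 : ℝ)) (by norm_num)
      (by norm_num)).const_mul C
  refine squeeze_zero_norm (fun n => ?_) hgeom
  have hdefect : tateSeq h (P + Q) n + tateSeq h (P - Q) n -
      (2 * tateSeq h P n + 2 * tateSeq h Q n) =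
      (h (2 ^ n • P + 2 ^ n • Q) + h (2 ^ n • P - 2 ^ n • Q) - 2 * h (2 ^ n • P) -
        2 * h (2 ^ n • Q)) * (1 / 4) ^ n := by
    simp only [tateSeq, nsmul_add, nsmul_sub]
    rw [div_pow, one_pow]
    field_simp
    ring
  rw [hdefect, Real.norm_eq_abs, abs_mul, abs_of_pos (by positivity : (0 : ℝ) < (1 / 4) ^ n)]
  gcongr
  exact hC _ _

theorem exists_isNonnegQuadratic_abs_sub_le (h0 : ∀ P, 0 ≤ h P)
    (hC : ∀ P Q, |h (P + Q) + h (P - Q) - 2 * h P - 2 * h Q| ≤ C) :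
    ∃ q : G → ℝ, IsNonnegQuadratic q ∧ ∀ P, |q P - h P| ≤ C := by
  have hC0 : 0 ≤ C := (abs_nonneg _).trans (hC 0 0)
  choose q hq using fun P => cauchySeq_tendsto_of_complete
    (cauchySeq_of_le_geometric (1 / 4) (3 / 8 * C) (by norm_num) (dist_tateSeq_succ_le hC P))
  refine ⟨q, ⟨fun P => ?_, fun P Q => ?_⟩, fun P => ?_⟩
  · exact ge_of_tendsto' (hq P) fun n => div_nonneg (h0 _) (by positivity)
  · have hlim := ((hq (P + Q)).add (hq (P - Q))).sub (((hq P).const_mul 2).add ((hq Q).const_mul 2))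
    linarith [tendsto_nhds_unique hlim (tendsto_tateSeq_parallelogram hC P Q)]
  · have hdist := dist_le_of_le_geometric_of_tendsto₀ (1 / 4) (3 / 8 * C) (by norm_num)
      (dist_tateSeq_succ_le hC P) (hq P)
    rw [dist_comm, Real.dist_eq, tateSeq, pow_zero, pow_zero, one_smul, div_one] at hdist
    refine hdist.trans ?_
    rw [div_le_iff₀ (by norm_num)]
    linarith

end TateLimit

theorem DistinctRoots.exists_canonicalHeight {a b c : ℤ} (hf : DistinctRoots a b c) :
    ∃ C : ℝ, 0 ≤ C ∧ ∀ D : ℤ, D ≠ 0 → ∃ q : (twist a b c D).Point → ℝ,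
      IsNonnegQuadratic q ∧ ∀ P, |q P - xHeight P| ≤ C := by
  obtain ⟨C, hC⟩ := hf.exists_abs_xHeight_parallelogram_le
  exact ⟨C, (abs_nonneg _).trans (hC 1 one_ne_zero 0 0), fun D hD =>
    exists_isNonnegQuadratic_abs_sub_le xHeight_nonneg (hC D hD)⟩

namespace IsNonnegQuadratic

variable {G : Type*} [AddCommGroup G] {q : G → ℝ}

theorem map_zero (hq : IsNonnegQuadratic q) : q 0 = 0 := by
  have := hq.parallelogram 0 0
  rw [add_zero, sub_zero] at this
  linarith

theorem map_neg (hq : IsNonnegQuadratic q) (P : G) : q (-P) = q P := by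
  have := hq.parallelogram 0 P
  rw [zero_add, zero_sub, hq.map_zero] at this
  linarith

theorem map_nsmul (hq : IsNonnegQuadratic q) (n : ℕ) (P : G) : q (n • P) = n ^ 2 * q P := by
  induction n using Nat.twoStepInduction with
  | zero => simp [hq.map_zero]
  | one => simp
  | more n ihn ihn1 =>
    have := hq.parallelogram ((n + 1) • P) P
    rw [← succ_nsmul, succ_nsmul P n, add_sub_cancel_right, ← succ_nsmul P n, ihn, ihn1] at this
    push_cast at *
    linarith

theorem map_zsmul (hq : IsNonnegQuadratic q) (n : ℤ) (P : G) : q (n • P) = n ^ 2 * q P := by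
  obtain ⟨m, rfl | rfl⟩ := n.eq_nat_or_neg
  · simpa using hq.map_nsmul m P
  · simpa [hq.map_neg] using hq.map_nsmul m P

theorem map_add_le (hq : IsNonnegQuadratic q) (P Q : G) : q (P + Q) ≤ 2 * q P + 2 * q Q := by
  linarith [hq.parallelogram P Q, hq.nonneg (P - Q)]

theorem map_sub_le (hq : IsNonnegQuadratic q) (P Q : G) : q (P - Q) ≤ 2 * q P + 2 * q Q := by
  linarith [hq.parallelogram P Q, hq.nonneg (P + Q)]

theorem map_sum_le (hq : IsNonnegQuadratic q) {ι : Type*} (s : Finset ι) (x : ι → G) :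
    q (∑ i ∈ s, x i) ≤ 2 ^ s.card * ∑ i ∈ s, q (x i) := by
  classical
  induction s using Finset.induction_on with
  | empty => simp [hq.map_zero]
  | insert i s hi ih =>
    have hpow : (1 : ℝ) ≤ 2 ^ s.card := one_le_pow₀ one_le_two
    have hi0 := hq.nonneg (x i)
    rw [Finset.sum_insert hi, Finset.sum_insert hi, Finset.card_insert_of_notMem hi]
    calc q (x i + ∑ i ∈ s, x i)
        ≤ 2 * q (x i) + 2 * (2 ^ s.card * ∑ i ∈ s, q (x i)) := by
          linarith [hq.map_add_le (x i) (∑ i ∈ s, x i)]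
      _ ≤ 2 * (2 ^ s.card * q (x i)) + 2 * (2 ^ s.card * ∑ i ∈ s, q (x i)) := by
          linarith [le_mul_of_one_le_left hi0 hpow]
      _ = 2 ^ (s.card + 1) * (q (x i) + ∑ i ∈ s, q (x i)) := by ring

/-- The equality case of Cauchy–Schwarz for the bilinear form polarizing `q`. -/
theorem sq_polar_eq_of_zsmul_add_zsmul_eq_zero (hq : IsNonnegQuadratic q) {P Q : G} {m n : ℤ}
    (hmn : m • P + n • Q = 0) (hne : m ≠ 0 ∨ n ≠ 0) :
    (q (P + Q) - q P - q Q) ^ 2 = 4 * q P * q Q := by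
  wlog hn : n ≠ 0 generalizing P Q m n
  · have hm : m ≠ 0 := hne.resolve_right hn
    have := this (P := Q) (Q := P) (by rw [add_comm, hmn]) (Or.inr hm) hm
    rw [add_comm P Q]
    linarith
  have hnQ : n • Q = -(m • P) := eq_neg_of_add_eq_zero_right hmn
  have hqQ : (n : ℝ) ^ 2 * q Q = m ^ 2 * q P := by
    rw [← hq.map_zsmul, hnQ, hq.map_neg, hq.map_zsmul]
  have hqPQ : (n : ℝ) ^ 2 * q (P + Q) = (n - m) ^ 2 * q P := by
    rw [← hq.map_zsmul, smul_add, hnQ, ← sub_eq_add_neg, ← sub_smul, hq.map_zsmul]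
    push_cast
    rfl
  have hpolar : (n : ℝ) ^ 2 * (q (P + Q) - q P - q Q) = -2 * m * n * q P := by
    linear_combination hqPQ - hqQ
  have hn' : (n : ℝ) ^ 4 ≠ 0 := pow_ne_zero _ (mod_cast hn)
  refine mul_left_cancel₀ hn' ?_
  linear_combination (n ^ 2 * (q (P + Q) - q P - q Q) - 2 * m * n * q P) * hpolar -
    4 * n ^ 2 * q P * hqQ

/-- The subgroup on which a nonnegative quadratic function vanishes; for the canonical height, the
torsion subgroup. -/
def ker (hq : IsNonnegQuadratic q) : Submodule ℤ G where
  carrier := {P | q P = 0}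
  zero_mem' := hq.map_zero
  add_mem' {P Q} (hP : q P = 0) (hQ : q Q = 0) :=
    le_antisymm (by linarith [hq.map_add_le P Q]) (hq.nonneg _)
  smul_mem' n P (hP : q P = 0) := by
    rw [Set.mem_ofPred_eq, hq.map_zsmul, hP, mul_zero]

theorem mem_ker (hq : IsNonnegQuadratic q) {P : G} : P ∈ hq.ker ↔ q P = 0 := Iff.rfl

theorem isTorsionFree_quotient_ker (hq : IsNonnegQuadratic q) :
    Module.IsTorsionFree ℤ (G ⧸ hq.ker) := by
  refine Module.IsTorsionFree.of_smul_eq_zero fun m x hx => ?_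
  obtain ⟨P, rfl⟩ := hq.ker.mkQ_surjective x
  rw [← map_smul, Submodule.mkQ_apply, Submodule.Quotient.mk_eq_zero, hq.mem_ker,
    hq.map_zsmul] at hx
  rw [Submodule.mkQ_apply, Submodule.Quotient.mk_eq_zero, hq.mem_ker]
  simpa using hx

end IsNonnegQuadratic

section Counting

theorem exists_coloring_zmod_of_free (M : Type*) [AddCommGroup M] [Module.Free ℤ M]
    [Module.Finite ℤ M] (n : ℕ) :
    ∃ f : M → Fin (Module.finrank ℤ M) → ZMod n,
      ∀ x y, f x = f y → ∃ w : M, x - y = (n : ℤ) • w := by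
  let e := Module.finBasis ℤ M
  refine ⟨fun x i => ((e.repr x i : ℤ) : ZMod n), fun x y hxy => ?_⟩
  have hdvd (i) : (n : ℤ) ∣ e.repr x i - e.repr y i := by
    rw [← ZMod.intCast_zmod_eq_zero_iff_dvd, Int.cast_sub]
    exact sub_eq_zero.2 (congrFun hxy i)
  choose z hz using hdvd
  refine ⟨∑ i, z i • e i, e.repr.injective ?_⟩
  ext i
  rw [map_sub, Finsupp.sub_apply, hz, map_smul, Finsupp.smul_apply, e.repr_sum_self, smul_eq_mul]

variable {G : Type*} [AddCommGroup G] {q : G → ℝ} {μ B : ℝ}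

theorem IsNonnegQuadratic.eq_zero_of_sub_zsmul_mem_ker (hq : IsNonnegQuadratic q)
    (hμ : ∀ P, q P < μ → q P = 0) {x y w : G} {n : ℤ} (hx : q x ≤ B) (hy : q y ≤ B)
    (hn : 8 * B < n ^ 2 * μ) (hw : x - y - n • w ∈ hq.ker) : q (x - y) = 0 := by
  rw [hq.mem_ker] at hw
  have hnw : (n : ℝ) ^ 2 * q w ≤ 8 * B := by
    have := hq.map_sub_le (x - y) (x - y - n • w)
    rw [sub_sub_cancel, hq.map_zsmul, hw] at this
    linarith [hq.map_sub_le x y]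
  have hqw : q w = 0 := hμ w (lt_of_mul_lt_mul_left (hnw.trans_lt hn) (sq_nonneg _))
  have := hq.map_add_le (x - y - n • w) (n • w)
  rw [sub_add_cancel, hw, hq.map_zsmul, hqw] at this
  exact le_antisymm (by linarith) (hq.nonneg _)

theorem card_le_mul_card_of_sub_mem {Z : Set G} {K : ℕ}
    (hK : ∀ T : Finset G, (∀ P ∈ T, P ∈ Z) → T.card ≤ K) {S : Finset G} {γ : Type*} [Fintype γ]
    (f : S → γ) (hf : ∀ x y : S, f x = f y → (x : G) - y ∈ Z) : S.card ≤ K * Fintype.card γ := by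
  classical
  rw [← S.card_attach]
  refine Finset.card_le_mul_card_image_of_maps_to (f := f) (fun _ _ => Finset.mem_univ _) K ?_
  rintro β -
  obtain hempty | ⟨y, hy⟩ := (S.attach.filter (f · = β)).eq_empty_or_nonempty
  · simp [hempty]
  rw [← Finset.card_image_of_injective (f := fun x : S => (x : G) - y) _
    fun x x' h => Subtype.ext (sub_left_injective h)]
  refine hK _ fun P hP => ?_
  obtain ⟨x, hx, rfl⟩ := Finset.mem_image.1 hP
  exact hf x y ((Finset.mem_filter.1 hx).2.trans (Finset.mem_filter.1 hy).2.symm)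

/-- Modulo `ker q` the points of `S` span a free group of rank at most `r`, and two points
congruent modulo `n` in it have the same image, since `n²μ` exceeds `q` of their difference. -/
theorem IsNonnegQuadratic.card_le_mul_pow (hq : IsNonnegQuadratic q)
    (hμ : ∀ P, q P < μ → q P = 0) {K : ℕ}
    (hK : ∀ S : Finset G, (∀ P ∈ S, q P = 0) → S.card ≤ K) {r : ℕ} (hr : Module.rank ℤ G ≤ r)
    {S : Finset G} (hS : ∀ P ∈ S, q P ≤ B) {n : ℕ} (hn0 : 0 < n) (hn : 8 * B < n ^ 2 * μ) :
    S.card ≤ K * n ^ r := by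
  let M : Submodule ℤ (G ⧸ hq.ker) := Submodule.span ℤ (hq.ker.mkQ '' (S : Set G))
  have : Module.Finite ℤ M := Module.Finite.span_of_finite ℤ (S.finite_toSet.image _)
  have := hq.isTorsionFree_quotient_ker
  have hfree : Module.Free ℤ M := inferInstance
  have hrank : Module.finrank ℤ M ≤ r :=
    Module.finrank_le_of_rank_le ((Submodule.rank_le M).trans ((rank_quotient_le _).trans hr))
  have : NeZero n := ⟨hn0.ne'⟩
  obtain ⟨color, hcolor⟩ := exists_coloring_zmod_of_free M n
  have hmem (x : S) : hq.ker.mkQ x ∈ M := Submodule.subset_span ⟨x, x.2, rfl⟩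
  let f : S → Fin (Module.finrank ℤ M) → ZMod n := fun x => color ⟨hq.ker.mkQ x, hmem x⟩
  have hfiber (x y : S) (hxy : f x = f y) : q (x - y) = 0 := by
    obtain ⟨w, hw⟩ := hcolor _ _ hxy
    obtain ⟨w', hw'⟩ := hq.ker.mkQ_surjective (w : G ⧸ hq.ker)
    refine hq.eq_zero_of_sub_zsmul_mem_ker hμ (hS x x.2) (hS y y.2) (n := n) (w := w')
      (by exact_mod_cast hn) ?_
    rw [← Submodule.Quotient.mk_eq_zero, ← Submodule.mkQ_apply, map_sub, map_sub, map_smul, hw',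
      sub_eq_zero]
    exact congrArg Subtype.val hw
  refine (card_le_mul_card_of_sub_mem (Z := {P | q P = 0}) hK f hfiber).trans ?_
  rw [Fintype.card_fun, ZMod.card, Fintype.card_fin]
  gcongr

end Counting

/-! ### Points of the twists as coprime pairs `(u, v)` -/

section CoprimePairs

open WeierstrassCurve Height

theorem exists_gcd_eq_one_eq_smul {p : Fin 2 → ℚ} (hp : p ≠ 0) :
    ∃ u v : ℤ, Int.gcd u v = 1 ∧ ∃ κ : ℚ, κ ≠ 0 ∧ p = κ • ![(u : ℚ), (v : ℚ)] := by
  rcases eq_or_ne (p 1) 0 with h1 | h1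
  · refine ⟨1, 0, by simp, p 0, fun h0 => hp ?_, ?_⟩ <;> ext i <;> fin_cases i <;> simp [*]
  · set r := p 0 / p 1 with hr
    have hden : (r.den : ℚ) ≠ 0 := mod_cast r.den_ne_zero
    refine ⟨r.num, r.den, r.reduced, p 1 / r.den, div_ne_zero h1 hden, ?_⟩
    ext i
    fin_cases i
    · change p 0 = p 1 / r.den * r.num
      rw [div_mul_eq_mul_div, mul_div_assoc, r.num_div_den, hr, mul_div_cancel₀ _ h1]
    · exact (div_mul_cancel₀ _ hden).symm

theorem logHeight_vec_of_gcd_eq_one {u v : ℤ} (h : Int.gcd u v = 1) :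
    logHeight ![(u : ℚ), (v : ℚ)] = Real.log (max |(u : ℝ)| |(v : ℝ)|) := by
  have hgcd : (Finset.univ : Finset (Fin 2)).gcd ![u, v] = 1 := by
    have hdvd := Int.dvd_coe_gcd (Finset.gcd_dvd (f := ![u, v]) (Finset.mem_univ (0 : Fin 2)))
      (Finset.gcd_dvd (f := ![u, v]) (Finset.mem_univ (1 : Fin 2)))
    rw [← Finset.normalize_gcd, normalize_eq_one]
    exact isUnit_iff_dvd_one.2 (hdvd.trans (by simp [h]))
  have hsup : (⨆ i, |(![u, v] : Fin 2 → ℤ) i|) = max |u| |v| := by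
    rw [← Finset.sup'_univ_eq_ciSup]
    simp [Fin.univ_succ]
  have hcast : (Int.cast ∘ ![u, v] : Fin 2 → ℚ) = ![(u : ℚ), (v : ℚ)] := by
    ext i
    fin_cases i <;> rfl
  rw [← hcast, Rat.logHeight_eq_max_abs_of_gcd_eq_one hgcd, hsup]
  push_cast
  rfl

theorem eq_or_eq_neg_of_mul_eq_mul_of_gcd_eq_one {u v u' v' : ℤ} (h : Int.gcd u v = 1)
    (h' : Int.gcd u' v' = 1) (hd : u * v' = u' * v) :
    (u' = u ∧ v' = v) ∨ (u' = -u ∧ v' = -v) := by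
  rw [← Int.isCoprime_iff_gcd_eq_one] at h h'
  obtain ⟨x, y, hxy⟩ := h
  obtain ⟨x', y', hxy'⟩ := h'
  obtain ⟨k, hk⟩ : ∃ k, k = x * u' + y * v' := ⟨_, rfl⟩
  have hu' : u' = k * u := by linear_combination (-u') * hxy - y * hd - u * hk
  have hv' : v' = k * v := by linear_combination (-v') * hxy + x * hd - v * hk
  have hunit : IsUnit k := isUnit_iff_dvd_one.2
    ⟨x' * u + y' * v, by rw [← hxy']; linear_combination x' * hu' + y' * hv'⟩
  rcases Int.isUnit_iff.1 hunit with rfl | rfl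
  · exact Or.inl ⟨by simpa using hu', by simpa using hv'⟩
  · exact Or.inr ⟨by simpa using hu', by simpa using hv'⟩

variable {a b c D : ℤ} {P Q : (twist a b c D).Point} {u v u' v' : ℤ}

/-- `(u, v)` are coprime homogeneous coordinates of the `x`-coordinate of `P` on `Dy² = f(x)`. -/
def IsXRep (P : (twist a b c D).Point) (u v : ℤ) : Prop :=
  Int.gcd u v = 1 ∧ ∃ κ : ℚ, κ ≠ 0 ∧ twistX P = κ • ![(u : ℚ), (v : ℚ)]

/-- The numerator of the duplication formula `x(2P) = dupNum(u, v) / 4F(u, v)` for `x(P) = u/v`. -/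
def dupNum (a b c u v : ℤ) : ℤ :=
  u ^ 4 - 2 * b * u ^ 2 * v ^ 2 - 8 * c * u * v ^ 3 - (4 * a * c - b ^ 2) * v ^ 4

theorem twistX_eq_smul_iff {κ p r : ℚ} :
    twistX P = κ • ![p, r] ↔ P.xRep 0 = κ * p ∧ D * P.xRep 1 = κ * r := by
  rw [twistX, Matrix.smul_vec2, smul_eq_mul, smul_eq_mul]
  simp

theorem exists_isXRep (hD : D ≠ 0) (P : (twist a b c D).Point) : ∃ u v, IsXRep P u v :=
  exists_gcd_eq_one_eq_smul (twistX_ne_zero hD P)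

theorem exists_isXRep_of_Fbin_eq (hD : D ≠ 0) (hΨ : (u, v) ∈ Psi a b c) {m : ℚ}
    (hm : (Fbin a b c u v : ℚ) = D * m ^ 2) : ∃ P : (twist a b c D).Point, IsXRep P u v := by
  obtain ⟨hgcd, hF⟩ : Int.gcd u v = 1 ∧ Fbin a b c u v ≠ 0 := hΨ
  have hD' : (D : ℚ) ≠ 0 := mod_cast hD
  have hv : (v : ℚ) ≠ 0 := by
    rintro h
    exact hF (by rw [Fbin, Int.cast_eq_zero.1 h, zero_mul])
  have hm0 : m ≠ 0 := by
    rintro rfl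
    exact hF (by simpa using hm)
  have hns : (twist a b c D).Nonsingular (D * u / v) (D ^ 2 * m / v ^ 2) := by
    rw [Affine.nonsingular_iff, Affine.equation_iff]
    refine ⟨?_, Or.inr ?_⟩ <;> dsimp only [twist]
    · rw [Fbin] at hm
      push_cast at hm
      field_simp
      linear_combination (-D : ℚ) * hm
    · rw [zero_mul, sub_zero, sub_zero, ne_eq, self_eq_neg]
      positivity
  refine ⟨.some _ _ hns, hgcd, D / v, by positivity, twistX_eq_smul_iff.2 ⟨?_, ?_⟩⟩
  · simp only [Affine.Point.xRep_some, Matrix.cons_val_zero]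
    ring
  · simp [hv]

namespace IsXRep

theorem neg (h : IsXRep P u v) : IsXRep P (-u) (-v) := by
  obtain ⟨hgcd, κ, hκ, hP⟩ := h
  refine ⟨by rwa [Int.gcd_neg, Int.neg_gcd], -κ, neg_ne_zero.2 hκ, ?_⟩
  rw [twistX_eq_smul_iff] at hP ⊢
  push_cast
  rwa [neg_mul_neg, neg_mul_neg]

theorem xHeight_eq (h : IsXRep P u v) : xHeight P = Real.log (max |(u : ℝ)| |(v : ℝ)|) := by
  obtain ⟨hgcd, κ, hκ, hP⟩ := h
  rw [xHeight, hP, logHeight_smul_eq_logHeight _ hκ, logHeight_vec_of_gcd_eq_one hgcd]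

theorem ht_eq (h : IsXRep P u v) : ht u v = max 1 (xHeight P) := by
  rw [h.xHeight_eq, ht]
  rcases eq_or_ne u 0 with rfl | hu
  · simp [← max_assoc]
  rcases eq_or_ne v 0 with rfl | hv
  · simp [max_comm _ (0 : ℝ), ← max_assoc]
  have hu' : 0 < |(u : ℝ)| := abs_pos.2 (mod_cast hu)
  have hv' : 0 < |(v : ℝ)| := abs_pos.2 (mod_cast hv)
  rcases le_total |(u : ℝ)| |(v : ℝ)| with h | h
  · rw [max_eq_right h, max_eq_right (Real.log_le_log hu' h)]
  · rw [max_eq_left h, max_eq_left (Real.log_le_log hv' h)]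

theorem eq_zero_iff (hD : D ≠ 0) (h : IsXRep P u v) : P = 0 ↔ v = 0 := by
  obtain ⟨-, κ, hκ, hP⟩ := h
  have hv := (twistX_eq_smul_iff.1 hP).2
  cases P with
  | zero => simpa [← Affine.Point.zero_def, hκ, eq_comm] using hv
  | some x y h =>
    have hv0 : v ≠ 0 := by
      rintro rfl
      simp [hD] at hv
    simp [hv0]

theorem exists_Fbin_eq (hD : D ≠ 0) (h : IsXRep P u v) :
    ∃ m : ℚ, (Fbin a b c u v : ℚ) = D * m ^ 2 := by
  have hD' : (D : ℚ) ≠ 0 := mod_cast hD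
  have hzero := (h.eq_zero_iff hD).1
  obtain ⟨-, κ, hκ, hP⟩ := h
  rw [twistX_eq_smul_iff] at hP
  obtain ⟨h0, h1⟩ := hP
  cases P with
  | zero => exact ⟨0, by simp [Fbin, hzero rfl]⟩
  | some x y h =>
    have heq := sq_eq_of_nonsingular_twist h
    simp only [Affine.Point.xRep_some, Matrix.cons_val_zero, Matrix.cons_val_one, mul_one] at h0 h1
    refine ⟨y / κ ^ 2, ?_⟩
    have hu : (u : ℚ) = x / κ := eq_div_of_mul_eq hκ (by rw [h0, mul_comm])
    have hv : (v : ℚ) = D / κ := eq_div_of_mul_eq hκ (by rw [h1, mul_comm])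
    rw [Fbin]
    push_cast
    rw [hu, hv]
    field_simp
    linear_combination (-1 : ℚ) * heq

theorem eq_or_eq_neg (hD : D ≠ 0) (h : IsXRep P u v) (h' : IsXRep Q u v) : P = Q ∨ P = -Q := by
  rcases eq_or_ne v 0 with hv | hv
  · exact Or.inl (((h.eq_zero_iff hD).2 hv).trans ((h'.eq_zero_iff hD).2 hv).symm)
  have hP0 := mt (h.eq_zero_iff hD).1 hv
  have hQ0 := mt (h'.eq_zero_iff hD).1 hv
  obtain ⟨-, κ, -, hP⟩ := h
  obtain ⟨-, κ', -, hQ⟩ := h'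
  rw [twistX_eq_smul_iff] at hP hQ
  cases P with
  | zero => exact absurd rfl hP0
  | some x y hxy =>
  cases Q with
  | zero => exact absurd rfl hQ0
  | some x' y' hxy' =>
  simp only [Affine.Point.xRep_some, Matrix.cons_val_zero, Matrix.cons_val_one, mul_one] at hP hQ
  have hκκ' : κ = κ' := mul_right_cancel₀ (Int.cast_ne_zero.2 hv) (hP.2.symm.trans hQ.2)
  exact Affine.Point.X_eq_iff.1 (by rw [hP.1, hQ.1, hκκ'])

theorem exists_twistX_add_self_eq (hP : IsXRep P u v) :
    ∃ κ : ℚ, κ ≠ 0 ∧ twistX (P + P) = κ • ![(dupNum a b c u v : ℚ), (4 * Fbin a b c u v : ℚ)] := by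
  obtain ⟨-, κ, hκ, hP⟩ := hP
  obtain ⟨μ, hμ, hdup⟩ := symProd_twistX_add_self P
  rw [hP, twistX_zero] at hdup
  have hdup0 := congrFun hdup 0
  have hdup1 := congrFun hdup 1
  simp only [symProd, addSubTriple, Matrix.cons_val_zero, Matrix.cons_val_one, Matrix.cons_val,
    Pi.smul_apply, smul_eq_mul, mul_zero, mul_one, zero_add] at hdup0 hdup1
  refine ⟨μ * κ ^ 4, mul_ne_zero hμ (pow_ne_zero 4 hκ), ?_⟩
  ext i
  fin_cases i
  · change twistX (P + P) 0 = μ * κ ^ 4 * dupNum a b c u v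
    rw [hdup0, dupNum]
    push_cast
    ring
  · change twistX (P + P) 1 = μ * κ ^ 4 * (4 * Fbin a b c u v)
    rw [hdup1, Fbin]
    push_cast
    ring

theorem eq_or_eq_neg_coords (h : IsXRep P u v) (h' : IsXRep P u' v') :
    (u' = u ∧ v' = v) ∨ (u' = -u ∧ v' = -v) := by
  obtain ⟨hgcd, κ, hκ, hP⟩ := h
  obtain ⟨hgcd', κ', hκ', hP'⟩ := h'
  rw [twistX_eq_smul_iff] at hP hP'
  refine eq_or_eq_neg_of_mul_eq_mul_of_gcd_eq_one hgcd hgcd' ?_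
  have hcross : (u : ℚ) * v' = u' * v := by
    refine mul_left_cancel₀ (mul_ne_zero hκ hκ') ?_
    linear_combination κ' * v' * (hP'.1 - hP.1) - κ' * u' * (hP'.2 - hP.2)
  exact_mod_cast hcross

end IsXRep

end CoprimePairs

/-! ### A lower bound for `|F|` in terms of the duplicated point -/

section DuplicationBound

open WeierstrassCurve

theorem exists_mul_norm_pow_le_of_homogeneous {E : Type*} [NormedAddCommGroup E] [NormedSpace ℝ E]
    [ProperSpace E] {g : E → ℝ} {n : ℕ} (hn : n ≠ 0) (hg : Continuous g)
    (hpos : ∀ x ≠ 0, 0 < g x) (hhom : ∀ (t : ℝ) (x : E), g (t • x) = |t| ^ n * g x) :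
    ∃ e > 0, ∀ x, e * ‖x‖ ^ n ≤ g x := by
  have hzero : g 0 = 0 := by simpa [hn] using hhom 0 0
  rcases subsingleton_or_nontrivial E with hE | hE
  · exact ⟨1, one_pos, fun x => by simp [Subsingleton.elim x 0, hzero, hn]⟩
  obtain ⟨y, hy, hmin⟩ := (isCompact_sphere (0 : E) 1).exists_isMinOn
    (NormedSpace.sphere_nonempty.2 zero_le_one) hg.continuousOn
  refine ⟨g y, hpos y (ne_zero_of_mem_unit_sphere ⟨y, hy⟩), fun x => ?_⟩
  rcases eq_or_ne x 0 with rfl | hx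
  · simp [hzero, hn]
  have hle : g y ≤ g (‖x‖⁻¹ • x) := hmin (by simp [norm_smul, hx])
  rw [hhom, abs_inv, abs_norm, inv_pow, ← div_eq_inv_mul] at hle
  exact (le_div_iff₀ (pow_pos (norm_pos_iff.2 hx) n)).1 hle

variable {a b c : ℤ}

theorem DistinctRoots.eq_zero_of_dupNum_of_Fbin_eq_zero (hf : DistinctRoots a b c) {u v : ℝ}
    (hN : u ^ 4 - 2 * b * u ^ 2 * v ^ 2 - 8 * c * u * v ^ 3 - (4 * a * c - b ^ 2) * v ^ 4 = 0)
    (hF : v * (u ^ 3 + a * u ^ 2 * v + b * u * v ^ 2 + c * v ^ 3) = 0) : u = 0 ∧ v = 0 := by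
  rcases mul_eq_zero.1 hF with rfl | hcubic
  · simpa using hN
  have hderiv : 3 * u ^ 2 + 2 * a * u * v + b * v ^ 2 = 0 := by
    refine pow_eq_zero_iff two_ne_zero |>.1 ?_
    linear_combination hN + (8 * u + 4 * a * v) * hcubic
  have hdisc : (cubicDisc a b c : ℝ) * v ^ 4 = 0 := by
    rw [cubicDisc]
    push_cast
    linear_combination
      (18 * (b - a ^ 2 / 3) * (u + a * v / 3) - 27 * (c - a * b / 3 + 2 * a ^ 3 / 27) * v) * hcubic
      - (6 * (b - a ^ 2 / 3) * (u + a * v / 3) ^ 2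
        - 9 * (c - a * b / 3 + 2 * a ^ 3 / 27) * (u + a * v / 3) * v
        + 4 * (b - a ^ 2 / 3) ^ 2 * v ^ 2) * hderiv
  have hv : v = 0 := by simpa [hf.cubicDisc_ne_zero] using hdisc
  subst hv
  simpa using hN

theorem DistinctRoots.exists_mul_max_pow_le_abs_dupNum_add (hf : DistinctRoots a b c) :
    ∃ e > 0, ∀ u v : ℤ, e * max |(u : ℝ)| |(v : ℝ)| ^ 4 ≤
      |(dupNum a b c u v : ℝ)| + |(Fbin a b c u v : ℝ)| := by
  let g (p : ℝ × ℝ) : ℝ :=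
    |p.1 ^ 4 - 2 * b * p.1 ^ 2 * p.2 ^ 2 - 8 * c * p.1 * p.2 ^ 3 - (4 * a * c - b ^ 2) * p.2 ^ 4|
      + |p.2 * (p.1 ^ 3 + a * p.1 ^ 2 * p.2 + b * p.1 * p.2 ^ 2 + c * p.2 ^ 3)|
  have hpos (p : ℝ × ℝ) (hp : p ≠ 0) : 0 < g p := by
    refine lt_of_le_of_ne (by positivity) fun h => hp ?_
    rw [eq_comm, add_eq_zero_iff_of_nonneg (abs_nonneg _) (abs_nonneg _), abs_eq_zero,
      abs_eq_zero] at h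
    exact Prod.ext_iff.2 (hf.eq_zero_of_dupNum_of_Fbin_eq_zero h.1 h.2)
  have hhom (t : ℝ) (p : ℝ × ℝ) : g (t • p) = |t| ^ 4 * g p := by
    rw [mul_add, ← abs_pow, ← abs_mul, ← abs_mul]
    simp only [g, Prod.smul_fst, Prod.smul_snd, smul_eq_mul]
    congr 2 <;> ring
  obtain ⟨e, he, hle⟩ :=
    exists_mul_norm_pow_le_of_homogeneous four_ne_zero (by fun_prop) hpos hhom
  refine ⟨e, he, fun u v => ?_⟩
  simpa [g, dupNum, Fbin, Prod.norm_def] using hle (u, v)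

variable {D : ℤ}

/-- The affine `x`-coordinate of `Q` on `Dy² = f(x)` exists and is at most `M` in absolute value. -/
def XBounded (M : ℚ) (Q : (twist a b c D).Point) : Prop :=
  |twistX Q 0| ≤ M * |twistX Q 1|

theorem DistinctRoots.exists_mul_max_pow_le_abs_Fbin (hf : DistinctRoots a b c) {M : ℚ}
    (hM : 0 < M) : ∃ e > 0, ∀ (D : ℤ) (P : (twist a b c D).Point), XBounded M (P + P) →
      ∀ u v, IsXRep P u v →
        (u, v) ∈ Psi a b c ∧ e * max |(u : ℝ)| |(v : ℝ)| ^ 4 ≤ |(Fbin a b c u v : ℝ)| := by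
  obtain ⟨e, he, hle⟩ := hf.exists_mul_max_pow_le_abs_dupNum_add
  have : (0 : ℝ) < M := mod_cast hM
  refine ⟨e / (4 * M + 1), by positivity, fun D P hP u v hr => ?_⟩
  obtain ⟨κ, hκ, hdup⟩ := hr.exists_twistX_add_self_eq
  have hN : |(dupNum a b c u v : ℝ)| ≤ 4 * M * |(Fbin a b c u v : ℝ)| := by
    have hscaled : |κ| * |(dupNum a b c u v : ℚ)| ≤ |κ| * (4 * M * |(Fbin a b c u v : ℚ)|) := by
      rw [XBounded, hdup] at hP
      calc |κ| * |(dupNum a b c u v : ℚ)| = |κ * dupNum a b c u v| := (abs_mul _ _).symm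
        _ ≤ M * |κ * (4 * Fbin a b c u v)| := hP
        _ = |κ| * (4 * M * |(Fbin a b c u v : ℚ)|) := by
          rw [abs_mul, abs_mul, abs_of_pos (four_pos (α := ℚ))]
          ring
    exact_mod_cast le_of_mul_le_mul_left hscaled (abs_pos.2 hκ)
  have hF : e / (4 * M + 1) * max |(u : ℝ)| |(v : ℝ)| ^ 4 ≤ |(Fbin a b c u v : ℝ)| := by
    rw [div_mul_eq_mul_div, div_le_iff₀ (by positivity)]
    linarith [hle u v]
  refine ⟨⟨hr.1, fun h0 => ?_⟩, hF⟩
  have hmax : 0 < max |(u : ℝ)| |(v : ℝ)| := by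
    by_contra! h
    obtain ⟨hu, hv⟩ := max_le_iff.1 h
    have hgcd := hr.1
    simp_all
  have hpos : 0 < e / (4 * M + 1) * max |(u : ℝ)| |(v : ℝ)| ^ 4 := by positivity
  dsimp only at h0
  rw [h0, Int.cast_zero, abs_zero] at hF
  exact hpos.not_ge hF

theorem eventually_addSubTriple_bounds (a b c : ℤ) (r : ℚ) :
    ∀ᶠ z in nhds (0 : ℚ), 1 / 2 < addSubTriple a b c ![r, 1 + z * r, z] 2 ∧
      |addSubTriple a b c ![r, 1 + z * r, z] 1| < |2 * r| + r ^ 2 + 1 ∧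
      |addSubTriple a b c ![r, 1 + z * r, z] 0| < |2 * r| + r ^ 2 + 1 := by
  have hcont (i : Fin 3) : Continuous fun z => addSubTriple a b c ![r, 1 + z * r, z] i := by
    fin_cases i <;> simp only [addSubTriple, Fin.zero_eta, Fin.mk_one, Fin.reduceFinMk,
      Matrix.cons_val_zero, Matrix.cons_val_one, Matrix.cons_val] <;> fun_prop
  refine ((hcont 2).tendsto 0).eventually (lt_mem_nhds ?_) |>.and
    (((hcont 1).abs.tendsto 0).eventually (gt_mem_nhds ?_) |>.and
      (((hcont 0).abs.tendsto 0).eventually (gt_mem_nhds ?_)))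
  · simp only [addSubTriple, Matrix.cons_val]
    norm_num
  · simp only [addSubTriple, Matrix.cons_val_one, Matrix.cons_val]
    ring_nf
    nlinarith [sq_nonneg r]
  · simp only [addSubTriple, Matrix.cons_val_zero, Matrix.cons_val_one, Matrix.cons_val]
    ring_nf
    rw [abs_of_nonneg (sq_nonneg r)]
    linarith [abs_nonneg (r * 2)]

theorem abs_le_of_quadratic_eq {A₀ A₁ A₂ X Y K : ℚ} (h₂ : 1 / 2 ≤ A₂) (h₁ : |A₁| ≤ K)
    (h₀ : |A₀| ≤ K) (h : A₂ * X ^ 2 = A₁ * X * Y - A₀ * Y ^ 2) : |X| ≤ (4 * K + 1) * |Y| := by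
  have hK : 0 ≤ K := (abs_nonneg _).trans h₁
  have hquad : 1 / 2 * |X| ^ 2 ≤ K * |X| * |Y| + K * |Y| ^ 2 := by
    calc 1 / 2 * |X| ^ 2 ≤ A₂ * |X| ^ 2 := by gcongr
      _ = A₁ * X * Y - A₀ * Y ^ 2 := by rw [sq_abs, h]
      _ ≤ |A₁ * X * Y| + |A₀ * Y ^ 2| := (le_abs_self _).trans (abs_sub _ _)
      _ = |A₁| * |X| * |Y| + |A₀| * |Y| ^ 2 := by rw [abs_mul, abs_mul, abs_mul, abs_pow]
      _ ≤ K * |X| * |Y| + K * |Y| ^ 2 := by gcongr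
  by_contra! hlt
  have hYX : |Y| ≤ |X| := by nlinarith [abs_nonneg Y]
  have hX : 0 < |X| := lt_of_le_of_lt (by positivity) hlt
  nlinarith [abs_nonneg Y, mul_pos hX (sub_pos.2 hlt), mul_nonneg hX.le (abs_nonneg Y),
    mul_nonneg (mul_nonneg hK (abs_nonneg Y)) (sub_nonneg.2 hYX)]

theorem quadratic_eq_of_symProd_eq_smul {p q : Fin 2 → ℚ} {κ : ℚ} {A : Fin 3 → ℚ} (hκ : κ ≠ 0)
    (hA : A 2 ≠ 0) (h : symProd p q = κ • A) :
    A 2 * p 0 ^ 2 = A 1 * p 0 * p 1 - A 0 * p 1 ^ 2 := by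
  have h0 : p 0 * q 0 = κ * A 0 := congrFun h 0
  have h1 : p 0 * q 1 + p 1 * q 0 = κ * A 1 := congrFun h 1
  have h2 : p 1 * q 1 = κ * A 2 := congrFun h 2
  have hq1 : q 1 ≠ 0 := right_ne_zero_of_mul (h2.trans_ne (mul_ne_zero hκ hA))
  refine mul_left_cancel₀ (mul_ne_zero hκ hq1) ?_
  linear_combination (-p 0 ^ 2 * q 1) * h2 + (p 0 * p 1 * q 1) * h1 - p 1 ^ 2 * q 1 * h0

theorem addSubTriple_smul (a b c : ℤ) (t : ℚ) (x : Fin 3 → ℚ) :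
    addSubTriple a b c (t • x) = t ^ 2 • addSubTriple a b c x := by
  rw [addSubTriple, addSubTriple, Matrix.smul_vec3]
  refine Matrix.vec3_eq ?_ ?_ ?_ <;> simp only [Pi.smul_apply, smul_eq_mul] <;> ring

theorem symProd_smul_vec_one {p : Fin 2 → ℚ} (hp : p 0 ≠ 0) (ρ r : ℚ) :
    symProd p (ρ • ![r, 1]) = (p 0 * ρ) • ![r, 1 + p 1 / p 0 * r, p 1 / p 0] := by
  rw [symProd, Matrix.smul_vec2, Matrix.smul_vec3]
  refine Matrix.vec3_eq ?_ ?_ ?_ <;>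
    simp only [Matrix.cons_val_zero, Matrix.cons_val_one, smul_eq_mul] <;> field_simp

/- If `x(Q)` is large then `Q` is close to `0`, hence `Q + R` is close to `R`. -/
theorem exists_xBounded_or_xBounded_add (hD : D ≠ 0) {R : (twist a b c D).Point} (hR : R ≠ 0) :
    ∃ M : ℚ, 0 < M ∧ ∀ Q, XBounded M Q ∨ XBounded M (Q + R) := by
  have hD' : (D : ℚ) ≠ 0 := mod_cast hD
  obtain ⟨r, ρ, hρ, hr⟩ : ∃ r ρ : ℚ, ρ ≠ 0 ∧ twistX R = ρ • ![r, 1] := by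
    cases R with
    | zero => exact absurd rfl hR
    | some x y h =>
      exact ⟨x / D, D, hD', by rw [twistX_some, Matrix.smul_vec2, smul_eq_mul, smul_eq_mul,
        mul_div_cancel₀ _ hD', mul_one]⟩
  obtain ⟨δ, hδ, hA⟩ :=
    (nhds_basis_abs_sub_lt (0 : ℚ)).eventually_iff.1 (eventually_addSubTriple_bounds a b c r)
  set K : ℚ := |2 * r| + r ^ 2 + 1
  have hK : 0 < K := by positivity
  refine ⟨δ⁻¹ + (4 * K + 1), by positivity, fun Q => or_iff_not_imp_left.2 fun hQ => ?_⟩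
  rw [XBounded, not_le] at hQ
  have hQ0 : 0 < |twistX Q 0| := lt_of_le_of_lt (by positivity) hQ
  have hz : |twistX Q 1 / twistX Q 0 - 0| < δ := by
    rw [sub_zero, abs_div, div_lt_iff₀ hQ0, ← inv_mul_lt_iff₀ hδ]
    refine lt_of_le_of_lt ?_ hQ
    gcongr
    linarith
  obtain ⟨h2, h1, h0⟩ := hA hz
  obtain ⟨κ, hκ, hpar⟩ := symProd_twistX_add_sub Q R
  rw [hr, symProd_smul_vec_one (abs_pos.1 hQ0), addSubTriple_smul, smul_smul] at hpar
  have hκ' := mul_ne_zero hκ (pow_ne_zero 2 (mul_ne_zero (abs_pos.1 hQ0) hρ))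
  have hquad := quadratic_eq_of_symProd_eq_smul hκ' (by linarith) hpar
  calc |twistX (Q + R) 0| ≤ (4 * K + 1) * |twistX (Q + R) 1| :=
        abs_le_of_quadratic_eq h2.le h1.le h0.le hquad
    _ ≤ (δ⁻¹ + (4 * K + 1)) * |twistX (Q + R) 1| :=
        mul_le_mul_of_nonneg_right (le_add_of_nonneg_left (inv_pos.2 hδ).le) (abs_nonneg _)

end DuplicationBound

/-! ### Short vectors of the lattices `L_{α,d,d'}` -/

section ShortVectors

theorem exists_coprime_sq_dvd_of_sq_dvd_mul {x y : ℤ} (hxy : IsCoprime x y) {t : ℕ}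
    (h : (t : ℤ) ^ 2 ∣ x * y) :
    ∃ d d' : ℕ, Nat.Coprime d d' ∧ d * d' = t ∧ (d' : ℤ) ^ 2 ∣ x ∧ (d : ℤ) ^ 2 ∣ y := by
  have hxy' : Nat.Coprime x.natAbs y.natAbs := Int.isCoprime_iff_gcd_eq_one.1 hxy
  have hdvd : t ^ 2 ∣ x.natAbs * y.natAbs := by
    simpa [Int.natAbs_pow, Int.natAbs_mul] using Int.natAbs_dvd_natAbs.2 h
  have hmul : Nat.gcd (t ^ 2) x.natAbs * Nat.gcd (t ^ 2) y.natAbs = t ^ 2 := by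
    rw [← Nat.Coprime.gcd_mul _ hxy', Nat.gcd_eq_left hdvd]
  have hcop : Nat.Coprime (Nat.gcd (t ^ 2) x.natAbs) (Nat.gcd (t ^ 2) y.natAbs) :=
    hxy'.of_dvd (Nat.gcd_dvd_right _ _) (Nat.gcd_dvd_right _ _)
  obtain ⟨d', hd'⟩ := exists_eq_pow_of_mul_eq_pow (Nat.isUnit_iff.2 hcop) hmul
  obtain ⟨d, hd⟩ :=
    exists_eq_pow_of_mul_eq_pow (Nat.isUnit_iff.2 hcop.symm) ((mul_comm _ _).trans hmul)
  rw [hd, hd'] at hcop hmul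
  refine ⟨d, d', ?_, Nat.pow_left_injective two_ne_zero ?_, ?_, ?_⟩
  · exact ((Nat.coprime_pow_left_iff two_pos _ _).1
      ((Nat.coprime_pow_right_iff two_pos _ _).1 hcop)).symm
  · calc (d * d') ^ 2 = d' ^ 2 * d ^ 2 := by ring
      _ = t ^ 2 := hmul
  · rw [← Int.natCast_pow, ← hd', Int.natCast_dvd]
    exact Nat.gcd_dvd_right _ _
  · rw [← Int.natCast_pow, ← hd, Int.natCast_dvd]
    exact Nat.gcd_dvd_right _ _

theorem isCoprime_right_cubicForm {u v : ℤ} (h : IsCoprime u v) (a b c : ℤ) :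
    IsCoprime v (u ^ 3 + a * u ^ 2 * v + b * u * v ^ 2 + c * v ^ 3) := by
  have hform : u ^ 3 + a * u ^ 2 * v + b * u * v ^ 2 + c * v ^ 3 =
      u ^ 3 + v * (a * u ^ 2 + b * u * v + c * v ^ 2) := by ring
  rw [hform]
  exact IsCoprime.add_mul_left_right h.symm.pow_right _

variable {a b c u v : ℤ} {d d' : ℕ}

theorem exists_mem_OmegaSet_of_sq_dvd
    (hdvd : (d : ℤ) ^ 2 ∣ u ^ 3 + a * u ^ 2 * v + b * u * v ^ 2 + c * v ^ 3)
    (hcop : IsCoprime v ((d : ℤ) ^ 2)) :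
    ∃ α ∈ OmegaSet a b c d, (u : ZMod (d ^ 2)) = α * v := by
  obtain ⟨x, y, hxy⟩ := hcop
  have hd : (d : ZMod (d ^ 2)) ^ 2 = 0 := mod_cast ZMod.natCast_self (d ^ 2)
  have hinv : (x : ZMod (d ^ 2)) * v = 1 := by
    simpa [hd] using congrArg (Int.cast : ℤ → ZMod (d ^ 2)) hxy
  have hcubic : (u : ZMod (d ^ 2)) ^ 3 + a * u ^ 2 * v + b * u * v ^ 2 + c * v ^ 3 = 0 := by
    exact_mod_cast (ZMod.intCast_zmod_eq_zero_iff_dvd _ (d ^ 2)).2 (mod_cast hdvd)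
  refine ⟨u * x, ?_, by rw [mul_assoc, hinv, mul_one]⟩
  rw [OmegaSet, Set.mem_ofPred_eq]
  linear_combination (x : ZMod (d ^ 2)) ^ 3 * hcubic - (a * (u : ZMod (d ^ 2)) ^ 2 * x ^ 2 +
    b * u * x * (x * v + 1) + c * ((x : ZMod (d ^ 2)) ^ 2 * v ^ 2 + x * v + 1)) * hinv

theorem exists_mem_latL_of_sq_dvd_Fbin (hgcd : Int.gcd u v = 1) {t : ℕ} (ht : 0 < t)
    (hdvd : (t : ℤ) ^ 2 ∣ Fbin a b c u v) :
    ∃ (d d' : ℕ) (α : ZMod (d ^ 2)), 0 < d ∧ 0 < d' ∧ Nat.Coprime d d' ∧ d * d' = t ∧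
      α ∈ OmegaSet a b c d ∧ (u, v) ∈ latL d d' α := by
  have hcop := isCoprime_right_cubicForm (Int.isCoprime_iff_gcd_eq_one.2 hgcd) a b c
  obtain ⟨d, d', hdd, rfl, hd'v, hd⟩ := exists_coprime_sq_dvd_of_sq_dvd_mul hcop hdvd
  obtain ⟨α, hα, hu⟩ := exists_mem_OmegaSet_of_sq_dvd hd (hcop.of_isCoprime_of_dvd_right hd)
  exact ⟨d, d', α, Nat.pos_of_mul_pos_right ht, Nat.pos_of_mul_pos_left ht, hdd, rfl, hα, hu, hd'v⟩

theorem sq_dvd_det_of_mem_latL (hdd : Nat.Coprime d d') {α : ZMod (d ^ 2)} {p q : ℤ × ℤ}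
    (hp : p ∈ latL d d' α) (hq : q ∈ latL d d' α) :
    ((d * d' : ℕ) : ℤ) ^ 2 ∣ p.1 * q.2 - q.1 * p.2 := by
  have hdvd : (d : ℤ) ^ 2 ∣ p.1 * q.2 - q.1 * p.2 := by
    refine mod_cast (ZMod.intCast_zmod_eq_zero_iff_dvd (p.1 * q.2 - q.1 * p.2) (d ^ 2)).1 ?_
    push_cast
    rw [hp.1, hq.1]
    ring
  have hdvd' : (d' : ℤ) ^ 2 ∣ p.1 * q.2 - q.1 * p.2 := dvd_sub (hq.2.mul_left _) (hp.2.mul_left _)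
  rw [Nat.cast_mul, mul_pow]
  exact (Nat.isCoprime_iff_coprime.2 hdd).pow.mul_dvd hdvd hdvd'

/- Two vectors of `L_{α,d,d'}` span a lattice of determinant divisible by `(dd')²`, so they are
parallel when both are shorter than `dd'`. -/
theorem IsShortestChoice.eq_or_eq_neg {ω : (d d' : ℕ) → ZMod (d ^ 2) → ℤ × ℤ}
    (hω : IsShortestChoice a b c ω) (hd : 0 < d) (hd' : 0 < d') (hdd : Nat.Coprime d d')
    {α : ZMod (d ^ 2)} (hα : α ∈ OmegaSet a b c d) (hgcd : Int.gcd u v = 1)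
    (hL : (u, v) ∈ latL d d' α) (hlt : u ^ 2 + v ^ 2 < ((d * d' : ℕ) : ℤ) ^ 2) :
    ω d d' α = (u, v) ∨ ω d d' α = (-u, -v) := by
  obtain ⟨hmem, hω0, hmin⟩ := hω d d' hd hd' hdd α hα
  have hne : ((u, v) : ℤ × ℤ) ≠ 0 := by
    rintro h
    obtain ⟨rfl, rfl⟩ := Prod.mk_eq_zero.1 h
    simp at hgcd
  have hle := hmin (u, v) hL hne
  have hdvd := sq_dvd_det_of_mem_latL hdd hmem hL
  generalize ω d d' α = w at *
  obtain ⟨x, y⟩ := w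
  dsimp only at hle hdvd
  have hdet : x * v - u * y = 0 := by
    refine Int.eq_zero_of_abs_lt_dvd hdvd (lt_of_le_of_lt ?_ hlt)
    refine abs_le_of_sq_le_sq ?_ (by positivity)
    nlinarith [sq_nonneg (x * u + y * v), sq_nonneg u, sq_nonneg v]
  obtain ⟨p, q, hpq⟩ := Int.isCoprime_iff_gcd_eq_one.2 hgcd
  obtain ⟨k, hk⟩ : ∃ k, k = p * x + q * y := ⟨_, rfl⟩
  have hx : x = k * u := by linear_combination (-x) * hpq + q * hdet - u * hk
  have hy : y = k * v := by linear_combination (-y) * hpq - p * hdet - v * hk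
  have hk0 : k ≠ 0 := by
    rintro rfl
    exact hω0 (by rw [hx, hy, zero_mul, zero_mul, Prod.mk_zero_zero])
  have hpos : 0 < u ^ 2 + v ^ 2 := by
    rcases not_and_or.1 (mt Prod.mk_eq_zero.2 hne) with h | h <;> positivity
  have hk1 : k ^ 2 ≤ 1 := by
    rw [hx, hy] at hle
    exact le_of_mul_le_mul_right (by linarith) hpos
  have hk1' : 1 ≤ k ^ 2 := (one_le_sq_iff_one_le_abs k).2 (Int.one_le_abs hk0)
  rcases sq_eq_one_iff.1 (le_antisymm hk1 hk1') with rfl | rfl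
  · exact Or.inl (by rw [hx, hy, one_mul, one_mul])
  · exact Or.inr (by rw [hx, hy, neg_one_mul, neg_one_mul])

end ShortVectors

/-! ### Northcott's theorem and `Q_E ⟹` rank bound -/

section Northcott

variable {a b c D : ℤ}

theorem exists_card_le_of_xHeight_le (a b c : ℤ) (X : ℝ) : ∃ K : ℕ, ∀ D : ℤ, D ≠ 0 →
    ∀ S : Finset (twist a b c D).Point, (∀ P ∈ S, xHeight P ≤ X) → S.card ≤ K := by
  classical
  set N : ℤ := ⌈Real.exp X⌉
  refine ⟨2 * (Finset.Icc (-N) N ×ˢ Finset.Icc (-N) N).card, fun D hD S hS => ?_⟩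
  choose u v huv using exists_isXRep (a := a) (b := b) (c := c) hD
  have hfiber : ∀ p ∈ S.image fun P => (u P, v P), {P ∈ S | (u P, v P) = p}.card ≤ 2 := by
    intro p hp
    obtain ⟨Q, -, rfl⟩ := Finset.mem_image.1 hp
    refine (Finset.card_le_card (t := {Q, -Q}) fun P hP => ?_).trans Finset.card_le_two
    obtain ⟨hu, hv⟩ := Prod.mk.injEq _ _ _ _ ▸ (Finset.mem_filter.1 hP).2
    rw [Finset.mem_insert, Finset.mem_singleton]
    have hPrep := huv P
    rw [hu, hv] at hPrep
    exact hPrep.eq_or_eq_neg hD (huv Q)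
  refine (Finset.card_le_mul_card_image S 2 hfiber).trans
    (Nat.mul_le_mul_left _ (Finset.card_le_card fun p hp => ?_))
  obtain ⟨P, hP, rfl⟩ := Finset.mem_image.1 hp
  have hmax : max |(u P : ℝ)| |(v P : ℝ)| ≤ N :=
    calc max |(u P : ℝ)| |(v P : ℝ)| ≤ Real.exp (Real.log (max |(u P : ℝ)| |(v P : ℝ)|)) :=
          Real.le_exp_log _
      _ ≤ Real.exp X := Real.exp_le_exp.2 ((huv P).xHeight_eq ▸ hS P hP)
      _ ≤ N := Int.le_ceil _
  obtain ⟨hu, hv⟩ := max_le_iff.1 hmax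
  rw [Finset.mem_product, Finset.mem_Icc, Finset.mem_Icc]
  exact ⟨abs_le.1 (mod_cast hu), abs_le.1 (mod_cast hv)⟩

theorem finite_setOf_xHeight_le (hD : D ≠ 0) (X : ℝ) :
    {P : (twist a b c D).Point | xHeight P ≤ X}.Finite := by
  obtain ⟨K, hK⟩ := exists_card_le_of_xHeight_le a b c X
  by_contra hinf
  obtain ⟨S, hS, hcard⟩ := Set.Infinite.exists_subset_card_eq hinf (K + 1)
  have := hK D hD S fun P hP => hS hP
  omega

end Northcott

section LowerBoundQ

variable {a b c u v D : ℤ} {ω : (d d' : ℕ) → ZMod (d ^ 2) → ℤ × ℤ} {j k : ℝ}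

theorem exists_sq_dvd_of_intCast_eq_mul_sq {n D : ℤ} (hn : n ≠ 0) {m : ℚ}
    (h : (n : ℚ) = D * m ^ 2) : ∃ t : ℕ, 0 < t ∧ (t : ℤ) ^ 2 ∣ n ∧ |n| ≤ |D| * (t : ℤ) ^ 2 := by
  have heq := intCast_eq_mul_ratCast_sq_iff.1 h
  have hcop : IsCoprime (m.num ^ 2) ((m.den : ℤ) ^ 2) :=
    (Int.isCoprime_iff_nat_coprime.2 m.reduced).pow
  refine ⟨m.num.natAbs, Int.natAbs_pos.2 fun h0 => hn ?_, ?_, ?_⟩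
  · rw [Rat.num_eq_zero.1 h0] at h
    simpa using h
  · rw [Int.natAbs_sq]
    exact hcop.dvd_of_dvd_mul_right ⟨D, by rw [heq, mul_comm]⟩
  · rw [Int.natAbs_sq, ← abs_of_nonneg (sq_nonneg m.num), ← abs_mul, ← heq, abs_mul]
    refine le_mul_of_one_le_right (abs_nonneg _) (Int.one_le_abs (pow_ne_zero 2 ?_))
    exact mod_cast m.den_ne_zero

theorem Fbin_neg_neg (a b c u v : ℤ) : Fbin a b c (-u) (-v) = Fbin a b c u v := by
  rw [Fbin, Fbin]
  ring

theorem IsShortestChoice.exists_mem_QIdx_isXRep (hω : IsShortestChoice a b c ω)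
    {P : (twist a b c D).Point} (hP : IsXRep P u v) (hF : Fbin a b c u v ≠ 0) {t : ℕ} (ht : 0 < t)
    (hdvd : (t : ℤ) ^ 2 ∣ Fbin a b c u v) (hlt : u ^ 2 + v ^ 2 < (t : ℤ) ^ 2) :
    ∃ x ∈ QIdx a b c ω, x.1 * x.2.1 = t ∧
      IsXRep P (ω x.1 x.2.1 x.2.2).1 (ω x.1 x.2.1 x.2.2).2 ∧
      (ω x.1 x.2.1 x.2.2).1 ^ 2 + (ω x.1 x.2.1 x.2.2).2 ^ 2 = u ^ 2 + v ^ 2 := by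
  obtain ⟨d, d', α, hd, hd', hdd, rfl, hα, hL⟩ := exists_mem_latL_of_sq_dvd_Fbin hP.1 ht hdvd
  refine ⟨⟨d, d', α⟩, ⟨hd, hd', hdd, hα, ?_⟩, rfl, ?_⟩ <;>
    rcases hω.eq_or_eq_neg hd hd' hdd hα hP.1 hL hlt with h | h <;> dsimp only <;> rw [h]
  · exact ⟨hP.1, hF⟩
  · exact ⟨hP.neg.1, by rwa [Fbin_neg_neg]⟩
  · exact ⟨hP, rfl⟩
  · exact ⟨hP.neg, by rw [neg_sq, neg_sq]⟩

theorem max_one_log_le_of_sq_le {t C H : ℝ} (ht : 1 ≤ t) (hC : 1 ≤ C) (hH : 1 ≤ H)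
    (h : t ^ 2 ≤ C * H ^ 4) :
    max 1 (Real.log t) ≤ (4 + Real.log C) * (1 + Real.log H) := by
  have hlogC : 0 ≤ Real.log C := Real.log_nonneg hC
  have hlogH : 0 ≤ Real.log H := Real.log_nonneg hH
  refine max_le (by nlinarith) ?_
  calc Real.log t ≤ Real.log (C * H ^ 4) := Real.log_le_log (by positivity) (by nlinarith)
    _ = Real.log C + 4 * Real.log H := by
      rw [Real.log_mul (by positivity) (by positivity), Real.log_pow]
      norm_num
    _ ≤ (4 + Real.log C) * (1 + Real.log H) := by nlinarith

theorem le_QTerm_of_bounds {e s C H : ℝ} (he : 0 < e) (hs : 0 < s) (hC : 1 ≤ C) (hH : 1 ≤ H)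
    (hj : 0 ≤ j) (hk : 0 ≤ k) {x : Σ d : ℕ, ℕ × ZMod (d ^ 2)} {t : ℕ} (ht0 : 0 < t)
    (ht : x.1 * x.2.1 = t) (hlow : e * H ^ 4 ≤ s * (t : ℝ) ^ 2) (hup : (t : ℝ) ^ 2 ≤ C * H ^ 4)
    (hω0 : 0 < ((ω x.1 x.2.1 x.2.2).1 : ℝ) ^ 2 + ((ω x.1 x.2.1 x.2.2).2 : ℝ) ^ 2)
    (hω : ((ω x.1 x.2.1 x.2.2).1 : ℝ) ^ 2 + ((ω x.1 x.2.1 x.2.2).2 : ℝ) ^ 2 ≤ 2 * H ^ 2) :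
    (e / (16 * s)) ^ k * (4 + Real.log C) ^ (-j) * (1 + Real.log H) ^ (-j) ≤ QTerm j k ω x := by
  have ht1 : (1 : ℝ) ≤ t := mod_cast ht0
  have : 0 < H := by linarith
  have : 0 ≤ Real.log C := Real.log_nonneg hC
  have : 0 ≤ Real.log H := Real.log_nonneg hH
  have hpow : (e * H ^ 4 / s) ^ k ≤ (t : ℝ) ^ (2 * k) := by
    rw [Real.rpow_mul (by positivity), Real.rpow_two]
    refine Real.rpow_le_rpow (by positivity) ?_ hk
    rw [div_le_iff₀ hs]
    linarith
  have hlog : ((4 + Real.log C) * (1 + Real.log H)) ^ (-j) ≤ max 1 (Real.log t) ^ (-j) :=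
    Real.rpow_le_rpow_of_nonpos (by positivity) (max_one_log_le_of_sq_le ht1 hC hH hup)
      (by linarith)
  have hnorm : ((2 * H) ^ 4) ^ (-k) ≤
      Real.sqrt (((ω x.1 x.2.1 x.2.2).1 : ℝ) ^ 2 + ((ω x.1 x.2.1 x.2.2).2 : ℝ) ^ 2)
        ^ (-(4 * k)) := by
    rw [← Real.rpow_natCast, ← Real.rpow_mul (by positivity), Nat.cast_ofNat, mul_neg]
    refine Real.rpow_le_rpow_of_nonpos (Real.sqrt_pos.2 hω0) ?_ (by linarith)
    rw [Real.sqrt_le_left (by positivity)]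
    nlinarith
  have hcast : (x.1 : ℝ) * (x.2.1 : ℝ) = t := mod_cast ht
  rw [QTerm, hcast]
  calc (e / (16 * s)) ^ k * (4 + Real.log C) ^ (-j) * (1 + Real.log H) ^ (-j)
      = (e * H ^ 4 / s) ^ k * ((4 + Real.log C) * (1 + Real.log H)) ^ (-j) *
          ((2 * H) ^ 4) ^ (-k) := by
        have hsplit : e * H ^ 4 / s = e / (16 * s) * (2 * H) ^ 4 := by
          field_simp
          norm_num
        rw [Real.mul_rpow (x := 4 + Real.log C) (by positivity) (by positivity), hsplit,
          Real.mul_rpow (by positivity) (by positivity), Real.rpow_neg (x := (2 * H) ^ 4)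
          (by positivity)]
        field_simp
    _ ≤ _ := by gcongr

theorem max_abs_sq_le_sq_add_sq (x y : ℝ) : max |x| |y| ^ 2 ≤ x ^ 2 + y ^ 2 := by
  rcases max_choice |x| |y| with h | h <;> rw [h, sq_abs]
  · exact le_add_of_nonneg_right (sq_nonneg y)
  · exact le_add_of_nonneg_left (sq_nonneg x)

theorem sq_add_sq_le_two_mul_max_abs_sq (x y : ℝ) : x ^ 2 + y ^ 2 ≤ 2 * max |x| |y| ^ 2 := by
  rw [two_mul, ← sq_abs x, ← sq_abs y]
  gcongr
  exacts [le_max_left _ _, le_max_right _ _]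

theorem two_mul_sq_lt_sq_of_mul_pow_le {e s H t : ℝ} (he : 0 < e) (hs : 0 < s) (hH : 1 ≤ H)
    (hX : 2 * s / e + 1 ≤ H) (h : e * H ^ 4 ≤ s * t ^ 2) : 2 * H ^ 2 < t ^ 2 := by
  have heH : 2 * s < e * H := by
    have : 2 * s / e < H := by linarith
    rwa [div_lt_iff₀' he] at this
  refine lt_of_mul_lt_mul_left ?_ hs.le
  calc s * (2 * H ^ 2) = 2 * s * H ^ 2 := by ring
    _ < e * H * H ^ 2 := by gcongr
    _ ≤ e * H * H ^ 2 * H := le_mul_of_one_le_right (by positivity) hH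
    _ = e * H ^ 4 := by ring
    _ ≤ s * t ^ 2 := h

theorem IsXRep.exp_xHeight_eq {P : (twist a b c D).Point} (h : IsXRep P u v) :
    Real.exp (xHeight P) = max |(u : ℝ)| |(v : ℝ)| := by
  rw [h.xHeight_eq, Real.exp_log]
  by_contra! hle
  obtain ⟨hu, hv⟩ := max_le_iff.1 hle
  have hgcd := h.1
  simp_all

theorem DistinctRoots.exists_le_QTerm_of_xBounded (hf : DistinctRoots a b c)
    (hω : IsShortestChoice a b c ω) (hj : 0 ≤ j) (hk : 0 ≤ k) (hD : D ≠ 0) {M : ℚ} (hM : 0 < M) :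
    ∃ X κ : ℝ, 0 < κ ∧ ∀ P : (twist a b c D).Point, XBounded M (P + P) → X ≤ xHeight P →
      ∃ x ∈ QIdx a b c ω, IsXRep P (ω x.1 x.2.1 x.2.2).1 (ω x.1 x.2.1 x.2.2).2 ∧
        κ * (1 + xHeight P) ^ (-j) ≤ QTerm j k ω x := by
  obtain ⟨e, he, hlow⟩ := hf.exists_mul_max_pow_le_abs_Fbin hM
  obtain ⟨C, hC1, hup⟩ := exists_abs_Fbin_le_mul_pow a b c
  have hs : 0 < |(D : ℝ)| := abs_pos.2 (mod_cast hD)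
  have hlogC : 0 ≤ Real.log C := Real.log_nonneg hC1
  refine ⟨Real.log (2 * |(D : ℝ)| / e + 1), (e / (16 * |(D : ℝ)|)) ^ k * (4 + Real.log C) ^ (-j),
    by positivity, fun P hP hX => ?_⟩
  obtain ⟨u, v, hr⟩ := exists_isXRep hD P
  obtain ⟨⟨-, hF0⟩, hF⟩ := hlow D P hP u v hr
  obtain ⟨m, hm⟩ := hr.exists_Fbin_eq hD
  obtain ⟨t, ht0, hdvd, hFt⟩ := exists_sq_dvd_of_intCast_eq_mul_sq hF0 hm
  have htF : (t : ℝ) ^ 2 ≤ |(Fbin a b c u v : ℝ)| :=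
    mod_cast Int.le_of_dvd (abs_pos.2 hF0) ((dvd_abs _ _).2 hdvd)
  have hFt' : |(Fbin a b c u v : ℝ)| ≤ |(D : ℝ)| * (t : ℝ) ^ 2 := mod_cast hFt
  have hup' := hup u v _ (le_max_left _ _) (le_max_right _ _)
  have huv := sq_add_sq_le_two_mul_max_abs_sq (u : ℝ) v
  have huv' := max_abs_sq_le_sq_add_sq (u : ℝ) v
  have hxH : 1 + Real.log (max |(u : ℝ)| |(v : ℝ)|) = 1 + xHeight P := by rw [hr.xHeight_eq]
  rw [Real.log_le_iff_le_exp (by positivity), hr.exp_xHeight_eq] at hX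
  set H := max |(u : ℝ)| |(v : ℝ)|
  have hH1 : 1 ≤ H := le_trans (le_add_of_nonneg_left (by positivity)) hX
  have hHt := two_mul_sq_lt_sq_of_mul_pow_le he hs hH1 hX (hF.trans hFt')
  obtain ⟨x, hx, hxt, hxr, hnorm⟩ :=
    hω.exists_mem_QIdx_isXRep hr hF0 ht0 hdvd (mod_cast huv.trans_lt hHt)
  have hnorm' : ((ω x.1 x.2.1 x.2.2).1 : ℝ) ^ 2 + ((ω x.1 x.2.1 x.2.2).2 : ℝ) ^ 2 =
    (u : ℝ) ^ 2 + (v : ℝ) ^ 2 := mod_cast hnorm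
  have hpos : 0 < (u : ℝ) ^ 2 + (v : ℝ) ^ 2 := huv'.trans_lt' (by positivity)
  refine ⟨x, hx, hxr, hxH ▸ ?_⟩
  exact le_QTerm_of_bounds he hs hC1 hH1 hj hk ht0 hxt (hF.trans hFt') (htF.trans hup')
    (hnorm' ▸ hpos) (hnorm' ▸ huv)

end LowerBoundQ

section BoxDivergence

variable {ι : Type*} [Fintype ι]

theorem not_summable_of_mul_rpow_le_on_boxes [Nonempty ι] {g : (ι → ℕ) → ℝ} {κ s : ℝ} (hκ : 0 < κ)
    (hs : s ≤ Fintype.card ι)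
    (h : ∀ N : ℕ, 1 ≤ N → ∀ n : ι → ℕ, (∀ i, n i ∈ Finset.Ico N (2 * N)) →
      κ * (N : ℝ) ^ (-s) ≤ g n) : ¬ Summable g := by
  classical
  intro hsum
  obtain ⟨S, hS⟩ := summable_iff_vanishing_norm.1 hsum κ hκ
  obtain ⟨i₀⟩ := ‹Nonempty ι›
  set N := S.sup (fun n => n i₀) + 1
  have hN : (1 : ℝ) ≤ N := mod_cast Nat.le_add_left 1 _
  set box : Finset (ι → ℕ) := Fintype.piFinset fun _ => Finset.Ico N (2 * N)
  have hdisj : Disjoint box S := by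
    refine Finset.disjoint_left.2 fun n hn hnS => ?_
    have hle : n i₀ ≤ S.sup fun n => n i₀ := Finset.le_sup (f := fun n : ι → ℕ => n i₀) hnS
    have hge := (Finset.mem_Ico.1 (Fintype.mem_piFinset.1 hn i₀)).1
    omega
  have hcard : (box.card : ℝ) = (N : ℝ) ^ Fintype.card ι := by
    rw [Fintype.card_piFinset, Finset.prod_const, Finset.card_univ, Nat.card_Ico, two_mul,
      Nat.add_sub_cancel, Nat.cast_pow]
  have hpow : 1 ≤ (N : ℝ) ^ Fintype.card ι * (N : ℝ) ^ (-s) := by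
    rw [← Real.rpow_natCast, ← Real.rpow_add (by positivity)]
    exact Real.one_le_rpow hN (by linarith)
  refine (hS box hdisj).not_ge ?_
  calc κ ≤ κ * ((N : ℝ) ^ Fintype.card ι * (N : ℝ) ^ (-s)) := le_mul_of_one_le_right hκ.le hpow
    _ = box.card • (κ * (N : ℝ) ^ (-s)) := by rw [nsmul_eq_mul, hcard]; ring
    _ ≤ ∑ n ∈ box, g n := Finset.card_nsmul_le_sum _ _ _ fun n hn =>
        h N (Nat.le_add_left 1 _) n (Fintype.mem_piFinset.1 hn)
    _ ≤ ‖∑ n ∈ box, g n‖ := Real.le_norm_self _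

variable {G : Type*} [AddCommGroup G]

theorem exists_coeff_pred_add_self (P : ι → G) (i₀ : ι) {B : G → Prop}
    (hB : ∀ Q, B Q ∨ B (Q + (P i₀ + P i₀))) (n : ι → ℕ) :
    ∃ k : ι → ℤ, (∀ i, k i = 2 * n i + 1 ∨ k i = 2 * n i + 2) ∧
      B (∑ i, k i • P i + ∑ i, k i • P i) := by
  classical
  rcases hB (∑ i, (2 * n i + 1 : ℤ) • P i + ∑ i, (2 * n i + 1 : ℤ) • P i) with h | h
  · exact ⟨fun i => 2 * n i + 1, fun i => .inl rfl, h⟩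
  · refine ⟨(fun i => 2 * n i + 1 : ι → ℤ) + Pi.single i₀ 1, fun i => ?_, ?_⟩
    · rcases eq_or_ne i i₀ with rfl | hi
      · right
        rw [Pi.add_apply, Pi.single_eq_same]
        ring
      · left
        rw [Pi.add_apply, Pi.single_eq_of_ne hi, add_zero]
    · have hsum : ∑ i, ((fun i => 2 * (n i : ℤ) + 1) + Pi.single i₀ 1 : ι → ℤ) i • P i =
          ∑ i, (2 * n i + 1 : ℤ) • P i + P i₀ := by
        simp [add_smul, Finset.sum_add_distrib, Pi.single_apply, ite_smul]
      rw [hsum]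
      convert h using 1
      abel

theorem eq_of_sum_zsmul_eq_or_eq_neg [Nonempty ι] {P : ι → G} (hP : LinearIndependent ℤ P)
    {k k' : ι → ℤ} (hk : ∀ i, 0 < k i) (hk' : ∀ i, 0 < k' i)
    (h : ∑ i, k i • P i = ∑ i, k' i • P i ∨ ∑ i, k i • P i = -∑ i, k' i • P i) : k = k' := by
  rcases h with h | h
  · exact funext (Fintype.linearIndependent_iffₛ.1 hP k k' h)
  · obtain ⟨i₀⟩ := ‹Nonempty ι›
    have hneg := Fintype.linearIndependent_iffₛ.1 hP k (-k')
      (by simp only [h, Pi.neg_apply, neg_smul, Finset.sum_neg_distrib]) i₀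
    rw [Pi.neg_apply] at hneg
    linarith [hk i₀, hk' i₀]

theorem IsNonnegQuadratic.exists_map_sum_zsmul_le {q : G → ℝ} (hq : IsNonnegQuadratic q)
    (P : ι → G) : ∃ K : ℝ, 0 ≤ K ∧ ∀ (N : ℝ) (k : ι → ℤ), (∀ i, |(k i : ℝ)| ≤ N) →
      q (∑ i, k i • P i) ≤ K * N ^ 2 := by
  have hnonneg : 0 ≤ ∑ i, q (P i) := Finset.sum_nonneg fun i _ => hq.nonneg _
  refine ⟨2 ^ Fintype.card ι * ∑ i, q (P i), by positivity, fun N k hk => ?_⟩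
  calc q (∑ i, k i • P i) ≤ 2 ^ Fintype.card ι * ∑ i, q (k i • P i) := hq.map_sum_le _ _
    _ ≤ 2 ^ Fintype.card ι * ∑ i, N ^ 2 * q (P i) := by
      gcongr with i
      rw [hq.map_zsmul]
      exact mul_le_mul_of_nonneg_right (sq_le_sq' (abs_le.1 (hk i)).1 (abs_le.1 (hk i)).2)
        (hq.nonneg _)
    _ = 2 ^ Fintype.card ι * (∑ i, q (P i)) * N ^ 2 := by rw [← Finset.mul_sum]; ring

end BoxDivergence

section QConvRank

variable {a b c D : ℤ} {ω : (d d' : ℕ) → ZMod (d ^ 2) → ℤ × ℤ} {j k : ℝ}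

theorem QConv.summable_of_xBounded (hQ : QConv a b c j k ω) (hf : DistinctRoots a b c)
    (hω : IsShortestChoice a b c ω) (hj : 0 ≤ j) (hk : 0 ≤ k) (hD : D ≠ 0) {M : ℚ} (hM : 0 < M)
    {ι : Type*} {S : ι → (twist a b c D).Point}
    (hS : ∀ n n', S n = S n' ∨ S n = -S n' → n = n') (hbdd : ∀ n, XBounded M (S n + S n)) :
    Summable fun n => (1 + xHeight (S n)) ^ (-j) := by
  obtain ⟨X, κ, hκ, hlow⟩ := hf.exists_le_QTerm_of_xBounded hω hj hk hD hM
  have hfin : {n | xHeight (S n) ≤ X}.Finite :=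
    (finite_setOf_xHeight_le hD X).preimage fun n _ n' _ h => hS n n' (.inl h)
  have hex : ∀ n : ({n | xHeight (S n) ≤ X}ᶜ : Set ι), ∃ x : QIdx a b c ω,
      IsXRep (S n) (ω x.1.1 x.1.2.1 x.1.2.2).1 (ω x.1.1 x.1.2.1 x.1.2.2).2 ∧
        κ * (1 + xHeight (S n)) ^ (-j) ≤ QTerm j k ω x.1 := fun n =>
    have ⟨x, hx, hrep, hle⟩ := hlow (S n) (hbdd n) (not_le.1 (Set.notMem_ofPred_iff.1 n.2)).le
    ⟨⟨x, hx⟩, hrep, hle⟩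
  choose x hrep hle using hex
  have hinj : Function.Injective x := fun n n' h =>
    Subtype.ext (hS n n' ((hrep n).eq_or_eq_neg hD (h ▸ hrep n')))
  have hsum : Summable fun n : ({n | xHeight (S n) ≤ X}ᶜ : Set ι) =>
      κ * (1 + xHeight (S n)) ^ (-j) := by
    refine Summable.of_nonneg_of_le (fun n => ?_) hle (hQ.comp_injective hinj)
    have := xHeight_nonneg (S n)
    positivity
  exact (hfin.summable_compl_iff (f := fun n => (1 + xHeight (S n)) ^ (-j))).1
    ((summable_mul_left_iff hκ.ne').1 hsum)

/- Let `r = ⌈2j⌉`. For each `n ∈ [N, 2N)^r` one of two combinations with coefficients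
`≈ 2n` of `r` independent points has a double with bounded `x`-coordinate, so it contributes
`≫ N ^ (-2j)` to `Q`; and there are `N ^ r` such `n`. -/
theorem QConv.rankBound (hQ : QConv a b c j k ω) (hf : DistinctRoots a b c)
    (hω : IsShortestChoice a b c ω) (hj : 0 < j) (hk : 0 ≤ k) : RankBound a b c j := by
  rintro D hD ⟨P, hP⟩
  have hr : 0 < ⌈2 * j⌉₊ := Nat.ceil_pos.2 (by linarith)
  have : Nonempty (Fin ⌈2 * j⌉₊) := ⟨⟨0, hr⟩⟩
  set i₀ : Fin ⌈2 * j⌉₊ := ⟨0, hr⟩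
  have hR : P i₀ + P i₀ ≠ 0 := by
    rw [← two_zsmul]
    exact fun h => two_ne_zero (hP.smul_left_injective i₀ (h.trans (zero_smul ℤ (P i₀)).symm))
  obtain ⟨M, hM, hB⟩ := exists_xBounded_or_xBounded_add hD hR
  choose coeff hcoeff hbdd using exists_coeff_pred_add_self P i₀ hB
  have hpos : ∀ n i, 0 < coeff n i := fun n i => by rcases hcoeff n i with h | h <;> omega
  have hsum := hQ.summable_of_xBounded hf hω hj.le hk hD hM (fun n n' h => funext fun i => by
    have := congrFun (eq_of_sum_zsmul_eq_or_eq_neg hP (hpos n) (hpos n') h) i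
    rcases hcoeff n i with h | h <;> rcases hcoeff n' i with h' | h' <;> omega) hbdd
  obtain ⟨C, hC0, hC⟩ := hf.exists_canonicalHeight
  obtain ⟨q, hq, hqx⟩ := hC D hD
  obtain ⟨K, hK0, hK⟩ := hq.exists_map_sum_zsmul_le P
  refine not_summable_of_mul_rpow_le_on_boxes (κ := (1 + C + K * 16) ^ (-j)) (s := 2 * j)
    (by positivity) (by simpa using Nat.le_ceil (2 * j)) (fun N hN n hn => ?_) hsum
  have hheight : 1 + xHeight (∑ i, coeff n i • P i) ≤ (1 + C + K * 16) * (N : ℝ) ^ 2 := by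
    have hle := hK (4 * N) (coeff n) fun i => by
      have := Finset.mem_Ico.1 (hn i)
      rw [abs_of_pos (mod_cast hpos n i)]
      rcases hcoeff n i with h | h <;> rw [h] <;> norm_cast <;> omega
    have hN1 : (1 : ℝ) ≤ (N : ℝ) ^ 2 := one_le_pow₀ (mod_cast hN)
    nlinarith [(abs_le.1 (hqx (∑ i, coeff n i • P i))).1]
  calc (1 + C + K * 16) ^ (-j) * (N : ℝ) ^ (-(2 * j))
      = ((1 + C + K * 16) * (N : ℝ) ^ 2) ^ (-j) := by
        rw [Real.mul_rpow (by positivity) (by positivity), ← Real.rpow_two,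
          ← Real.rpow_mul (by positivity), mul_neg]
    _ ≤ _ := Real.rpow_le_rpow_of_nonpos (by linarith [xHeight_nonneg (∑ i, coeff n i • P i)])
        hheight (by linarith)

end QConvRank

/-! ### Lower bounds for canonical heights in a family of twists -/

section HeightGap

variable {a b c D u v : ℤ}

theorem IsXRep.add_self_eq_zero (hD : D ≠ 0) {P : (twist a b c D).Point} (h : IsXRep P u v)
    (h0 : Fbin a b c u v = 0) : P + P = 0 := by
  obtain ⟨κ, -, hdup⟩ := h.exists_twistX_add_self_eq
  have hsnd := congrFun hdup 1
  generalize P + P = Q at hsnd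
  cases Q with
  | zero => rfl
  | some x y hxy => simp [twistX_some, h0, hD] at hsnd

theorem exists_log_abs_le_add_mul_xHeight (a b c : ℤ) : ∃ L : ℝ, 0 ≤ L ∧ ∀ D : ℤ, Squarefree D →
    ∀ (P : (twist a b c D).Point) (u v : ℤ), IsXRep P u v → Fbin a b c u v ≠ 0 →
      Real.log |(D : ℝ)| ≤ L + 4 * xHeight P := by
  obtain ⟨C, hC1, hC⟩ := exists_abs_Fbin_le_mul_pow a b c
  refine ⟨Real.log C, Real.log_nonneg hC1, fun D hD P u v hP hF => ?_⟩
  obtain ⟨m, hm⟩ := hP.exists_Fbin_eq hD.ne_zero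
  obtain ⟨t, -, ht⟩ := exists_eq_mul_natCast_sq_of_squarefree hD hF hm
  have hDF : |(D : ℝ)| ≤ |(Fbin a b c u v : ℝ)| :=
    mod_cast Int.le_of_dvd (abs_pos.2 hF) ((abs_dvd_abs _ _).2 ⟨_, ht⟩)
  have hDpos : 0 < |(D : ℝ)| := abs_pos.2 (mod_cast hD.ne_zero)
  have hH : 0 < max |(u : ℝ)| |(v : ℝ)| := hP.exp_xHeight_eq ▸ Real.exp_pos _
  calc Real.log |(D : ℝ)| ≤ Real.log (C * max |(u : ℝ)| |(v : ℝ)| ^ 4) :=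
        Real.log_le_log hDpos (hDF.trans (hC u v _ (le_max_left _ _) (le_max_right _ _)))
    _ = Real.log C + 4 * xHeight P := by
        rw [Real.log_mul (by positivity) (by positivity), Real.log_pow, hP.xHeight_eq]
        norm_num

theorem IsNonnegQuadratic.one_div_sq_le_of_card_le {G : Type*} [AddCommGroup G] {q : G → ℝ}
    (hq : IsNonnegQuadratic q) {K : ℕ} (hK : ∀ S : Finset G, (∀ P ∈ S, q P ≤ 1) → S.card ≤ K)
    {P : G} (hP : q P ≠ 0) : 1 / ((K : ℝ) + 1) ^ 2 ≤ q P := by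
  classical
  by_contra! hlt
  have hinj : Function.Injective fun n : ℕ => n • P := fun n n' h => by
    have hqq := congrArg q h
    simp only [hq.map_nsmul] at hqq
    have hsq : (n : ℝ) ^ 2 = (n' : ℝ) ^ 2 := mul_right_cancel₀ hP hqq
    exact Nat.pow_left_injective two_ne_zero (mod_cast hsq)
  have hcard := hK ((Finset.range (K + 1)).image fun n => n • P) fun R hR => by
    obtain ⟨n, hn, rfl⟩ := Finset.mem_image.1 hR
    have hn' : (n : ℝ) ≤ (K : ℝ) + 1 := mod_cast (Finset.mem_range.1 hn).le
    rw [hq.map_nsmul]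
    calc (n : ℝ) ^ 2 * q P ≤ ((K : ℝ) + 1) ^ 2 * (1 / ((K : ℝ) + 1) ^ 2) := by
          gcongr
          exact hq.nonneg P
      _ = 1 := by field_simp
  rw [Finset.card_image_of_injective _ hinj, Finset.card_range] at hcard
  omega

/-- The size of a twisting parameter `D`, on the same scale as the height `ht`. -/
noncomputable def logSize (D : ℤ) : ℝ := max 1 (Real.log |(D : ℝ)|)

theorem one_le_logSize (D : ℤ) : 1 ≤ logSize D := le_max_left _ _

/- Northcott bounds the nonzero values of `q` below by an absolute constant, which is enough for
small `D`. For large `D`, a point with nonzero height has `D ∣ F(u, v)`, so `xHeight ≫ log |D|`. -/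
theorem DistinctRoots.exists_canonicalHeight_gap (hf : DistinctRoots a b c) :
    ∃ (C μ : ℝ) (K : ℕ), 0 ≤ C ∧ 0 < μ ∧ ∀ D : ℤ, Squarefree D →
      ∃ q : (twist a b c D).Point → ℝ, IsNonnegQuadratic q ∧ (∀ P, |q P - xHeight P| ≤ C) ∧
        (∀ S : Finset _, (∀ P ∈ S, q P = 0) → S.card ≤ K) ∧
        ∀ P, q P < μ * logSize D → q P = 0 := by
  obtain ⟨C, hC, hcan⟩ := hf.exists_canonicalHeight
  obtain ⟨K, hK⟩ := exists_card_le_of_xHeight_le a b c (1 + C)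
  obtain ⟨L, hL, hlog⟩ := exists_log_abs_le_add_mul_xHeight a b c
  obtain ⟨A, hA8, hA⟩ : ∃ A : ℝ, 8 ≤ A ∧ 8 * (L + 4 * C) ≤ A :=
    ⟨8 * (L + 4 * C + 1), by linarith, by linarith⟩
  refine ⟨C, min (1 / 8) (1 / ((K : ℝ) + 1) ^ 2 / A), K, hC, by positivity, fun D hD => ?_⟩
  obtain ⟨q, hq, hqx⟩ := hcan D hD.ne_zero
  have hcard : ∀ S : Finset _, (∀ P ∈ S, q P ≤ 1) → S.card ≤ K := fun S hS =>
    hK D hD.ne_zero S fun P hP => by linarith [abs_le.1 (hqx P), hS P hP]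
  refine ⟨q, hq, hqx, fun S hS => hcard S fun P hP => by rw [hS P hP]; exact zero_le_one,
    fun P => not_imp_not.1 fun hne => not_lt.2 ?_⟩
  obtain ⟨u, v, hP⟩ := exists_isXRep hD.ne_zero P
  have hF : Fbin a b c u v ≠ 0 := fun h0 => hne <| by
    have hpar := hq.parallelogram P P
    rw [hP.add_self_eq_zero hD.ne_zero h0, sub_self, hq.map_zero] at hpar
    linarith
  rcases le_or_gt (Real.log |(D : ℝ)|) A with hsmall | hlarge
  · calc min (1 / 8) (1 / ((K : ℝ) + 1) ^ 2 / A) * logSize D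
        ≤ 1 / ((K : ℝ) + 1) ^ 2 / A * A := by
          gcongr
          · exact zero_le_one.trans (one_le_logSize D)
          · exact min_le_right _ _
          · exact max_le (by linarith) hsmall
      _ = 1 / ((K : ℝ) + 1) ^ 2 := div_mul_cancel₀ _ (by positivity)
      _ ≤ q P := hq.one_div_sq_le_of_card_le hcard hne
  · have hlogSize : logSize D = Real.log |(D : ℝ)| := max_eq_right (by linarith)
    have hle : min (1 / 8) (1 / ((K : ℝ) + 1) ^ 2 / A) * logSize D ≤ 1 / 8 * logSize D :=
      mul_le_mul_of_nonneg_right (min_le_left _ _) (zero_le_one.trans (one_le_logSize D))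
    linarith [hlog D hD P u v hP hF, abs_le.1 (hqx P)]

end HeightGap

/-! ### Counting points and the rank bound `⟹ S_E` -/

section CountingPoints

variable {a b c : ℤ} {sq : ℤ → ℤ} {j k : ℝ}

theorem exists_nat_mul_lt_sq {B X : ℝ} (hB : 0 ≤ B) (hX : 1 ≤ X) :
    ∃ n : ℕ, 0 < n ∧ B * X < (n : ℝ) ^ 2 ∧ (n : ℝ) ≤ (Real.sqrt B + 1) * Real.sqrt X := by
  refine ⟨⌊Real.sqrt (B * X)⌋₊ + 1, Nat.succ_pos _, ?_, ?_⟩ <;> push_cast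
  · exact (Real.sqrt_lt' (by positivity)).1 (Nat.lt_floor_add_one _)
  · have hfloor := Nat.floor_le (Real.sqrt_nonneg (B * X))
    have hX1 := Real.one_le_sqrt.2 hX
    rw [Real.sqrt_mul hB] at hfloor ⊢
    linarith

theorem DistinctRoots.exists_card_le_mul_rpow (hf : DistinctRoots a b c) {r : ℕ}
    (hr : ∀ D : ℤ, D ≠ 0 → Module.rank ℤ (twist a b c D).Point ≤ r) :
    ∃ K : ℝ, 0 ≤ K ∧ ∀ D : ℤ, Squarefree D → ∀ X : ℝ, 1 ≤ X → ∀ S : Finset (ℤ × ℤ),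
      (∀ p ∈ S, p ∈ Psi a b c ∧ (∃ m : ℚ, (Fbin a b c p.1 p.2 : ℚ) = D * m ^ 2) ∧
        ht p.1 p.2 ≤ X * logSize D) → (S.card : ℝ) ≤ K * X ^ ((r : ℝ) / 2) := by
  classical
  obtain ⟨C, μ, K, hC, hμ, hcan⟩ := hf.exists_canonicalHeight_gap
  refine ⟨2 * (K * (Real.sqrt (8 * (1 + C) / μ) + 1) ^ r), by positivity,
    fun D hD X hX S hS => ?_⟩
  obtain ⟨q, hq, hqx, hcard, hgap⟩ := hcan D hD
  have hpt : ∀ p ∈ S, ∃ P : (twist a b c D).Point, IsXRep P p.1 p.2 := fun p hp =>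
    have ⟨hΨ, ⟨_, hm⟩, _⟩ := hS p hp
    exists_isXRep_of_Fbin_eq hD.ne_zero hΨ hm
  choose! P hP using hpt
  have hfiber : S.card ≤ 2 * (S.image P).card := by
    refine Finset.card_le_mul_card_image S 2 fun Q hQ => ?_
    obtain ⟨p, hp, rfl⟩ := Finset.mem_image.1 hQ
    refine (Finset.card_le_card (t := {p, -p}) fun p' hp' => ?_).trans Finset.card_le_two
    obtain ⟨hp', heq⟩ := Finset.mem_filter.1 hp'
    rw [Finset.mem_insert, Finset.mem_singleton, Prod.ext_iff, Prod.ext_iff]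
    exact (hP p hp).eq_or_eq_neg_coords (heq ▸ hP p' hp')
  obtain ⟨n, hn0, hn, hnle⟩ := exists_nat_mul_lt_sq (B := 8 * (1 + C) / μ) (by positivity) hX
  have hsize := one_le_logSize D
  have himage : (S.image P).card ≤ K * n ^ r := by
    refine hq.card_le_mul_pow (B := (1 + C) * (X * logSize D)) hgap hcard (hr D hD.ne_zero)
      (fun Q hQ => ?_) hn0 ?_
    · obtain ⟨p, hp, rfl⟩ := Finset.mem_image.1 hQ
      have hht := (hS p hp).2.2
      rw [(hP p hp).ht_eq, max_le_iff] at hht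
      nlinarith [(abs_le.1 (hqx (P p))).2]
    · rw [div_mul_eq_mul_div, div_lt_iff₀ hμ] at hn
      nlinarith
  calc (S.card : ℝ) ≤ 2 * (K * (n : ℝ) ^ r) := mod_cast hfiber.trans (Nat.mul_le_mul_left _ himage)
    _ ≤ 2 * (K * ((Real.sqrt (8 * (1 + C) / μ) + 1) * Real.sqrt X) ^ r) := by gcongr
    _ = 2 * (K * (Real.sqrt (8 * (1 + C) / μ) + 1) ^ r) * X ^ ((r : ℝ) / 2) := by
      rw [mul_pow, Real.rpow_div_two_eq_sqrt _ (by linarith), Real.rpow_natCast]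
      ring

theorem summable_of_sum_fiber_le {α β : Type*} {f : α → ℝ} {g : β → ℝ} (π : α → β)
    (hf : ∀ x, 0 ≤ f x) (hg0 : ∀ y, 0 ≤ g y) (hg : Summable g)
    (h : ∀ y, ∀ S : Finset α, (∀ x ∈ S, π x = y) → ∑ x ∈ S, f x ≤ g y) : Summable f := by
  classical
  refine summable_of_sum_le (c := ∑' y, g y) hf fun S => ?_
  rw [← Finset.sum_fiberwise_of_maps_to (t := S.image π) fun x hx => Finset.mem_image_of_mem π hx]
  exact (Finset.sum_le_sum fun y _ => h y _ fun x hx => (Finset.mem_filter.1 hx).2).trans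
    (hg.sum_le_tsum _ fun y _ => hg0 y)

theorem exists_dyadic_level {K l h : ℝ} (hK : 1 ≤ K) (hl : 0 < l) (hh : 0 ≤ h) (hlh : l ≤ K * h) :
    ∃ m : ℕ, 2 ^ m * l ≤ K * h ∧ h ≤ 2 ^ (m + 1) * l := by
  obtain ⟨m, hm, hm'⟩ := exists_nat_pow_near ((one_le_div hl).2 hlh) one_lt_two
  rw [le_div_iff₀ hl] at hm
  rw [div_lt_iff₀ hl] at hm'
  exact ⟨m, hm, (le_mul_of_one_le_left hh hK).trans hm'.le⟩

theorem two_pow_succ_rpow_mul_two_pow_mul_div_rpow_neg {K l s j : ℝ} (hK : 0 < K) (hl : 0 < l)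
    (m : ℕ) : ((2 : ℝ) ^ (m + 1)) ^ s * (2 ^ m * l / K) ^ (-j) =
      l ^ (-j) * (K ^ j * 2 ^ s * (2 ^ (s - j)) ^ m) := by
  have hpow : ((2 : ℝ) ^ (s - j)) ^ m = (2 ^ m) ^ s * (2 ^ m) ^ (-j) := by
    rw [← Real.rpow_add (by positivity), ← sub_eq_add_neg, Real.rpow_pow_comm zero_le_two]
  rw [hpow, Real.div_rpow (by positivity) (by positivity),
    Real.mul_rpow (by positivity) (by positivity), pow_succ,
    Real.mul_rpow (by positivity) (by positivity), Real.rpow_neg hK.le]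
  field_simp

/- The part of the sum with `2 ^ m * l y ≤ K * h x ≤ K * 2 ^ (m + 1) * l y` decays geometrically
in `m` because `s < j`. -/
theorem summable_mul_rpow_neg_of_card_le {α β : Type*} {π : α → β} {w l : β → ℝ} {h : α → ℝ}
    {K N s j : ℝ} (hK : 1 ≤ K) (hN : 0 ≤ N) (hj : 0 ≤ j) (hs : s < j) (hw : ∀ y, 0 ≤ w y)
    (hl : ∀ y, 1 ≤ l y) (hh : ∀ x, 1 ≤ h x) (hlh : ∀ x, l (π x) ≤ K * h x)
    (hsum : Summable fun y => w y * l y ^ (-j))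
    (hcard : ∀ y, ∀ X : ℝ, 1 ≤ X → ∀ S : Finset α, (∀ x ∈ S, π x = y ∧ h x ≤ X * l y) →
      (S.card : ℝ) ≤ N * X ^ s) : Summable fun x => w (π x) * h x ^ (-j) := by
  have hl0 : ∀ y, 0 < l y := fun y => zero_lt_one.trans_le (hl y)
  have hh0 : ∀ x, 0 < h x := fun x => zero_lt_one.trans_le (hh x)
  choose lev hlev hlev' using fun x => exists_dyadic_level hK (hl0 (π x)) (hh0 x).le (hlh x)
  have hratio : (2 : ℝ) ^ (s - j) < 1 :=
    Real.rpow_lt_one_of_one_lt_of_neg one_lt_two (by linarith)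
  have hgeom := (summable_geometric_of_lt_one (by positivity) hratio).mul_left (K ^ j * N * 2 ^ s)
  have hterm : ∀ y, 0 ≤ w y * l y ^ (-j) := fun y =>
    mul_nonneg (hw y) (Real.rpow_nonneg (hl0 y).le _)
  refine summable_of_sum_fiber_le (fun x => (π x, lev x))
    (fun x => mul_nonneg (hw _) (Real.rpow_nonneg (hh0 x).le _))
    (fun y => mul_nonneg (hterm y.1) (by positivity))
    (hsum.mul_of_nonneg hgeom hterm fun m => by positivity) ?_
  rintro ⟨y, m⟩ S hS
  simp only [Prod.mk.injEq] at hS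
  have hle : ∀ x ∈ S, w (π x) * h x ^ (-j) ≤ w y * (2 ^ m * l y / K) ^ (-j) := fun x hx => by
    have hx' := hlev x
    rw [(hS x hx).1, (hS x hx).2] at hx'
    rw [(hS x hx).1]
    refine mul_le_mul_of_nonneg_left ?_ (hw y)
    refine Real.rpow_le_rpow_of_nonpos (by have := hl0 y; positivity) ?_ (by linarith)
    rwa [div_le_iff₀' (by positivity)]
  have hcount := hcard y (2 ^ (m + 1)) (one_le_pow₀ one_le_two) S fun x hx =>
    ⟨(hS x hx).1, (hS x hx).1 ▸ (hS x hx).2 ▸ hlev' x⟩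
  have hl0 := hl0 y
  have hw := hw y
  calc ∑ x ∈ S, w (π x) * h x ^ (-j) ≤ S.card • (w y * (2 ^ m * l y / K) ^ (-j)) :=
        Finset.sum_le_card_nsmul _ _ _ hle
    _ ≤ N * ((2 : ℝ) ^ (m + 1)) ^ s * (w y * (2 ^ m * l y / K) ^ (-j)) := by
        rw [nsmul_eq_mul]
        gcongr
    _ = w y * l y ^ (-j) * (K ^ j * N * 2 ^ s * (2 ^ (s - j)) ^ m) := by
        linear_combination (N * w y) * two_pow_succ_rpow_mul_two_pow_mul_div_rpow_neg
          (s := s) (j := j) (zero_lt_one.trans_le hK) hl0 m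

theorem summable_abs_inv_mul_logSize_rpow (hj : 1 < j) :
    Summable fun D : ℤ => |(D : ℝ)|⁻¹ * logSize D ^ (-j) := by
  have hnat : Summable fun n : ℕ => (n : ℝ)⁻¹ * max 1 (Real.log n) ^ (-j) := by
    rw [← summable_condensed_iff_of_nonneg (fun n => by positivity)]
    · have hl : 0 < Real.log 2 := Real.log_pos one_lt_two
      have hgeom : Summable fun k : ℕ => Real.log 2 ^ (-j) * (k : ℝ) ^ (-j) :=
        (Real.summable_nat_rpow.2 (by linarith)).mul_left _
      rw [← summable_nat_add_iff 1] at hgeom ⊢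
      refine Summable.of_nonneg_of_le (fun k => by positivity) (fun k => ?_) hgeom
      rw [Nat.cast_pow, Nat.cast_ofNat, mul_inv_cancel_left₀ (by positivity), Real.log_pow,
        ← Real.mul_rpow hl.le (by positivity), mul_comm (Real.log 2)]
      exact Real.rpow_le_rpow_of_nonpos (by positivity) (le_max_right _ _) (by linarith)
    · intro m n hm hmn
      have : (0 : ℝ) < m := mod_cast hm
      gcongr ?_⁻¹ * ?_
      · exact mod_cast hmn
      · refine Real.rpow_le_rpow_of_nonpos (by positivity) ?_ (by linarith)
        gcongr
  refine Summable.of_nat_of_neg ?_ ?_ <;> simpa [logSize] using hnat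

theorem IsSqfreePart.exists_logSize_le_mul_ht (hsq : IsSqfreePart sq) (a b c : ℤ) : ∃ K : ℝ, 1 ≤ K ∧
    ∀ p ∈ Psi a b c, logSize (sq (Fbin a b c p.1 p.2)) ≤ K * ht p.1 p.2 := by
  obtain ⟨L, hL, hlog⟩ := exists_log_abs_le_add_mul_xHeight a b c
  refine ⟨L + 4, by linarith, fun p hp => ?_⟩
  obtain ⟨hs, m, hm⟩ := hsq _ hp.2
  obtain ⟨P, hP⟩ := exists_isXRep_of_Fbin_eq hs.ne_zero hp hm
  have hle := hlog _ hs P _ _ hP hp.2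
  rw [hP.ht_eq]
  exact max_le (by nlinarith [le_max_left 1 (xHeight P)])
    (by nlinarith [le_max_left 1 (xHeight P), le_max_right 1 (xHeight P)])

theorem RankBound.rank_le (h : RankBound a b c j) {r : ℕ} (hr : ⌈2 * j⌉₊ = r + 1) {D : ℤ}
    (hD : D ≠ 0) : Module.rank ℤ (twist a b c D).Point ≤ r := by
  have hlt := h D hD
  rwa [hr, ← Module.le_rank_iff, Nat.cast_add_one, Cardinal.natCast_add_one_le_iff, not_lt] at hlt

theorem RankBound.sConv (hR : RankBound a b c j) (hf : DistinctRoots a b c)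
    (hsq : IsSqfreePart sq) (hj : 1 < j) (hk : 1 ≤ k) : SConv a b c sq j k Set.univ := by
  classical
  obtain ⟨r, hr⟩ : ∃ r, ⌈2 * j⌉₊ = r + 1 :=
    Nat.exists_eq_succ_of_ne_zero (Nat.ceil_pos.2 (by linarith)).ne'
  have hrj : (r : ℝ) / 2 < j := by
    have := Nat.ceil_lt_add_one (a := 2 * j) (by linarith)
    rw [hr, Nat.cast_add_one] at this
    linarith
  obtain ⟨N, hN, hcard⟩ := hf.exists_card_le_mul_rpow fun D hD => hR.rank_le hr hD
  obtain ⟨K, hK, hlogSize⟩ := hsq.exists_logSize_le_mul_ht a b c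
  have hsum := summable_mul_rpow_neg_of_card_le (h := fun p : SIdx a b c Set.univ => ht p.1.1 p.1.2)
    (π := fun p => sq (Fbin a b c p.1.1 p.1.2)) hK hN (by linarith) hrj
    (fun D => inv_nonneg.2 (abs_nonneg _)) one_le_logSize (fun p => one_le_ht _ _)
    (fun p => hlogSize p.1 p.2.1) (summable_abs_inv_mul_logSize_rpow hj) fun D X hX S hS => by
      rcases S.eq_empty_or_nonempty with rfl | ⟨p, hp⟩
      · rw [Finset.card_empty, Nat.cast_zero]
        positivity
      have hD : Squarefree D := (hS p hp).1 ▸ (hsq _ p.2.1.2).1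
      rw [← Finset.card_image_of_injective S Subtype.val_injective]
      refine hcard D hD X hX _ fun p hp => ?_
      obtain ⟨x, hx, rfl⟩ := Finset.mem_image.1 hp
      exact ⟨x.2.1, (hS x hx).1 ▸ (hsq _ x.2.1.2).2, (hS x hx).2⟩
  refine hsum.of_nonneg_of_le
    (fun p => mul_nonneg (by positivity) (ht_rpow_nonneg _ _ _)) fun p => ?_
  refine mul_le_mul_of_nonneg_right ?_ (ht_rpow_nonneg _ _ _)
  rw [← Real.rpow_neg_one]
  exact Real.rpow_le_rpow_of_exponent_le
    (mod_cast Int.one_le_abs (hsq _ p.2.1.2).1.ne_zero) (by linarith)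

end CountingPoints

/-! ### Heights of values of rational functions -/

section HeightOfValues

open Polynomial Height Filter Topology

theorem exists_natDegree_le_mul_add_mul_eq {K : Type*} [Field K] {p q r : K[X]} {e : ℕ}
    (hpq : IsCoprime p q) (hp : p.natDegree ≤ e) (hq : q.natDegree = e)
    (hr : r.natDegree ≤ 2 * e) :
    ∃ s t : K[X], s.natDegree ≤ e ∧ t.natDegree ≤ e ∧ s * p + t * q = r := by
  rcases eq_or_ne e 0 with rfl | he
  · obtain ⟨s, t, hst⟩ := hpq
    obtain ⟨x, rfl⟩ := natDegree_eq_zero.1 (Nat.le_zero.1 hp)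
    obtain ⟨y, rfl⟩ := natDegree_eq_zero.1 hq
    obtain ⟨z, rfl⟩ := natDegree_eq_zero.1 (Nat.le_zero.1 hr)
    refine ⟨C (z * s.eval 0), C (z * t.eval 0), (natDegree_C _).le, (natDegree_C _).le, ?_⟩
    have hst0 : s.eval 0 * x + t.eval 0 * y = 1 := by simpa using congrArg (eval 0) hst
    rw [← C_mul, ← C_mul, ← C_add]
    exact congrArg C (by linear_combination z * hst0)
  obtain ⟨s, t, hst⟩ := hpq
  have hrel : (r * s % q) * p + (r * t + r * s / q * p) * q = r := by
    linear_combination r * hst + p * EuclideanDomain.mod_add_div (r * s) q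
  have hs : (r * s % q).natDegree ≤ e := hq ▸ (natDegree_mod_lt _ (hq ▸ he)).le
  refine ⟨_, _, hs, ?_, hrel⟩
  have hq0 : q ≠ 0 := by
    rintro rfl
    exact he (by simpa using hq.symm)
  rcases eq_or_ne (r * t + r * s / q * p) 0 with h0 | h0
  · simp [h0]
  have hmul : (r * t + r * s / q * p) * q = r - (r * s % q) * p := eq_sub_of_add_eq' hrel
  have hdeg := congrArg natDegree hmul
  rw [natDegree_mul h0 hq0, hq] at hdeg
  have := (natDegree_sub_le r ((r * s % q) * p)).trans (max_le hr (natDegree_mul_le.trans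
    ((add_le_add hs hp).trans_eq (two_mul e).symm)))
  omega

/-- The degree of a rational function as a self-map of the projective line. -/
noncomputable def mapDegree {K : Type*} [Field K] (r : RatFunc K) : ℕ :=
  max r.num.natDegree r.denom.natDegree

theorem exists_eq_C_of_mapDegree_eq_zero {K : Type*} [Field K] {r : RatFunc K}
    (hr : mapDegree r = 0) : ∃ κ, r = RatFunc.C κ :=
  (RatFunc.eq_C_iff r).2 (Nat.max_eq_zero_iff.1 hr)

theorem mapDegree_div {K : Type*} [Field K] {p q : K[X]} (hpq : IsCoprime p q) (hq : q ≠ 0) :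
    mapDegree (algebraMap K[X] (RatFunc K) p / algebraMap K[X] (RatFunc K) q) =
      max p.natDegree q.natDegree := by
  set r := algebraMap K[X] (RatFunc K) p / algebraMap K[X] (RatFunc K) q with hr
  have hrel : r.num * q = p * r.denom := (RatFunc.num_mul_eq_mul_denom_iff hq).2 hr
  have hnum : Associated r.num p := associated_of_dvd_dvd
    (r.isCoprime_num_denom.dvd_of_dvd_mul_right (Dvd.intro q hrel))
    (hpq.dvd_of_dvd_mul_right (Dvd.intro _ hrel.symm))
  have hdenom : Associated r.denom q := associated_of_dvd_dvd
    (r.isCoprime_num_denom.symm.dvd_of_dvd_mul_left (Dvd.intro_left p hrel.symm))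
    (hpq.symm.dvd_of_dvd_mul_left (Dvd.intro_left _ hrel))
  rw [mapDegree, natDegree_eq_natDegree (degree_eq_degree_of_associated hnum),
    natDegree_eq_natDegree (degree_eq_degree_of_associated hdenom)]

variable {K : Type*} [Field K] [AdmissibleAbsValues K]

theorem exists_abs_logHeight_eval_sub_le_of_natDegree_le {p q : K[X]} {e : ℕ}
    (hpq : IsCoprime p q) (hp : p.natDegree ≤ e) (hq : q.natDegree = e) :
    ∃ C, ∀ x : K, |logHeight ![p.eval x, q.eval x] - e * logHeight₁ x| ≤ C := by
  have eval_homogenize (r : K[X]) (hr : r.natDegree ≤ e) (x : K) :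
      (r.homogenize e).eval ![x, 1] = r.eval x := by
    simpa [MvPolynomial.aeval_eq_eval] using
      aeval_homogenize_of_eq_one (A := K) hr ![x, 1] (by simp)
  obtain ⟨s₀, t₀, hs₀, ht₀, h₀⟩ := exists_natDegree_le_mul_add_mul_eq hpq hp hq
    (r := X ^ (2 * e)) (natDegree_X_pow_le _)
  obtain ⟨s₁, t₁, hs₁, ht₁, h₁⟩ := exists_natDegree_le_mul_add_mul_eq hpq hp hq
    (r := 1) (by simp)
  let F : Fin 2 → MvPolynomial (Fin 2) K := fun j => (![p, q] j).homogenize e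
  let G : Fin 2 × Fin 2 → MvPolynomial (Fin 2) K :=
    fun kj => (!![s₀, t₀; s₁, t₁] kj.1 kj.2).homogenize e
  obtain ⟨C₁, hC₁⟩ := logHeight_eval_le' (p := F) fun j => isHomogeneous_homogenize _
  obtain ⟨C₂, hC₂⟩ := logHeight_eval_ge' (N := e) (q := G) fun a => isHomogeneous_homogenize _
  have hF (x : K) : (fun j => (F j).eval ![x, 1]) = ![p.eval x, q.eval x] := by
    ext j
    fin_cases j
    exacts [eval_homogenize p hp x, eval_homogenize q hq.le x]
  have hG (x : K) (k : Fin 2) :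
      ∑ j, (G (k, j)).eval ![x, 1] * (F j).eval ![x, 1] = ![x, 1] k ^ (e + e) := by
    fin_cases k
    · simpa [F, G, eval_homogenize, hp, hq, hs₀, ht₀, two_mul] using congrArg (eval x) h₀
    · simpa [F, G, eval_homogenize, hp, hq, hs₁, ht₁] using congrArg (eval x) h₁
  refine ⟨max C₁ (-C₂), fun x => ?_⟩
  have hle := hC₁ ![x, 1]
  have hge := hC₂ F (hG x)
  rw [hF, ← logHeight₁_eq_logHeight] at hle hge
  refine abs_sub_le_iff.2 ⟨?_, ?_⟩ <;> grind

theorem exists_abs_logHeight₁_eval_sub_le (r : RatFunc K) :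
    ∃ C, ∀ x : K, |logHeight₁ (r.eval (RingHom.id K) x) - mapDegree r * logHeight₁ x| ≤ C := by
  simp only [RatFunc.eval, eval₂_id, logHeight₁_div_eq_logHeight, mapDegree]
  rcases le_total r.num.natDegree r.denom.natDegree with h | h
  · rw [max_eq_right h]
    exact exists_abs_logHeight_eval_sub_le_of_natDegree_le r.isCoprime_num_denom h rfl
  · simp only [logHeight_swap (r.num.eval _), max_eq_left h]
    exact exists_abs_logHeight_eval_sub_le_of_natDegree_le r.isCoprime_num_denom.symm h rfl

theorem abs_logHeight₁_sub_sub_le (x κ : K) :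
    |logHeight₁ (x - κ) - logHeight₁ x| ≤ totalWeight K * Real.log 2 + logHeight₁ κ := by
  have hle := logHeight₁_sub_le x κ
  have hge := logHeight₁_add_le (x - κ) κ
  rw [sub_add_cancel] at hge
  exact abs_sub_le_iff.2 ⟨by linarith, by linarith⟩

theorem tendsto_logHeight₁_eval_sub_div_log (r : RatFunc ℚ) (κ : ℚ) :
    Tendsto (fun N : ℕ => logHeight₁ (r.eval (RingHom.id ℚ) N - κ) / Real.log N) atTop
      (𝓝 (mapDegree r)) := by
  obtain ⟨C, hC⟩ := exists_abs_logHeight₁_eval_sub_le r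
  have hlog : Tendsto (fun N : ℕ => Real.log N) atTop atTop :=
    Real.tendsto_log_atTop.comp tendsto_natCast_atTop_atTop
  set C' := C + (totalWeight ℚ * Real.log 2 + logHeight₁ κ)
  refine tendsto_iff_norm_sub_tendsto_zero.2 <| squeeze_zero' (.of_forall fun _ => norm_nonneg _) ?_
    (tendsto_const_nhds (x := C').div_atTop hlog)
  filter_upwards [eventually_gt_atTop 1] with N hN
  have : NeZero N := ⟨by omega⟩
  have hlogN : 0 < Real.log N := Real.log_pos (mod_cast hN)
  have hb := (abs_sub_le _ _ _).trans
    (add_le_add (abs_logHeight₁_sub_sub_le (r.eval (RingHom.id ℚ) N) κ) (hC N))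
  rw [Rat.logHeight₁_natCast, add_comm _ C] at hb
  rw [Real.norm_eq_abs, div_sub' hlogN.ne', abs_div, abs_of_pos hlogN, mul_comm (Real.log _)]
  gcongr

end HeightOfValues

section EvalGerm

open Polynomial Filter

theorem eventually_eval_natCast_ne_zero {p : ℚ[X]} (hp : p ≠ 0) :
    ∀ᶠ N : ℕ in hyperfilter ℕ, p.eval (N : ℚ) ≠ 0 := by
  refine hyperfilter_le_cofinite (Set.Finite.subset (p.roots.toFinset.finite_toSet.preimage
    (Nat.cast_injective (R := ℚ)).injOn) fun N hN => ?_)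
  simpa [hp] using hN

/-- The germ at infinity, along a fixed ultrafilter, of the values of a rational function at the
natural numbers. Germs along an ultrafilter form a field, so identities between rational functions
specialize without tracking denominators. -/
noncomputable def evalGerm : RatFunc ℚ →+* Germ (hyperfilter ℕ : Filter ℕ) ℚ :=
  RatFunc.liftRingHom
    ((Germ.coeRingHom _).comp (RingHom.pi fun N : ℕ => evalRingHom (N : ℚ))) <|
    nonZeroDivisors_le_comap_nonZeroDivisors_of_injective _ <|
    (injective_iff_map_eq_zero _).2 fun p hp => by
      by_contra hp0
      have hzero : ∀ᶠ N : ℕ in hyperfilter ℕ, p.eval (N : ℚ) = 0 := Germ.coe_eq.1 hp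
      exact Ultrafilter.eventually_not.1 (eventually_eval_natCast_ne_zero hp0) hzero

theorem evalGerm_apply (r : RatFunc ℚ) :
    evalGerm r = (fun N : ℕ => r.eval (RingHom.id ℚ) N : ℕ → ℚ) := by
  conv_lhs => rw [← RatFunc.num_div_denom r]
  exact RatFunc.liftRingHom_apply_div _ _ _ _

theorem evalGerm_C (κ : ℚ) : evalGerm (RatFunc.C κ) = (fun _ => κ : ℕ → ℚ) := by
  rw [evalGerm_apply]
  exact Germ.coe_eq.2 (.of_forall fun N => RatFunc.eval_C _ _)

theorem eventually_eval_ne {r s : RatFunc ℚ} (h : r ≠ s) : ∀ᶠ N : ℕ in hyperfilter ℕ,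
    r.eval (RingHom.id ℚ) N ≠ s.eval (RingHom.id ℚ) N :=
  Ultrafilter.eventually_not.2 fun heq => h <| evalGerm.injective <| by
    rw [evalGerm_apply, evalGerm_apply]
    exact Germ.coe_eq.2 heq

end EvalGerm

/-! ### Pairs of points on a twist, with prescribed heights -/

section TwistPair

/-- `(x, 1)` and `(y, ψ)` are two points of the twist of `Y² = X³ + A X + B` by its value at `x`,
with different abscissae and nonzero ordinates. -/
structure IsTwistPair {K : Type*} [Field K] (A B x y ψ : K) : Prop where
  cubic_ne_zero : x ^ 3 + A * x + B ≠ 0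
  ratio_ne_zero : ψ ≠ 0
  ne : x ≠ y
  sq_mul_cubic : ψ ^ 2 * (x ^ 3 + A * x + B) = y ^ 3 + A * y + B

/-- The abscissa of the sum of the points `(x, 1)` and `(y, ψ)` of the twist of
`Y² = X³ + A X + B` by its value at `x`. -/
def secantX {K : Type*} [Field K] (A B x y ψ : K) : K :=
  (x ^ 3 + A * x + B) * (ψ - 1) ^ 2 / (y - x) ^ 2 - x - y

theorem secantX_eq_iff {K : Type*} [Field K] {A B x y ψ κ : K} (h : x ≠ y) :
    secantX A B x y ψ = κ ↔
      (x ^ 3 + A * x + B) * (ψ - 1) ^ 2 = (κ + x + y) * (y - x) ^ 2 := by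
  rw [secantX, sub_eq_iff_eq_add, sub_eq_iff_eq_add,
    div_eq_iff (pow_ne_zero 2 (sub_ne_zero.2 h.symm)), add_right_comm κ]

/-- The coefficient `A` of `f (x - a / 3) = x³ + A x + B`. -/
def depressedLinear (a b : ℤ) : ℚ := b - (a : ℚ) ^ 2 / 3

/-- The coefficient `B` of `f (x - a / 3) = x³ + A x + B`. -/
def depressedConst (a b c : ℤ) : ℚ := c - a * b / 3 + 2 * (a : ℚ) ^ 3 / 27

variable {a b c D : ℤ}

theorem depressed_eq (x : ℚ) :
    x ^ 3 + depressedLinear a b * x + depressedConst a b c =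
      (x - a / 3) ^ 3 + a * (x - a / 3) ^ 2 + b * (x - a / 3) + c := by
  rw [depressedLinear, depressedConst]
  ring

theorem DistinctRoots.depressed_disc_ne_zero (hf : DistinctRoots a b c) :
    4 * depressedLinear a b ^ 3 + 27 * depressedConst a b c ^ 2 ≠ 0 := by
  have hdisc : (cubicDisc a b c : ℚ) ≠ 0 := mod_cast hf.cubicDisc_ne_zero
  contrapose! hdisc
  rw [depressedLinear, depressedConst] at hdisc
  rw [cubicDisc]
  push_cast
  linear_combination -hdisc

open WeierstrassCurve Height

theorem nonsingular_twist {x y : ℚ} (hD : D ≠ 0) (hy : y ≠ 0)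
    (h : D * y ^ 2 = x ^ 3 + a * x ^ 2 + b * x + c) :
    (twist a b c D).Nonsingular (D * x) (D ^ 2 * y) := by
  have : (D : ℚ) ≠ 0 := mod_cast hD
  rw [Affine.nonsingular_iff, Affine.equation_iff]
  refine ⟨?_, Or.inr ?_⟩
  · simp only [twist]
    linear_combination (D : ℚ) ^ 3 * h
  · simp only [twist]
    intro hneg
    have : (D : ℚ) ^ 2 * y ≠ 0 := by positivity
    exact this (by linarith)

theorem xHeight_some_mul (hD : D ≠ 0) {x y z : ℚ} (hz : z = D * x)
    (h : (twist a b c D).Nonsingular z y) : xHeight (.some z y h) = logHeight₁ x := by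
  rw [xHeight, twistX_some, ← logHeight₁_div_eq_logHeight, hz,
    mul_div_cancel_left₀ _ (mod_cast hD : (D : ℚ) ≠ 0)]

theorem xHeight_some_add_some (hD : D ≠ 0) {x y x' y' : ℚ} (hx : x ≠ x')
    (h : (twist a b c D).Nonsingular (D * x) (D ^ 2 * y))
    (h' : (twist a b c D).Nonsingular (D * x') (D ^ 2 * y')) :
    xHeight (.some _ _ h + .some _ _ h') =
      logHeight₁ (D * ((y - y') / (x - x')) ^ 2 - a - x - x') := by
  have hDQ : (D : ℚ) ≠ 0 := mod_cast hD
  have hX : (D : ℚ) * x ≠ D * x' := fun heq => hx (mul_left_cancel₀ hDQ heq)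
  have hslope : ((D : ℚ) ^ 2 * y - D ^ 2 * y') / (D * x - D * x') =
      D * ((y - y') / (x - x')) := by
    rw [← mul_sub, ← mul_sub, pow_two, mul_assoc, mul_div_mul_left _ _ hDQ, mul_div_assoc]
  rw [Affine.Point.add_of_X_ne hX, xHeight_some_mul hD]
  rw [Affine.slope_of_X_ne hX, hslope]
  simp only [Affine.addX, twist]
  ring

theorem exists_intCast_eq_mul_sq {r : ℚ} (hr : r ≠ 0) :
    ∃ (D : ℤ) (d : ℚ), D ≠ 0 ∧ d ≠ 0 ∧ (D : ℚ) = r * d ^ 2 := by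
  refine ⟨r.num * r.den, r.den, by simpa using hr, by simp, ?_⟩
  push_cast
  rw [pow_two, ← mul_assoc, Rat.mul_den_eq_num]

theorem IsTwistPair.exists_points {x y ψ : ℚ}
    (h : IsTwistPair (depressedLinear a b) (depressedConst a b c) x y ψ) :
    ∃ D : ℤ, D ≠ 0 ∧ ∃ P Q : (twist a b c D).Point,
      xHeight P = logHeight₁ (x - a / 3) ∧ xHeight Q = logHeight₁ (y - a / 3) ∧
      xHeight (P + Q) =
        logHeight₁ (secantX (depressedLinear a b) (depressedConst a b c) x y ψ - a / 3) ∧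
      xHeight (P - Q) =
        logHeight₁ (secantX (depressedLinear a b) (depressedConst a b c) x y (-ψ) - a / 3) := by
  obtain ⟨D, d, hD, hd, hDd⟩ := exists_intCast_eq_mul_sq h.cubic_ne_zero
  have hψ := h.ratio_ne_zero
  have hne : x - a / 3 ≠ y - a / 3 := fun heq => h.ne (sub_left_injective heq)
  have hP : (twist a b c D).Nonsingular (D * (x - a / 3)) (D ^ 2 * (1 / d)) :=
    nonsingular_twist hD (by positivity) (by rw [← depressed_eq, hDd]; field_simp)
  have hQ : (twist a b c D).Nonsingular (D * (y - a / 3)) (D ^ 2 * (ψ / d)) :=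
    nonsingular_twist hD (by positivity)
      (by rw [← depressed_eq, ← h.sq_mul_cubic, hDd]; field_simp)
  have hsum (ψ : ℚ) (hQ : (twist a b c D).Nonsingular (D * (y - a / 3)) (D ^ 2 * (ψ / d))) :
      xHeight (.some _ _ hP + .some _ _ hQ) =
        logHeight₁ (secantX (depressedLinear a b) (depressedConst a b c) x y ψ - a / 3) := by
    rw [xHeight_some_add_some hD hne, secantX, hDd, sub_sub_sub_cancel_right, ← sub_div, div_div,
      div_pow, mul_pow, ← neg_sub x y, neg_sq, ← neg_sub ψ 1, neg_sq]
    congr 1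
    field_simp
    ring
  refine ⟨D, hD, .some _ _ hP, .some _ _ hQ, xHeight_some_mul hD rfl hP,
    xHeight_some_mul hD rfl hQ, hsum ψ hQ, ?_⟩
  have hneg : (twist a b c D).negY (D * (y - a / 3)) (D ^ 2 * (ψ / d)) = D ^ 2 * (-ψ / d) := by
    rw [negY_twist]
    ring
  rw [sub_eq_add_neg (Affine.Point.some _ _ hP), Affine.Point.neg_some]
  simp only [hneg]
  exact hsum (-ψ) _

end TwistPair

/-! ### A criterion for a twist of rank at least two -/

section RankTwo

open Filter Topology Height

theorem mem_of_tendsto_inv_smul_of_dist_le {ι E : Type*} [NormedAddCommGroup E] [NormedSpace ℝ E]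
    {l : Filter ι} [l.NeBot] {S : Set E} (hS : IsClosed S)
    (hcone : ∀ t : ℝ, 0 < t → ∀ w ∈ S, t • w ∈ S) {L : ι → ℝ} (hL : Tendsto L l atTop) {C : ℝ}
    {u : ι → E} {e : E} (hu : Tendsto (fun i => (L i)⁻¹ • u i) l (𝓝 e))
    (hnear : ∀ᶠ i in l, ∃ w ∈ S, dist (u i) w ≤ C) : e ∈ S := by
  have hne : S.Nonempty := by
    obtain ⟨i, w, hw, -⟩ := hnear.exists
    exact ⟨w, hw⟩
  rw [hS.mem_iff_infDist_zero hne]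
  refine tendsto_nhds_unique (((Metric.continuous_infDist_pt S).tendsto e).comp hu) <|
    squeeze_zero' (.of_forall fun _ => Metric.infDist_nonneg) ?_
      (tendsto_const_nhds (x := C).div_atTop hL)
  filter_upwards [hnear, hL.eventually_gt_atTop 0] with i ⟨w, hw, hdist⟩ hLi
  calc Metric.infDist ((L i)⁻¹ • u i) S ≤ dist ((L i)⁻¹ • u i) ((L i)⁻¹ • w) :=
        Metric.infDist_le_dist_of_mem (hcone _ (inv_pos.2 hLi) w hw)
    _ = dist (u i) w / L i := by
        rw [dist_smul₀, norm_inv, Real.norm_of_nonneg hLi.le, inv_mul_eq_div]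
    _ ≤ C / L i := by gcongr

theorem eventually_eval_neg (r : RatFunc ℚ) : ∀ᶠ N : ℕ in hyperfilter ℕ,
    (-r).eval (RingHom.id ℚ) N = -r.eval (RingHom.id ℚ) N := by
  refine Germ.coe_eq.1 ?_
  rw [← evalGerm_apply, map_neg, evalGerm_apply]
  rfl

theorem eventually_eval_cubic (A B : ℚ) (ψ x : RatFunc ℚ) : ∀ᶠ N : ℕ in hyperfilter ℕ,
    (ψ ^ 2 * (x ^ 3 + RatFunc.C A * x + RatFunc.C B)).eval (RingHom.id ℚ) N =
      ψ.eval (RingHom.id ℚ) N ^ 2 * (x.eval (RingHom.id ℚ) N ^ 3 +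
        A * x.eval (RingHom.id ℚ) N + B) := by
  refine Germ.coe_eq.1 ?_
  rw [← evalGerm_apply]
  simp only [map_mul, map_pow, map_add, evalGerm_C]
  simp only [evalGerm_apply]
  rfl

theorem eventually_isTwistPair_eval {A B : ℚ} {x y ψ : RatFunc ℚ}
    (h : IsTwistPair (RatFunc.C A) (RatFunc.C B) x y ψ) :
    ∀ᶠ N : ℕ in hyperfilter ℕ, IsTwistPair A B (x.eval (RingHom.id ℚ) N)
      (y.eval (RingHom.id ℚ) N) (ψ.eval (RingHom.id ℚ) N) := by
  filter_upwards [eventually_eval_ne h.ratio_ne_zero, eventually_eval_ne h.ne,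
    eventually_eval_ne h.cubic_ne_zero, eventually_eval_cubic A B ψ x,
    eventually_eval_cubic A B 1 x, eventually_eval_cubic A B 1 y] with N hψ hne hcubic hψx hx hy
  simp only [one_pow, one_mul, RatFunc.eval_one] at hx hy
  rw [RatFunc.eval_zero] at hψ hcubic
  exact ⟨hx ▸ hcubic, hψ, hne, by rw [← hψx, ← hy, h.sq_mul_cubic]⟩

theorem eventually_eval_secantX (A B : ℚ) (x y ψ : RatFunc ℚ) :
    ∀ᶠ N : ℕ in hyperfilter ℕ,
      (secantX (RatFunc.C A) (RatFunc.C B) x y ψ).eval (RingHom.id ℚ) N =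
        secantX A B (x.eval (RingHom.id ℚ) N) (y.eval (RingHom.id ℚ) N)
          (ψ.eval (RingHom.id ℚ) N) := by
  refine Germ.coe_eq.1 ?_
  rw [← evalGerm_apply, secantX]
  simp only [map_sub, map_div₀, map_mul, map_pow, map_add, map_one, evalGerm_C]
  simp only [evalGerm_apply]
  rfl

/-- Some quadratic twist has two independent rational points. -/
def HasRankTwoTwist (a b c : ℤ) : Prop :=
  ∃ D : ℤ, D ≠ 0 ∧ ∃ P Q : (twist a b c D).Point, LinearIndependent ℤ ![P, Q]

/-- The values `(q P, q Q, q (P + Q), q (P - Q))` allowed to a nonnegative quadratic form `q` by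
two dependent elements `P`, `Q`. -/
def dependentCone : Set (Fin 4 → ℝ) :=
  {w | w 2 + w 3 = 2 * w 0 + 2 * w 1 ∧ (w 2 - w 0 - w 1) ^ 2 = 4 * w 0 * w 1}

theorem isClosed_dependentCone : IsClosed dependentCone :=
  (isClosed_eq (by fun_prop) (by fun_prop)).inter (isClosed_eq (by fun_prop) (by fun_prop))

theorem smul_mem_dependentCone (t : ℝ) {w : Fin 4 → ℝ} (hw : w ∈ dependentCone) :
    t • w ∈ dependentCone := by
  obtain ⟨h₁, h₂⟩ := hw
  simp only [dependentCone, Set.mem_ofPred_eq, Pi.smul_apply, smul_eq_mul]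
  exact ⟨by linear_combination t * h₁, by linear_combination t ^ 2 * h₂⟩

theorem eq_zero_or_eq_zero_of_mem_dependentCone {w : Fin 4 → ℝ} (hw : w ∈ dependentCone)
    (heq : w 0 = w 1) : w 2 = 0 ∨ w 3 = 0 := by
  obtain ⟨hpar, hdep⟩ := hw
  refine mul_eq_zero.1 ?_
  linear_combination w 2 * hpar - hdep + (w 0 - w 1) * heq

variable {a b c : ℤ}

theorem exists_dist_dependentCone_le (hf : DistinctRoots a b c) (hrank : ¬ HasRankTwoTwist a b c) :
    ∃ C : ℝ, ∀ D : ℤ, D ≠ 0 → ∀ P Q : (twist a b c D).Point, ∃ w ∈ dependentCone,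
      dist ![xHeight P, xHeight Q, xHeight (P + Q), xHeight (P - Q)] w ≤ C := by
  obtain ⟨C, hC, hcan⟩ := hf.exists_canonicalHeight
  refine ⟨C, fun D hD P Q => ?_⟩
  obtain ⟨q, hq, hnear⟩ := hcan D hD
  have hdep : ¬ LinearIndependent ℤ ![P, Q] := fun hli => hrank ⟨D, hD, P, Q, hli⟩
  rw [LinearIndependent.pair_iff] at hdep
  push Not at hdep
  obtain ⟨m, n, hmn, hne⟩ := hdep
  refine ⟨![q P, q Q, q (P + Q), q (P - Q)], ⟨hq.parallelogram P Q,
    hq.sq_polar_eq_of_zsmul_add_zsmul_eq_zero hmn (not_and_or.1 fun h => hne h.1 h.2)⟩, ?_⟩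
  refine (dist_pi_le_iff hC).2 fun i => ?_
  rw [dist_comm, Real.dist_eq]
  fin_cases i <;> exact hnear _

/- Along the specializations of the generic pair the four heights grow like the degrees times
`log N`, so the vector of degrees is a limit of points at bounded distance from the cone,
rescaled. -/
theorem mapDegree_mem_dependentCone (hf : DistinctRoots a b c) (hrank : ¬ HasRankTwoTwist a b c)
    {x y ψ : RatFunc ℚ}
    (h : IsTwistPair (RatFunc.C (depressedLinear a b)) (RatFunc.C (depressedConst a b c)) x y ψ) :
    (fun i => (![mapDegree x, mapDegree y,
      mapDegree (secantX (RatFunc.C (depressedLinear a b)) (RatFunc.C (depressedConst a b c)) x y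
        ψ),
      mapDegree (secantX (RatFunc.C (depressedLinear a b)) (RatFunc.C (depressedConst a b c)) x y
        (-ψ))] i : ℝ)) ∈ dependentCone := by
  obtain ⟨C, hC⟩ := exists_dist_dependentCone_le hf hrank
  set A := depressedLinear a b
  set B := depressedConst a b c
  set r : Fin 4 → RatFunc ℚ := ![x, y, secantX (RatFunc.C A) (RatFunc.C B) x y ψ,
    secantX (RatFunc.C A) (RatFunc.C B) x y (-ψ)]
  refine mem_of_tendsto_inv_smul_of_dist_le (l := (hyperfilter ℕ : Filter ℕ))
    (L := fun N => Real.log N) (C := C)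
    (u := fun N i => logHeight₁ ((r i).eval (RingHom.id ℚ) N - a / 3))
    isClosed_dependentCone (fun t _ w hw => smul_mem_dependentCone t hw)
    ((Real.tendsto_log_atTop.comp tendsto_natCast_atTop_atTop).mono_left Nat.hyperfilter_le_atTop)
    ?_ ?_
  · refine tendsto_pi_nhds.2 fun i => ?_
    rw [show (![_, _, _, _] i : ℕ) = mapDegree (r i) by fin_cases i <;> rfl]
    simpa [inv_mul_eq_div] using
      (tendsto_logHeight₁_eval_sub_div_log (r i) (a / 3)).mono_left Nat.hyperfilter_le_atTop
  · filter_upwards [eventually_isTwistPair_eval h, eventually_eval_secantX A B x y ψ,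
      eventually_eval_secantX A B x y (-ψ), eventually_eval_neg ψ] with N hpair hsum hdiff hneg
    obtain ⟨D, hD, P, Q, hP, hQ, hadd, hsub⟩ := hpair.exists_points
    obtain ⟨w, hw, hdist⟩ := hC D hD P Q
    refine ⟨w, hw, ?_⟩
    convert hdist using 2
    ext i
    fin_cases i
    · exact hP.symm
    · exact hQ.symm
    · exact (congrArg (fun t : ℚ => logHeight₁ (t - a / 3)) hsum).trans hadd.symm
    · refine (congrArg (fun t : ℚ => logHeight₁ (t - a / 3)) hdiff).trans ?_
      rw [hneg]
      exact hsub.symm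

theorem hasRankTwoTwist_of_not_isSquare_mapDegree_mul (hf : DistinctRoots a b c) {x y ψ : RatFunc ℚ}
    (h : IsTwistPair (RatFunc.C (depressedLinear a b)) (RatFunc.C (depressedConst a b c)) x y ψ)
    (hdeg : ¬ IsSquare (mapDegree x * mapDegree y)) : HasRankTwoTwist a b c := by
  by_contra hrank
  have hdep := (mapDegree_mem_dependentCone hf hrank h).2
  simp only [Matrix.cons_val] at hdep
  set e := mapDegree
    (secantX (RatFunc.C (depressedLinear a b)) (RatFunc.C (depressedConst a b c)) x y ψ)
  have hdepℚ : ((e : ℚ) - mapDegree x - mapDegree y) ^ 2 = 4 * mapDegree x * mapDegree y :=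
    mod_cast hdep
  refine hdeg (Rat.isSquare_natCast_iff.1 ⟨(e - mapDegree x - mapDegree y) / 2, ?_⟩)
  push_cast
  linear_combination -hdepℚ / 4

theorem hasRankTwoTwist_of_mapDegree_eq (hf : DistinctRoots a b c) {x y ψ : RatFunc ℚ}
    (h : IsTwistPair (RatFunc.C (depressedLinear a b)) (RatFunc.C (depressedConst a b c)) x y ψ)
    (hdeg : mapDegree x = mapDegree y)
    (hsum : ∀ κ, secantX (RatFunc.C (depressedLinear a b)) (RatFunc.C (depressedConst a b c)) x y ψ
      ≠ RatFunc.C κ)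
    (hdiff : ∀ κ, secantX (RatFunc.C (depressedLinear a b)) (RatFunc.C (depressedConst a b c)) x y
      (-ψ) ≠ RatFunc.C κ) :
    HasRankTwoTwist a b c := by
  by_contra hrank
  rcases eq_zero_or_eq_zero_of_mem_dependentCone (mapDegree_mem_dependentCone hf hrank h)
    (congrArg Nat.cast hdeg) with hzero | hzero
  · obtain ⟨κ, hκ⟩ := exists_eq_C_of_mapDegree_eq_zero (Nat.cast_eq_zero.1 hzero)
    exact hsum κ hκ
  · obtain ⟨κ, hκ⟩ := exists_eq_C_of_mapDegree_eq_zero (Nat.cast_eq_zero.1 hzero)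
    exact hdiff κ hκ

end RankTwo

/-! ### Twists of rank two when both coefficients of the depressed cubic are nonzero -/

section Mestre

open Polynomial

theorem ne_zero_of_eval_ne_zero {K : Type*} [Field K] {r : RatFunc K} (p : K[X]) (z : K)
    (hr : algebraMap K[X] (RatFunc K) p = r) (hz : p.eval z ≠ 0) : r ≠ 0 := by
  rw [← hr]
  refine RatFunc.algebraMap_ne_zero ?_
  rintro rfl
  exact hz eval_zero

/-- Mestre's abscissa: for `x = mestreX A B l`, the cubic `X³ + A X + B` satisfies
`g (l² x) = l⁶ g x`. -/
def mestreX {K : Type*} [Field K] (A B l : K) : K :=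
  -B * (l ^ 4 + l ^ 2 + 1) / (A * (l ^ 4 + l ^ 2))

section Field

variable {K : Type*} [Field K] {A B l : K}

theorem mestreX_neg : mestreX A B (-l) = mestreX A B l := by
  rw [mestreX, mestreX, Even.neg_pow (by decide), neg_sq]

theorem mestreX_cubic (hA : A ≠ 0) (hl : l ^ 4 + l ^ 2 ≠ 0) :
    A ^ 3 * (l ^ 4 + l ^ 2) ^ 3 * (mestreX A B l ^ 3 + A * mestreX A B l + B) =
      -B * (B ^ 2 * (l ^ 4 + l ^ 2 + 1) ^ 3 + A ^ 3 * (l ^ 4 + l ^ 2) ^ 2) := by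
  rw [mestreX]
  generalize l ^ 4 + l ^ 2 = m at *
  field_simp
  ring

theorem mul_mestreX (hA : A ≠ 0) (hl : l ^ 4 + l ^ 2 ≠ 0) :
    A * (l ^ 4 + l ^ 2) * mestreX A B l = -B * (l ^ 4 + l ^ 2 + 1) :=
  mul_div_cancel₀ _ (mul_ne_zero hA hl)

theorem mestreX_ne_zero (hA : A ≠ 0) (hB : B ≠ 0) (hl : l ^ 4 + l ^ 2 ≠ 0)
    (hnum : l ^ 4 + l ^ 2 + 1 ≠ 0) : mestreX A B l ≠ 0 :=
  div_ne_zero (mul_ne_zero (neg_ne_zero.2 hB) hnum) (mul_ne_zero hA hl)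

theorem mestreX_ne_sq_mul (hA : A ≠ 0) (hB : B ≠ 0) (hl : l ^ 4 + l ^ 2 ≠ 0)
    (hnum : l ^ 4 + l ^ 2 + 1 ≠ 0) (hone : l ^ 2 ≠ 1) : mestreX A B l ≠ l ^ 2 * mestreX A B l :=
  fun h => hone (mul_right_cancel₀ (mestreX_ne_zero hA hB hl hnum) (by rw [← h, one_mul]))

theorem isTwistPair_mestreX (hA : A ≠ 0) (hB : B ≠ 0) (hl : l ^ 4 + l ^ 2 ≠ 0)
    (hnum : l ^ 4 + l ^ 2 + 1 ≠ 0) (hone : l ^ 2 ≠ 1)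
    (hcubic : B ^ 2 * (l ^ 4 + l ^ 2 + 1) ^ 3 + A ^ 3 * (l ^ 4 + l ^ 2) ^ 2 ≠ 0) :
    IsTwistPair A B (mestreX A B l) (l ^ 2 * mestreX A B l) (l ^ 3) where
  cubic_ne_zero h := by
    have hmul := mestreX_cubic (B := B) hA hl
    rw [h, mul_zero] at hmul
    exact mul_ne_zero (neg_ne_zero.2 hB) hcubic hmul.symm
  ratio_ne_zero := by
    contrapose! hl
    simp [eq_zero_of_pow_eq_zero hl]
  ne := mestreX_ne_sq_mul hA hB hl hnum hone
  sq_mul_cubic := by linear_combination (l ^ 2 - 1) * mul_mestreX (B := B) hA hl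

theorem mestre_identity_of_secantX_eq {κ : K} (hA : A ≠ 0) (hB : B ≠ 0) (hl : l ^ 4 + l ^ 2 ≠ 0)
    (hnum : l ^ 4 + l ^ 2 + 1 ≠ 0) (hone : l ^ 2 ≠ 1)
    (h : secantX A B (mestreX A B l) (l ^ 2 * mestreX A B l) (l ^ 3) = κ) :
    -B * (B ^ 2 * (l ^ 4 + l ^ 2 + 1) ^ 3 + A ^ 3 * (l ^ 4 + l ^ 2) ^ 2) * (l ^ 2 + l + 1) ^ 2 =
      (l + 1) ^ 2 * (B ^ 2 * (l ^ 4 + l ^ 2 + 1) ^ 2 *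
        (κ * A * (l ^ 4 + l ^ 2) - B * (l ^ 4 + l ^ 2 + 1) * (1 + l ^ 2))) := by
  rw [secantX_eq_iff (mestreX_ne_sq_mul hA hB hl hnum hone)] at h
  have hx := mul_mestreX (B := B) hA hl
  rw [← mestreX_cubic hA hl]
  set x := mestreX A B l
  have hl1 : l - 1 ≠ 0 := by
    rintro h1
    exact hone (by linear_combination (l + 1) * h1)
  have hcancel : (x ^ 3 + A * x + B) * (l ^ 2 + l + 1) ^ 2 =
      (κ + x + l ^ 2 * x) * ((l + 1) * x) ^ 2 :=
    mul_left_cancel₀ (pow_ne_zero 2 hl1) (by linear_combination h)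
  generalize l ^ 4 + l ^ 2 = m at *
  have hnx : B * (m + 1) = -(A * m * x) := by linear_combination hx
  have hsq : B ^ 2 * (m + 1) ^ 2 = (A * m * x) ^ 2 := by rw [← mul_pow, hnx, neg_sq]
  rw [hsq, hnx]
  linear_combination (A ^ 3 * m ^ 3) * hcancel

end Field

variable {A B : ℚ}

/- `p` is `X` or `-X`, for the sum and the difference of the two points. A constant abscissa `κ`
would give a polynomial identity which specializes at `p = -1` to `B (4 A³ + 27 B²) = 0`. -/
theorem secantX_mestreX_ne_C (hA : A ≠ 0) (hB : B ≠ 0) (hdisc : 4 * A ^ 3 + 27 * B ^ 2 ≠ 0)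
    {p : ℚ[X]} {z : ℚ} (hz : p.eval z = -1) (hp : p.eval 0 = 0) (κ : ℚ) :
    let l := algebraMap ℚ[X] (RatFunc ℚ) p
    secantX (RatFunc.C A) (RatFunc.C B) (mestreX (RatFunc.C A) (RatFunc.C B) l)
      (l ^ 2 * mestreX (RatFunc.C A) (RatFunc.C B) l) (l ^ 3) ≠ RatFunc.C κ := by
  intro l h
  have hm : l ^ 4 + l ^ 2 ≠ 0 :=
    ne_zero_of_eval_ne_zero (p ^ 4 + p ^ 2) z (by simp [l]) (by norm_num [hz])
  have hn : l ^ 4 + l ^ 2 + 1 ≠ 0 :=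
    ne_zero_of_eval_ne_zero (p ^ 4 + p ^ 2 + 1) z (by simp [l]) (by norm_num [hz])
  have hone : l ^ 2 ≠ 1 :=
    sub_ne_zero.1 (ne_zero_of_eval_ne_zero (p ^ 2 - 1) 0 (by simp [l]) (by norm_num [hp]))
  have hid := mestre_identity_of_secantX_eq (by simpa using hA) (by simpa using hB) hm hn hone h
  simp only [l, ← RatFunc.algebraMap_C, ← map_pow, ← map_one (algebraMap ℚ[X] (RatFunc ℚ)),
    ← map_add, ← map_mul, ← map_sub, ← map_neg] at hid
  have heval := congrArg (eval z) (RatFunc.algebraMap_injective ℚ hid)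
  simp only [eval_add, eval_mul, eval_sub, eval_pow, eval_one, eval_C, hz] at heval
  exact mul_ne_zero hB hdisc (by linear_combination -heval)

theorem mapDegree_mestreX (hA : A ≠ 0) (hB : B ≠ 0) :
    mapDegree (mestreX (RatFunc.C A) (RatFunc.C B) RatFunc.X) = 4 := by
  have hcop : IsCoprime (C (-B) * (X ^ 4 + X ^ 2 + 1)) (C A * (X ^ 4 + X ^ 2)) := by
    refine (isCoprime_mul_unit_left_left ?_ _ _).2
      ((isCoprime_mul_unit_left_right ?_ _ _).2 ⟨1, -1, by ring⟩)
    · simpa using hB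
    · simpa using hA
  have hnum : (C (-B) * (X ^ 4 + X ^ 2 + 1)).natDegree = 4 := by
    rw [natDegree_C_mul (neg_ne_zero.2 hB)]
    compute_degree!
  have hdenom : (C A * (X ^ 4 + X ^ 2)).natDegree = 4 := by
    rw [natDegree_C_mul hA]
    compute_degree!
  have h := mapDegree_div hcop (ne_zero_of_natDegree_gt (n := 0) (by lia))
  rw [hnum, hdenom] at h
  simpa [mestreX] using h

theorem mapDegree_sq_mul_mestreX (hA : A ≠ 0) (hB : B ≠ 0) :
    mapDegree (RatFunc.X ^ 2 * mestreX (RatFunc.C A) (RatFunc.C B) RatFunc.X) = 4 := by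
  have hcop : IsCoprime (C (-B) * (X ^ 4 + X ^ 2 + 1)) (C A * (X ^ 2 + 1)) := by
    refine (isCoprime_mul_unit_left_left ?_ _ _).2
      ((isCoprime_mul_unit_left_right ?_ _ _).2 ⟨1, -X ^ 2, by ring⟩)
    · simpa using hB
    · simpa using hA
  have hnum : (C (-B) * (X ^ 4 + X ^ 2 + 1)).natDegree = 4 := by
    rw [natDegree_C_mul (neg_ne_zero.2 hB)]
    compute_degree!
  have hdenom : (C A * (X ^ 2 + 1)).natDegree = 2 := by
    rw [natDegree_C_mul hA]
    compute_degree!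
  have h := mapDegree_div hcop (ne_zero_of_natDegree_gt (n := 0) (by lia))
  rw [hnum, hdenom] at h
  have hX : (RatFunc.X : RatFunc ℚ) ≠ 0 := RatFunc.X_ne_zero
  have hmul : RatFunc.X ^ 2 * mestreX (RatFunc.C A) (RatFunc.C B) RatFunc.X =
      -RatFunc.C B * (RatFunc.X ^ 4 + RatFunc.X ^ 2 + 1) / (RatFunc.C A * (RatFunc.X ^ 2 + 1)) := by
    rw [mestreX]
    field_simp
  rw [hmul]
  simpa using h

theorem hasRankTwoTwist_of_depressed_ne_zero {a b c : ℤ} (hf : DistinctRoots a b c)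
    (hA : depressedLinear a b ≠ 0) (hB : depressedConst a b c ≠ 0) : HasRankTwoTwist a b c := by
  have hdisc := hf.depressed_disc_ne_zero
  set A := depressedLinear a b
  set B := depressedConst a b c
  have hpair : IsTwistPair (RatFunc.C A) (RatFunc.C B) _ _ _ :=
    isTwistPair_mestreX (l := RatFunc.X) (by simpa using hA) (by simpa using hB)
      (ne_zero_of_eval_ne_zero (X ^ 4 + X ^ 2) 1 (by simp) (by norm_num))
      (ne_zero_of_eval_ne_zero (X ^ 4 + X ^ 2 + 1) 1 (by simp) (by norm_num))
      (sub_ne_zero.1 (ne_zero_of_eval_ne_zero (X ^ 2 - 1) 0 (by simp) (by norm_num)))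
      (ne_zero_of_eval_ne_zero
        (C B ^ 2 * (X ^ 4 + X ^ 2 + 1) ^ 3 + C A ^ 3 * (X ^ 4 + X ^ 2) ^ 2) 1 (by simp) (by
          contrapose! hdisc
          norm_num at hdisc
          linear_combination hdisc))
  refine hasRankTwoTwist_of_mapDegree_eq hf hpair
    ((mapDegree_mestreX hA hB).trans (mapDegree_sq_mul_mestreX hA hB).symm) (fun κ => ?_)
    fun κ => ?_
  · simpa using secantX_mestreX_ne_C hA hB hdisc (p := X) (z := -1) (by simp) (by simp) κ
  · simpa [mestreX_neg, Odd.neg_pow (show Odd 3 by decide)] using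
      secantX_mestreX_ne_C hA hB hdisc (p := -X) (z := 1) (by simp) (by simp) κ

end Mestre

/-! ### Twists of rank two when the depressed cubic is `X³ + B` -/

section Desboves

open Polynomial

/-- The numerator of the ordinate `T / (8 (t³ + B)²)` of `2 (t, 1)` on `(t³ + B) Y² = X³ + B`. -/
def doubleNum {R : Type*} [CommRing R] (B t : R) : R := t ^ 6 + 20 * B * t ^ 3 - 8 * B ^ 2

/-- The numerator `u` of `ψ² x³ / y³ = u / v`, where `x = t (t³ - 8 B) / (4 (t³ + B))` and `y = t`
are the abscissae of `2 (t, 1)` and `(t, 1)` on `(t³ + B) Y² = X³ + B` and `ψ` is the ratio of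
their ordinates; the denominator is `v = doubleNum B t ^ 2`. -/
def desbovesNum {R : Type*} [CommRing R] (B t : R) : R := (t ^ 3 + B) * (t ^ 3 - 8 * B) ^ 3

theorem map_doubleNum {R S : Type*} [CommRing R] [CommRing S] (f : R →+* S) (B t : R) :
    f (doubleNum B t) = doubleNum (f B) (f t) := by
  simp [doubleNum, map_ofNat]

theorem map_desbovesNum {R S : Type*} [CommRing R] [CommRing S] (f : R →+* S) (B t : R) :
    f (desbovesNum B t) = desbovesNum (f B) (f t) := by
  simp [desbovesNum, map_ofNat]

/-- The abscissa of the tangential point of `(x, y)` on the plane cubic `ψ² (X³ + B) = Y³ + B`,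
for the `x`, `y`, `ψ` of `desbovesNum`. Desboves' formula gives the tangential point as
`(x (u - 2 v) / (u + v), y (v - 2 u) / (u + v))`. -/
def desbovesX {K : Type*} [Field K] (B t : K) : K :=
  t * ((t ^ 3 - 8 * B) * (desbovesNum B t - 2 * doubleNum B t ^ 2)) /
    (4 * (t ^ 3 + B) * (desbovesNum B t + doubleNum B t ^ 2))

/-- The ordinate of the tangential point of `desbovesX`. -/
def desbovesY {K : Type*} [Field K] (B t : K) : K :=
  t * (doubleNum B t ^ 2 - 2 * desbovesNum B t) / (desbovesNum B t + doubleNum B t ^ 2)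

section Field

variable {K : Type*} [Field K] [CharZero K] {B t : K}

theorem desboves_sq_mul_cubic (hM : t ^ 3 + B ≠ 0) (hT : doubleNum B t ≠ 0)
    (hden : desbovesNum B t + doubleNum B t ^ 2 ≠ 0) :
    (8 * (t ^ 3 + B) ^ 2 / doubleNum B t) ^ 2 * (desbovesX B t ^ 3 + B) =
      desbovesY B t ^ 3 + B := by
  have hdup : t ^ 3 * (t ^ 3 - 8 * B) ^ 3 + 64 * B * (t ^ 3 + B) ^ 3 = doubleNum B t ^ 2 := by
    rw [doubleNum]
    ring
  have hnum : desbovesNum B t = (t ^ 3 + B) * (t ^ 3 - 8 * B) ^ 3 := rfl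
  rw [desbovesX, desbovesY]
  generalize desbovesNum B t = u at *
  generalize doubleNum B t = T at *
  have hX : (8 * (t ^ 3 + B) ^ 2 / T) ^ 2 * (t * ((t ^ 3 - 8 * B) * (u - 2 * T ^ 2)) /
      (4 * (t ^ 3 + B) * (u + T ^ 2))) ^ 3 = t ^ 3 * u * (u - 2 * T ^ 2) ^ 3 /
        (T ^ 2 * (u + T ^ 2) ^ 3) := by
    rw [hnum] at hden ⊢
    field_simp
    ring
  rw [mul_add, hX, div_pow _ (u + T ^ 2)]
  field_simp
  linear_combination (u + T ^ 2) ^ 3 * (t ^ 3 * hnum + (t ^ 3 + B) * hdup)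

theorem isTwistPair_desboves (ht : t ≠ 0) (hM : t ^ 3 + B ≠ 0) (hT : doubleNum B t ≠ 0)
    (hden : desbovesNum B t + doubleNum B t ^ 2 ≠ 0)
    (hcubic : t ^ 3 * (doubleNum B t ^ 2 - 2 * desbovesNum B t) ^ 3 +
      B * (desbovesNum B t + doubleNum B t ^ 2) ^ 3 ≠ 0)
    (hne : (t ^ 3 - 8 * B) * (desbovesNum B t - 2 * doubleNum B t ^ 2) -
      4 * (t ^ 3 + B) * (doubleNum B t ^ 2 - 2 * desbovesNum B t) ≠ 0) :
    IsTwistPair 0 B (desbovesX B t) (desbovesY B t) (8 * (t ^ 3 + B) ^ 2 / doubleNum B t) where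
  cubic_ne_zero h := by
    have hY := desboves_sq_mul_cubic hM hT hden
    rw [zero_mul, add_zero] at h
    rw [h, mul_zero, desbovesY, eq_comm] at hY
    field_simp at hY
    exact hcubic (by linear_combination hY)
  ratio_ne_zero := div_ne_zero (mul_ne_zero (by norm_num) (pow_ne_zero 2 hM)) hT
  ne h := by
    rw [desbovesX, desbovesY, div_eq_div_iff
      (mul_ne_zero (mul_ne_zero (by norm_num) hM) hden) hden] at h
    refine mul_ne_zero (mul_ne_zero ht hden) hne ?_
    linear_combination h
  sq_mul_cubic := by
    rw [zero_mul, add_zero, zero_mul, add_zero]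
    exact desboves_sq_mul_cubic hM hT hden

end Field

theorem isCoprime_sub_two_mul_add {R : Type*} [CommRing R] (h3 : IsUnit (3 : R)) {u v : R}
    (h : IsCoprime u v) : IsCoprime (u - 2 * v) (u + v) := by
  obtain ⟨i, hi⟩ := h3.exists_right_inv
  obtain ⟨r, s, hrs⟩ := h
  exact ⟨i * (r - s), i * (2 * r + s), by linear_combination 3 * i * hrs + hi⟩

theorem isCoprime_of_mul_add_mul_eq_C {K : Type*} [Field K] {p q : K[X]} (s t : K[X]) {r : K}
    (hr : r ≠ 0) (h : s * p + t * q = C r) : IsCoprime p q := by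
  refine ⟨C r⁻¹ * s, C r⁻¹ * t, ?_⟩
  rw [mul_assoc, mul_assoc, ← mul_add, h, ← C_mul, inv_mul_cancel₀ hr, C_1]

theorem isCoprime_X_of_eval_zero_ne_zero {K : Type*} [Field K] {p : K[X]} (h : p.eval 0 ≠ 0) :
    IsCoprime X p := by
  rwa [irreducible_X.coprime_iff_not_dvd, X_dvd_iff, coeff_zero_eq_eval_zero]

variable {B : ℚ}

theorem isUnit_ofNat (n : ℕ) [n.AtLeastTwo] : IsUnit (ofNat(n) : ℚ[X]) :=
  (IsUnit.mk0 (OfNat.ofNat n : ℚ) (by simp)).map C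

theorem eval_zero_doubleNum : (doubleNum (C B) X).eval 0 = -8 * B ^ 2 := by
  simp [doubleNum]

theorem eval_zero_desbovesNum : (desbovesNum (C B) X).eval 0 = -512 * B ^ 4 := by
  simp only [desbovesNum, eval_mul, eval_add, eval_sub, eval_pow, eval_X, eval_C, eval_ofNat]
  ring

theorem isCoprime_cube_add_doubleNum (hB : B ≠ 0) :
    IsCoprime (X ^ 3 + C B) (doubleNum (C B) X) := by
  rw [doubleNum]
  refine isCoprime_of_mul_add_mul_eq_C (X ^ 3 + 19 * C B) (-1) (r := 27 * B ^ 2) (by positivity) ?_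
  rw [map_mul, map_pow, map_ofNat]
  ring

theorem isCoprime_cube_sub_doubleNum (hB : B ≠ 0) :
    IsCoprime (X ^ 3 - 8 * C B) (doubleNum (C B) X) := by
  rw [doubleNum]
  refine isCoprime_of_mul_add_mul_eq_C (-(X ^ 3 + 28 * C B)) 1 (r := 216 * B ^ 2)
    (by positivity) ?_
  rw [map_mul, map_pow, map_ofNat]
  ring

theorem isCoprime_cube_sub_cube_add (hB : B ≠ 0) : IsCoprime (X ^ 3 - 8 * C B) (X ^ 3 + C B) := by
  refine isCoprime_of_mul_add_mul_eq_C (-1) 1 (r := 9 * B) (by positivity) ?_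
  rw [map_mul, map_ofNat]
  ring

theorem isCoprime_desbovesNum_doubleNum_sq (hB : B ≠ 0) :
    IsCoprime (desbovesNum (C B) X) (doubleNum (C B) X ^ 2) :=
  ((isCoprime_cube_add_doubleNum hB).mul_left (isCoprime_cube_sub_doubleNum hB).pow_left).pow_right

theorem isCoprime_X_desbovesDenom (hB : B ≠ 0) :
    IsCoprime X (desbovesNum (C B) X + doubleNum (C B) X ^ 2) := by
  refine isCoprime_X_of_eval_zero_ne_zero ?_
  rw [eval_add, eval_pow, eval_zero_desbovesNum, eval_zero_doubleNum]
  ring_nf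
  simpa using hB

theorem isCoprime_desbovesY (hB : B ≠ 0) :
    IsCoprime (X * (doubleNum (C B) X ^ 2 - 2 * desbovesNum (C B) X))
      (desbovesNum (C B) X + doubleNum (C B) X ^ 2) := by
  refine (isCoprime_X_desbovesDenom hB).mul_left ?_
  rw [add_comm]
  exact isCoprime_sub_two_mul_add (isUnit_ofNat 3) (isCoprime_desbovesNum_doubleNum_sq hB).symm

theorem isCoprime_desbovesX (hB : B ≠ 0) :
    IsCoprime (X * ((X ^ 3 - 8 * C B) * (desbovesNum (C B) X - 2 * doubleNum (C B) X ^ 2)))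
      (4 * (X ^ 3 + C B) * (desbovesNum (C B) X + doubleNum (C B) X ^ 2)) := by
  rw [mul_assoc, isCoprime_mul_unit_left_right (isUnit_ofNat 4)]
  refine IsCoprime.mul_right (IsCoprime.mul_left ?_ (IsCoprime.mul_left ?_ ?_))
    (IsCoprime.mul_left ?_ (IsCoprime.mul_left ?_ ?_))
  · exact isCoprime_X_of_eval_zero_ne_zero (by simpa using hB)
  · exact isCoprime_cube_sub_cube_add hB
  · rw [sub_eq_add_neg, add_comm, desbovesNum, mul_comm (X ^ 3 + C B)]
    refine IsCoprime.add_mul_right_left (IsCoprime.neg_left ?_) _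
    exact (isCoprime_mul_unit_left_left (isUnit_ofNat 2) _ _).2
      (isCoprime_cube_add_doubleNum hB).symm.pow_left
  · exact isCoprime_X_desbovesDenom hB
  · rw [add_comm, desbovesNum, pow_succ (X ^ 3 - 8 * C B), ← mul_assoc]
    exact (isCoprime_cube_sub_doubleNum hB).pow_right.add_mul_right_right _
  · exact isCoprime_sub_two_mul_add (isUnit_ofNat 3) (isCoprime_desbovesNum_doubleNum_sq hB)

theorem mapDegree_desbovesY (hB : B ≠ 0) :
    mapDegree (desbovesY (RatFunc.C B) RatFunc.X) = 13 := by
  have hnum : (X * (doubleNum (C B) X ^ 2 - 2 * desbovesNum (C B) X)).natDegree = 13 := by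
    simp only [doubleNum, desbovesNum, ← C_pow]
    compute_degree!
  have hdenom : (desbovesNum (C B) X + doubleNum (C B) X ^ 2).natDegree = 12 := by
    simp only [doubleNum, desbovesNum, ← C_pow]
    compute_degree!
  have h := mapDegree_div (isCoprime_desbovesY hB) (ne_zero_of_natDegree_gt (n := 0) (by lia))
  rw [hnum, hdenom] at h
  simpa [desbovesY, map_doubleNum, map_desbovesNum, map_ofNat] using h

theorem mapDegree_desbovesX (hB : B ≠ 0) :
    mapDegree (desbovesX (RatFunc.C B) RatFunc.X) = 16 := by
  have hnum : (X * ((X ^ 3 - 8 * C B) *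
      (desbovesNum (C B) X - 2 * doubleNum (C B) X ^ 2))).natDegree = 16 := by
    simp only [doubleNum, desbovesNum, ← C_pow]
    compute_degree!
  have hdenom : (4 * (X ^ 3 + C B) *
      (desbovesNum (C B) X + doubleNum (C B) X ^ 2)).natDegree = 15 := by
    simp only [doubleNum, desbovesNum, ← C_pow]
    compute_degree!
  have h := mapDegree_div (isCoprime_desbovesX hB) (ne_zero_of_natDegree_gt (n := 0) (by lia))
  rw [hnum, hdenom] at h
  simpa [desbovesX, map_doubleNum, map_desbovesNum, map_ofNat] using h

theorem isTwistPair_desboves_ratFunc (hB : B ≠ 0) :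
    IsTwistPair 0 (RatFunc.C B) (desbovesX (RatFunc.C B) RatFunc.X)
      (desbovesY (RatFunc.C B) RatFunc.X)
      (8 * (RatFunc.X ^ 3 + RatFunc.C B) ^ 2 / doubleNum (RatFunc.C B) RatFunc.X) := by
  refine isTwistPair_desboves RatFunc.X_ne_zero
    (ne_zero_of_eval_ne_zero (X ^ 3 + C B) 0 (by simp) (by simpa))
    (ne_zero_of_eval_ne_zero (doubleNum (C B) X) 0 (by simp [map_doubleNum])
      (by simpa [eval_zero_doubleNum]))
    (ne_zero_of_eval_ne_zero (desbovesNum (C B) X + doubleNum (C B) X ^ 2) 0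
      (by simp [map_doubleNum, map_desbovesNum]) ?_)
    (ne_zero_of_eval_ne_zero (X ^ 3 * (doubleNum (C B) X ^ 2 - 2 * desbovesNum (C B) X) ^ 3 +
      C B * (desbovesNum (C B) X + doubleNum (C B) X ^ 2) ^ 3) 0
      (by simp [map_doubleNum, map_desbovesNum, map_ofNat]) ?_)
    (ne_zero_of_eval_ne_zero
      ((X ^ 3 - 8 * C B) * (desbovesNum (C B) X - 2 * doubleNum (C B) X ^ 2) -
        4 * (X ^ 3 + C B) * (doubleNum (C B) X ^ 2 - 2 * desbovesNum (C B) X)) 0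
      (by simp [map_doubleNum, map_desbovesNum, map_ofNat]) ?_)
  all_goals
    simp only [eval_add, eval_sub, eval_mul, eval_pow, eval_X, eval_C, eval_ofNat,
      eval_zero_doubleNum, eval_zero_desbovesNum]
    ring_nf
    simpa using hB

theorem hasRankTwoTwist_of_depressedLinear_eq_zero {a b c : ℤ} (hf : DistinctRoots a b c)
    (hA : depressedLinear a b = 0) : HasRankTwoTwist a b c := by
  have hB : depressedConst a b c ≠ 0 := by
    have hdisc := hf.depressed_disc_ne_zero
    contrapose! hdisc
    rw [hA, hdisc]
    norm_num
  refine hasRankTwoTwist_of_not_isSquare_mapDegree_mul hf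
    (by rw [hA, map_zero]; exact isTwistPair_desboves_ratFunc hB) ?_
  rw [mapDegree_desbovesX hB, mapDegree_desbovesY hB]
  norm_num

end Desboves

/-! ### Twists of rank two when the depressed cubic is `X³ + A X` -/

section Tangential

open Polynomial

/-- The polynomial `U` in the numerators of the coordinates `x = -2 t U(A, t²) / W(A, t²)` and
`y = -2 A U(t², A) / (t W(A, t²))` of the tangential point of `(t, A / t)` on the plane cubic
`(A / t²)² (X³ + A X) = Y³ + A Y`. -/
def tangentialNum {R : Type*} [CommRing R] (A s : R) : R :=
  4 * A ^ 3 + A ^ 2 * s + 10 * A * s ^ 2 + s ^ 3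

/-- The denominator `W` of the tangential point of `tangentialNum`. -/
def tangentialDenom {R : Type*} [CommRing R] (A s : R) : R :=
  (s + A) * (A ^ 2 - 18 * A * s + s ^ 2)

/-- The numerator of the cubic `X³ + A X` at the tangential point of `tangentialNum`, up to the
factor `-2 t U`. -/
def tangentialCubic {R : Type*} [CommRing R] (A s : R) : R :=
  4 * s * tangentialNum A s ^ 2 + A * tangentialDenom A s ^ 2

/-- The nontrivial factor of `x - y` at the tangential point of `tangentialNum`. -/
def tangentialDiff {R : Type*} [CommRing R] (A s : R) : R := A ^ 2 + 6 * A * s + s ^ 2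

/-- The abscissa of the tangential point of `tangentialNum`. -/
def tangentialX {K : Type*} [Field K] (A t : K) : K :=
  -2 * (t * tangentialNum A (t ^ 2)) / tangentialDenom A (t ^ 2)

/-- The ordinate of the tangential point of `tangentialNum`. -/
def tangentialY {K : Type*} [Field K] (A t : K) : K :=
  -2 * A * tangentialNum (t ^ 2) A / (t * tangentialDenom A (t ^ 2))

section Map

variable {R S : Type*} [CommRing R] [CommRing S] (f : R →+* S) (A s : R)

theorem map_tangentialNum : f (tangentialNum A s) = tangentialNum (f A) (f s) := by
  simp [tangentialNum, map_ofNat]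

theorem map_tangentialDenom : f (tangentialDenom A s) = tangentialDenom (f A) (f s) := by
  simp [tangentialDenom, map_ofNat]

theorem map_tangentialCubic : f (tangentialCubic A s) = tangentialCubic (f A) (f s) := by
  simp [tangentialCubic, map_tangentialNum, map_tangentialDenom, map_ofNat]

theorem map_tangentialDiff : f (tangentialDiff A s) = tangentialDiff (f A) (f s) := by
  simp [tangentialDiff, map_ofNat]

variable {A s}

theorem tangentialNum_mul_tangentialCubic :
    tangentialNum A s * tangentialCubic A s =
      tangentialNum s A * (4 * A * tangentialNum s A ^ 2 + s * tangentialDenom A s ^ 2) := by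
  simp only [tangentialCubic, tangentialNum, tangentialDenom]
  ring

end Map

section Field

variable {K : Type*} [Field K] {A t : K}

theorem tangentialX_cubic (hD : tangentialDenom A (t ^ 2) ≠ 0) :
    tangentialX A t ^ 3 + A * tangentialX A t =
      -2 * t * tangentialNum A (t ^ 2) * tangentialCubic A (t ^ 2) /
        tangentialDenom A (t ^ 2) ^ 3 := by
  rw [tangentialX, tangentialCubic]
  field_simp
  ring

theorem tangentialY_cubic (ht : t ≠ 0) (hD : tangentialDenom A (t ^ 2) ≠ 0) :
    tangentialY A t ^ 3 + A * tangentialY A t =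
      (A / t ^ 2) ^ 2 * (tangentialX A t ^ 3 + A * tangentialX A t) := by
  rw [tangentialX_cubic hD, mul_assoc (-2 * t), tangentialNum_mul_tangentialCubic, tangentialY]
  field_simp
  ring

theorem tangentialY_sub_tangentialX (ht : t ≠ 0) (hD : tangentialDenom A (t ^ 2) ≠ 0) :
    tangentialY A t - tangentialX A t =
      2 * ((t ^ 2) ^ 2 - A ^ 2) * tangentialDiff A (t ^ 2) / (t * tangentialDenom A (t ^ 2)) := by
  rw [tangentialX, tangentialY]
  field_simp
  simp only [tangentialNum, tangentialDiff]
  ring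

theorem tangentialX_ne_tangentialY [CharZero K] (ht : t ≠ 0) (hD : tangentialDenom A (t ^ 2) ≠ 0)
    (hsq : (t ^ 2) ^ 2 - A ^ 2 ≠ 0) (hdiff : tangentialDiff A (t ^ 2) ≠ 0) :
    tangentialX A t ≠ tangentialY A t := by
  refine (sub_ne_zero.1 ?_).symm
  rw [tangentialY_sub_tangentialX ht hD]
  exact div_ne_zero (mul_ne_zero (mul_ne_zero two_ne_zero hsq) hdiff) (mul_ne_zero ht hD)

theorem isTwistPair_tangential [CharZero K] (hA : A ≠ 0) (ht : t ≠ 0)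
    (hD : tangentialDenom A (t ^ 2) ≠ 0) (hsq : (t ^ 2) ^ 2 - A ^ 2 ≠ 0)
    (hdiff : tangentialDiff A (t ^ 2) ≠ 0) (hnum : tangentialNum A (t ^ 2) ≠ 0)
    (hcubic : tangentialCubic A (t ^ 2) ≠ 0) :
    IsTwistPair A 0 (tangentialX A t) (tangentialY A t) (A / t ^ 2) where
  cubic_ne_zero := by
    rw [add_zero, tangentialX_cubic hD]
    simp [ht, hD, hnum, hcubic]
  ratio_ne_zero := by positivity
  ne := tangentialX_ne_tangentialY ht hD hsq hdiff
  sq_mul_cubic := by rw [add_zero, add_zero, tangentialY_cubic ht hD]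

theorem tangential_identity_of_secantX_eq [CharZero K] {ε κ : K} (ht : t ≠ 0)
    (hD : tangentialDenom A (t ^ 2) ≠ 0) (hsq : (t ^ 2) ^ 2 - A ^ 2 ≠ 0)
    (hdiff : tangentialDiff A (t ^ 2) ≠ 0)
    (h : secantX A 0 (tangentialX A t) (tangentialY A t) (ε * A / t ^ 2) = κ) :
    tangentialNum A (t ^ 2) * tangentialCubic A (t ^ 2) * (ε * A - t ^ 2) ^ 2 =
      2 * tangentialDiff A (t ^ 2) ^ 2 * ((t ^ 2) ^ 2 - A ^ 2) ^ 2 *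
        (2 * (t ^ 2 * tangentialNum A (t ^ 2) + A * tangentialNum (t ^ 2) A) -
          κ * t * tangentialDenom A (t ^ 2)) := by
  rw [secantX_eq_iff (tangentialX_ne_tangentialY ht hD hsq hdiff), add_zero, tangentialX_cubic hD,
    tangentialY_sub_tangentialX ht hD, tangentialX, tangentialY] at h
  generalize tangentialNum A (t ^ 2) = U at *
  generalize tangentialNum (t ^ 2) A = V at *
  generalize tangentialCubic A (t ^ 2) = G at *
  generalize tangentialDenom A (t ^ 2) = W at *
  generalize tangentialDiff A (t ^ 2) = r at *
  generalize (t ^ 2) ^ 2 - A ^ 2 = m at *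
  field_simp at h
  linear_combination -h

end Field

variable {A : ℚ}

theorem eval_zero_tangentialDenom : (tangentialDenom (C A) (X ^ 2)).eval 0 = A ^ 3 := by
  simp [tangentialDenom, pow_succ']

theorem eval_zero_tangentialDiff : (tangentialDiff (C A) (X ^ 2)).eval 0 = A ^ 2 := by
  simp [tangentialDiff]

theorem tangentialDenom_ratFunc_ne_zero (hA : A ≠ 0) :
    tangentialDenom (RatFunc.C A) (RatFunc.X ^ 2) ≠ 0 :=
  ne_zero_of_eval_ne_zero (tangentialDenom (C A) (X ^ 2)) 0 (by simp [map_tangentialDenom])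
    (by simpa [eval_zero_tangentialDenom])

theorem tangentialDiff_ratFunc_ne_zero (hA : A ≠ 0) :
    tangentialDiff (RatFunc.C A) (RatFunc.X ^ 2) ≠ 0 :=
  ne_zero_of_eval_ne_zero (tangentialDiff (C A) (X ^ 2)) 0 (by simp [map_tangentialDiff])
    (by simpa [eval_zero_tangentialDiff])

theorem ratFunc_X_sq_sq_sub_sq_ne_zero (hA : A ≠ 0) :
    (RatFunc.X ^ 2) ^ 2 - RatFunc.C A ^ 2 ≠ 0 :=
  ne_zero_of_eval_ne_zero ((X ^ 2) ^ 2 - C A ^ 2) 0 (by simp) (by simpa)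

theorem isTwistPair_tangential_ratFunc (hA : A ≠ 0) :
    IsTwistPair (RatFunc.C A) 0 (tangentialX (RatFunc.C A) RatFunc.X)
      (tangentialY (RatFunc.C A) RatFunc.X) (RatFunc.C A / RatFunc.X ^ 2) :=
  isTwistPair_tangential (by simpa using hA) RatFunc.X_ne_zero (tangentialDenom_ratFunc_ne_zero hA)
    (ratFunc_X_sq_sq_sub_sq_ne_zero hA) (tangentialDiff_ratFunc_ne_zero hA)
    (ne_zero_of_eval_ne_zero (tangentialNum (C A) (X ^ 2)) 0 (by simp [map_tangentialNum])
      (by simpa [tangentialNum]))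
    (ne_zero_of_eval_ne_zero (tangentialCubic (C A) (X ^ 2)) 0 (by simp [map_tangentialCubic])
      (by simpa [tangentialCubic, eval_zero_tangentialDenom]))

/- A constant abscissa `κ` would give a polynomial identity in `t`, whose right-hand side vanishes
and whose left-hand side does not at a complex square root `t` of `-ε A`. -/
theorem secantX_tangential_ne_C (hA : A ≠ 0) {ε : ℚ} (hε : ε ^ 2 = 1) (κ : ℚ) :
    secantX (RatFunc.C A) 0 (tangentialX (RatFunc.C A) RatFunc.X)
      (tangentialY (RatFunc.C A) RatFunc.X) (RatFunc.C ε * RatFunc.C A / RatFunc.X ^ 2) ≠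
        RatFunc.C κ := by
  intro h
  have hid := tangential_identity_of_secantX_eq RatFunc.X_ne_zero
    (tangentialDenom_ratFunc_ne_zero hA) (ratFunc_X_sq_sq_sub_sq_ne_zero hA)
    (tangentialDiff_ratFunc_ne_zero hA) h
  simp only [← RatFunc.algebraMap_C, ← RatFunc.algebraMap_X, ← map_pow, ← map_tangentialNum,
    ← map_tangentialCubic, ← map_tangentialDiff, ← map_tangentialDenom, ← map_add, ← map_mul,
    ← map_sub, ← map_ofNat (algebraMap ℚ[X] (RatFunc ℚ))] at hid
  obtain ⟨τ, hτ⟩ := IsAlgClosed.exists_pow_nat_eq (-(ε * A : ℂ)) two_pos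
  let φ : ℚ[X] →+* ℂ := eval₂RingHom (Rat.castHom ℂ) τ
  have hφX : φ X = τ := eval₂_X _ _
  have hφC (r : ℚ) : φ (C r) = r := eval₂_C _ _
  have heval := congrArg φ (RatFunc.algebraMap_injective ℚ hid)
  have hAC : (A : ℂ) ≠ 0 := mod_cast hA
  simp only [map_mul, map_sub, map_add, map_pow, map_ofNat, map_tangentialNum,
    map_tangentialCubic, map_tangentialDiff, map_tangentialDenom, hφX, hφC, hτ] at heval
  rcases sq_eq_one_iff.1 hε with rfl | rfl
  all_goals
    simp only [tangentialNum, tangentialCubic, tangentialDenom] at heval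
    ring_nf at heval
    simp [hAC] at heval

theorem isCoprime_tangentialNum_tangentialDenom (hA : A ≠ 0) :
    IsCoprime (tangentialNum (C A) (X ^ 2)) (tangentialDenom (C A) (X ^ 2)) := by
  rw [tangentialNum, tangentialDenom]
  refine isCoprime_of_mul_add_mul_eq_C
    (727 * C A ^ 2 + 444 * C A * X ^ 2 - 27 * (X ^ 2) ^ 2)
    (164 * C A ^ 2 + 285 * C A * X ^ 2 + 27 * (X ^ 2) ^ 2) (r := 3072 * A ^ 5) (by positivity) ?_
  rw [map_mul, map_pow, map_ofNat]
  ring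

theorem isCoprime_tangentialNum_swap_tangentialDenom (hA : A ≠ 0) :
    IsCoprime (tangentialNum (X ^ 2) (C A)) (tangentialDenom (C A) (X ^ 2)) := by
  rw [tangentialNum, tangentialDenom]
  refine isCoprime_of_mul_add_mul_eq_C
    (1857 * C A ^ 2 + 1996 * C A * X ^ 2 - 117 * (X ^ 2) ^ 2)
    (1215 * C A ^ 2 + 89 * C A * X ^ 2 + 468 * (X ^ 2) ^ 2) (r := 3072 * A ^ 5)
    (by positivity) ?_
  rw [map_mul, map_pow, map_ofNat]
  ring

theorem isCoprime_X_tangentialDenom (hA : A ≠ 0) :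
    IsCoprime X (tangentialDenom (C A) (X ^ 2)) :=
  isCoprime_X_of_eval_zero_ne_zero (by simpa [eval_zero_tangentialDenom])

theorem mapDegree_tangentialX (hA : A ≠ 0) :
    mapDegree (tangentialX (RatFunc.C A) RatFunc.X) = 7 := by
  have hcop : IsCoprime (C (-2) * (X * tangentialNum (C A) (X ^ 2)))
      (tangentialDenom (C A) (X ^ 2)) :=
    (isCoprime_mul_unit_left_left (isUnit_C.2 (by norm_num)) _ _).2
      ((isCoprime_X_tangentialDenom hA).mul_left (isCoprime_tangentialNum_tangentialDenom hA))
  have hnum : (C (-2) * (X * tangentialNum (C A) (X ^ 2))).natDegree = 7 := by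
    simp only [tangentialNum, ← C_pow]
    compute_degree!
  have hdenom : (tangentialDenom (C A) (X ^ 2)).natDegree = 6 := by
    simp only [tangentialDenom, ← C_pow]
    compute_degree!
  have h := mapDegree_div hcop (ne_zero_of_natDegree_gt (n := 0) (by lia))
  rw [hnum, hdenom] at h
  simpa [tangentialX, map_tangentialNum, map_tangentialDenom] using h

theorem mapDegree_tangentialY (hA : A ≠ 0) :
    mapDegree (tangentialY (RatFunc.C A) RatFunc.X) = 7 := by
  have hcop : IsCoprime (C (-2 * A) * tangentialNum (X ^ 2) (C A))
      (X * tangentialDenom (C A) (X ^ 2)) := by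
    refine (isCoprime_mul_unit_left_left (isUnit_C.2 (by simpa using hA)) _ _).2
      (IsCoprime.mul_right ?_ (isCoprime_tangentialNum_swap_tangentialDenom hA))
    exact (isCoprime_X_of_eval_zero_ne_zero (by simpa [tangentialNum])).symm
  have hnum : (C (-2 * A) * tangentialNum (X ^ 2) (C A)).natDegree = 6 := by
    rw [natDegree_C_mul (by simpa using hA)]
    simp only [tangentialNum, ← C_pow]
    compute_degree!
  have hdenom : (X * tangentialDenom (C A) (X ^ 2)).natDegree = 7 := by
    simp only [tangentialDenom, ← C_pow]
    compute_degree!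
  have h := mapDegree_div hcop (ne_zero_of_natDegree_gt (n := 0) (by lia))
  rw [hnum, hdenom] at h
  simpa [tangentialY, map_tangentialNum, map_tangentialDenom] using h

theorem hasRankTwoTwist_of_depressedConst_eq_zero {a b c : ℤ} (hf : DistinctRoots a b c)
    (hB : depressedConst a b c = 0) : HasRankTwoTwist a b c := by
  have hA : depressedLinear a b ≠ 0 := by
    have hdisc := hf.depressed_disc_ne_zero
    contrapose! hdisc
    rw [hB, hdisc]
    norm_num
  refine hasRankTwoTwist_of_mapDegree_eq hf
    (by rw [hB, map_zero]; exact isTwistPair_tangential_ratFunc hA)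
    ((mapDegree_tangentialX hA).trans (mapDegree_tangentialY hA).symm) (fun κ => ?_) fun κ => ?_
  · simpa [hB] using secantX_tangential_ne_C hA (ε := 1) (by norm_num) κ
  · simpa [hB, neg_div] using secantX_tangential_ne_C hA (ε := -1) (by norm_num) κ

end Tangential

section RankTwo

variable {a b c : ℤ}

theorem DistinctRoots.hasRankTwoTwist (hf : DistinctRoots a b c) : HasRankTwoTwist a b c := by
  by_cases hA : depressedLinear a b = 0
  · exact hasRankTwoTwist_of_depressedLinear_eq_zero hf hA
  by_cases hB : depressedConst a b c = 0
  · exact hasRankTwoTwist_of_depressedConst_eq_zero hf hB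
  · exact hasRankTwoTwist_of_depressed_ne_zero hf hA hB

theorem RankBound.one_lt {j : ℝ} (hR : RankBound a b c j) (hf : DistinctRoots a b c) : 1 < j := by
  by_contra! hj
  obtain ⟨D, hD, P, Q, hPQ⟩ := hf.hasRankTwoTwist
  have hceil : ⌈2 * j⌉₊ ≤ 2 := Nat.ceil_le.2 (by push_cast; linarith)
  exact hR D hD ⟨_, hPQ.comp _ (Fin.castLE_injective hceil)⟩

end RankTwo

/-- **Theorem 1.** For `j > 0`, the following are equivalent:
(a) `rank E^{(D)}(ℚ) < 2j` for all nonzero `D`; (b) `S_E(j,k)` converges for some `k ≥ 1`;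
(c) `S_E(j,k)` converges for every `k ≥ 1`; (d) `R_E(j,k)` converges for some `k ≥ 1`;
(e) `R_E(j,k)` converges for every `k ≥ 1`; (f) `Q_E(j,k)` converges for some `k ≥ 1`;
(g) `Q_E(j,k)` converges for every `k ≥ 1`. -/
theorem rank_tfae_series (a b c : ℤ) (hf : DistinctRoots a b c)
    (sq : ℤ → ℤ) (hsq : IsSqfreePart sq)
    (ω : (d d' : ℕ) → ZMod (d^2) → ℤ × ℤ) (hω : IsShortestChoice a b c ω)
    (j : ℝ) (hj : 0 < j) :
    List.TFAE
      [RankBound a b c j,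
       ∃ k : ℝ, 1 ≤ k ∧ SConv a b c sq j k Set.univ,
       ∀ k : ℝ, 1 ≤ k → SConv a b c sq j k Set.univ,
       ∃ k : ℝ, 1 ≤ k ∧ RConv a b c j k Set.univ,
       ∀ k : ℝ, 1 ≤ k → RConv a b c j k Set.univ,
       ∃ k : ℝ, 1 ≤ k ∧ QConv a b c j k ω,
       ∀ k : ℝ, 1 ≤ k → QConv a b c j k ω] := by
  tfae_have 1 → 3 := fun hR k hk => hR.sConv hf hsq (hR.one_lt hf) hk
  tfae_have 3 → 2 := fun hS => ⟨1, le_rfl, hS 1 le_rfl⟩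
  tfae_have 2 → 4 := fun ⟨k, hk, hS⟩ => ⟨k, hk, hS.rConv hsq (by linarith)⟩
  tfae_have 4 → 6 := fun ⟨k, hk, hR⟩ => ⟨k, hk, hR.qConv hω hj.le (by linarith)⟩
  tfae_have 6 → 1 := fun ⟨k, hk, hQ⟩ => hQ.rankBound hf hω hj (by linarith)
  tfae_have 3 → 5 := fun hS k hk => (hS k hk).rConv hsq (by linarith)
  tfae_have 5 → 7 := fun hR k hk => (hR k hk).qConv hω hj.le (by linarith)
  tfae_have 7 → 6 := fun hQ => ⟨1, le_rfl, hQ 1 le_rfl⟩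
  tfae_finish
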